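/- For every n ≥ 2, the group K_n has cohomological dimension n−1; that is, for every ℤ-linear representation M of K_n the group cohomology H^i(K_n; M) vanishes for all i ≥ n, and there exists a ℤ-linear representation M of K_n with H^{n−1}(K_n; M) ≠ 0. -/

import Mathlib

open FreeGroup

/-- The free group on `n` generators. -/
abbrev FG (n : ℕ) : Type := FreeGroup (Fin n)

/-- The pure symmetric automorphism group `PΣ_n`: automorphisms sending each
generator to a conjugate of itself. -/
def PSigmaAut (n : ℕ) : Subgroup (MulAut (FG n)) where
  carrier := {φ | ∀ i : Fin n, ∃ w : FG n, φ (of i) = w * of i * w⁻¹}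
  one_mem' := fun i => ⟨1, by simp⟩
  mul_mem' := by
    rintro φ ψ hφ hψ i
    obtain ⟨w, hw⟩ := hψ i
    obtain ⟨v, hv⟩ := hφ i
    refine ⟨φ w * v, ?_⟩
    simp only [MulAut.mul_apply, hw, _root_.map_mul, _root_.map_inv, hv, mul_inv_rev, mul_assoc]
  inv_mem' := by
    intro φ hφ i
    obtain ⟨w, hw⟩ := hφ i
    refine ⟨(φ⁻¹ w)⁻¹, ?_⟩
    refine φ.injective ?_
    simp only [MulAut.apply_inv_self, _root_.map_mul, _root_.map_inv, inv_inv, hw]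
    group

/-- The projection `F_n → F_{n-1}` sending `x_n ↦ 1` and `x_i ↦ x_i` for `i < n-1`. -/
def projHom (n : ℕ) : FG n →* FG (n - 1) :=
  FreeGroup.lift fun i => if h : (i : ℕ) < n - 1 then of (⟨i, h⟩ : Fin (n - 1)) else 1

/-- The inclusion `F_{n-1} → F_n`. -/
def castHom (n : ℕ) : FG (n - 1) →* FG n :=
  FreeGroup.lift fun i => of (Fin.castLE (Nat.sub_le n 1) i)

/-- The endomorphism of `F_{n-1}` induced by an automorphism of `F_n`. -/
def desc (n : ℕ) (φ : MulAut (FG n)) : FG (n - 1) →* FG (n - 1) :=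
  (projHom n).comp ((φ : FG n ≃* FG n).toMonoidHom.comp (castHom n))

lemma desc_proj {n : ℕ} {φ : MulAut (FG n)} (hφ : φ ∈ PSigmaAut n) (x : FG n) :
    desc n φ (projHom n x) = projHom n (φ x) := by
  have : (desc n φ).comp (projHom n) = (projHom n).comp (φ : FG n ≃* FG n).toMonoidHom := by
    apply FreeGroup.ext_hom
    intro i
    by_cases h : (i : ℕ) < n - 1
    · simp only [MonoidHom.comp_apply, projHom, FreeGroup.lift_apply_of, dif_pos h]
      simp only [desc, MonoidHom.comp_apply, castHom, FreeGroup.lift_apply_of]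
      congr 2
    · obtain ⟨w, hw⟩ := hφ i
      simp only [MonoidHom.comp_apply, projHom, FreeGroup.lift_apply_of, dif_neg h,
        MulEquiv.coe_toMonoidHom, hw, _root_.map_mul, _root_.map_inv, _root_.map_one]
      simp
  exact DFunLike.congr_fun this x

lemma desc_mul {n : ℕ} {φ : MulAut (FG n)} (hφ : φ ∈ PSigmaAut n) (ψ : MulAut (FG n)) :
    desc n (φ * ψ) = (desc n φ).comp (desc n ψ) := by
  apply FreeGroup.ext_hom
  intro i
  simp only [desc, MonoidHom.comp_apply, MulEquiv.coe_toMonoidHom, MulAut.mul_apply]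
  exact (desc_proj hφ _).symm

lemma desc_one (n : ℕ) : desc n 1 = MonoidHom.id (FG (n - 1)) := by
  apply FreeGroup.ext_hom
  intro i
  simp only [desc, MonoidHom.comp_apply, MulEquiv.coe_toMonoidHom, MulAut.one_apply,
    castHom, FreeGroup.lift_apply_of, projHom, MonoidHom.id_apply]
  rw [dif_pos (show ((Fin.castLE (Nat.sub_le n 1) i : Fin n) : ℕ) < n - 1 from i.isLt)]
  exact congrArg of (Fin.ext rfl)

/-- The automorphism of `F_{n-1}` induced by an element of `PΣ_n`. -/
def descAut (n : ℕ) (φ : PSigmaAut n) : MulAut (FG (n - 1)) :=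
  MonoidHom.toMulEquiv (desc n ↑φ) (desc n ↑(φ⁻¹))
    (by
      rw [← desc_mul (φ⁻¹).2 ↑φ]
      norm_num [desc_one])
    (by
      rw [← desc_mul φ.2 ↑(φ⁻¹)]
      norm_num [desc_one])

lemma descAut_mem (n : ℕ) (φ : PSigmaAut n) : descAut n φ ∈ PSigmaAut (n - 1) := by
  intro i
  obtain ⟨w, hw⟩ := φ.2 (Fin.castLE (Nat.sub_le n 1) i)
  refine ⟨projHom n w, ?_⟩
  have : descAut n φ (of i) = projHom n ((φ : MulAut (FG n)) (of (Fin.castLE (Nat.sub_le n 1) i))) := by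
    simp only [descAut, MonoidHom.toMulEquiv, MulEquiv.coe_mk, Equiv.coe_fn_mk, desc,
      MonoidHom.comp_apply, MulEquiv.coe_toMonoidHom, castHom, FreeGroup.lift_apply_of]
  rw [this, hw]
  simp only [_root_.map_mul, _root_.map_inv, projHom, FreeGroup.lift_apply_of]
  rw [dif_pos (show ((Fin.castLE (Nat.sub_le n 1) i : Fin n) : ℕ) < n - 1 from i.isLt)]
  congr 2

/-- The homomorphism `π_n : PΣ_n → PΣ_{n-1}` induced by killing the last generator. -/
def piHom (n : ℕ) : PSigmaAut n →* PSigmaAut (n - 1) :=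
  MonoidHom.mk' (fun φ => ⟨descAut n φ, descAut_mem n φ⟩)
    (by
      intro φ ψ
      refine Subtype.ext (MulEquiv.ext fun x => ?_)
      show desc n ↑(φ * ψ) x = (descAut n φ * descAut n ψ) x
      rw [MulAut.mul_apply]
      show _ = desc n ↑φ (desc n ↑ψ x)
      rw [Subgroup.coe_mul, desc_mul φ.2]
      rfl)

/-- The kernel `K_n` of `π_n : PΣ_n → PΣ_{n-1}`. -/
def Kn (n : ℕ) : Subgroup (PSigmaAut n) := (piHom n).ker

/-- The monoid hom underlying `α_{ij}`: sends `x_i ↦ x_j x_i x_j⁻¹` and fixes the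
other generators. -/
def alphaHom (n : ℕ) (i j : Fin n) : FG n →* FG n :=
  FreeGroup.lift fun r => if r = i then of j * of i * (of j)⁻¹ else of r

/-- The inverse of `alphaHom`. -/
def alphaInvHom (n : ℕ) (i j : Fin n) : FG n →* FG n :=
  FreeGroup.lift fun r => if r = i then (of j)⁻¹ * of i * of j else of r

/-- The McCool generator `α_{ij} ∈ Aut(F_n)`, sending `x_i ↦ x_j x_i x_j⁻¹` and fixing
the other generators (defined to be the identity if `i = j`). -/
def alphaAut (n : ℕ) (i j : Fin n) : MulAut (FG n) :=
  if h : i = j then 1 else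
    MonoidHom.toMulEquiv (alphaHom n i j) (alphaInvHom n i j)
      (by
        apply FreeGroup.ext_hom
        intro r
        by_cases hr : r = i
        · subst hr
          simp [alphaHom, alphaInvHom, Ne.symm h, mul_assoc]
        · simp [alphaHom, alphaInvHom, hr])
      (by
        apply FreeGroup.ext_hom
        intro r
        by_cases hr : r = i
        · subst hr
          simp [alphaHom, alphaInvHom, Ne.symm h, mul_assoc]
        · simp [alphaHom, alphaInvHom, hr])

lemma alphaAut_apply_of (n : ℕ) {i j : Fin n} (hij : i ≠ j) (r : Fin n) :
    alphaAut n i j (of r) = if r = i then of j * of i * (of j)⁻¹ else of r := by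
  simp only [alphaAut, dif_neg hij]
  show alphaHom n i j (of r) = _
  simp [alphaHom]

lemma alphaAut_mem (n : ℕ) (i j : Fin n) : alphaAut n i j ∈ PSigmaAut n := by
  by_cases h : i = j
  · simp only [alphaAut, dif_pos h]
    exact (PSigmaAut n).one_mem
  · intro r
    rw [alphaAut_apply_of n h r]
    by_cases hr : r = i
    · subst hr
      exact ⟨of j, by simp⟩
    · exact ⟨1, by simp [hr]⟩

/-- `α_{ij}` as an element of `PΣ_n`. -/
def alphaP (n : ℕ) (i j : Fin n) : PSigmaAut n := ⟨alphaAut n i j, alphaAut_mem n i j⟩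

section Chains
set_option linter.unusedSectionVars false
open Finset
open scoped Classical

variable {P Q : Type*} [PartialOrder P] [PartialOrder Q]

/-- sign -/
noncomputable def sg (s : Finset P) (x : P) : ℤ := (-1) ^ (s.filter (· < x)).card

/-- boundary -/
noncomputable def bd : (Finset P →₀ ℤ) →ₗ[ℤ] (Finset P →₀ ℤ) :=
  Finsupp.linearCombination ℤ (fun s => ∑ x ∈ s, Finsupp.single (s.erase x) (sg s x))

/-- cone operator -/
noncomputable def cn (c : P) : (Finset P →₀ ℤ) →ₗ[ℤ] (Finset P →₀ ℤ) :=
  Finsupp.linearCombination ℤ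
    (fun s => if c ∈ s then 0 else Finsupp.single (insert c s) (sg s c))

/-- partial inverse of the cone operator -/
noncomputable def uncn (c : P) : (Finset P →₀ ℤ) →ₗ[ℤ] (Finset P →₀ ℤ) :=
  Finsupp.linearCombination ℤ
    (fun s => if c ∈ s then Finsupp.single (s.erase c) (sg s c) else 0)

lemma bd_single (s : Finset P) :
    bd (Finsupp.single s 1) = ∑ x ∈ s, Finsupp.single (s.erase x) (sg s x) := by
  simp [bd]

lemma cn_single (c : P) (s : Finset P) (a : ℤ) :
    cn c (Finsupp.single s a) = if c ∈ s then 0 else Finsupp.single (insert c s) (a * sg s c) := by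
  simp only [cn, Finsupp.linearCombination_single]; split_ifs <;> simp

lemma uncn_single (c : P) (s : Finset P) (a : ℤ) :
    uncn c (Finsupp.single s a) = if c ∈ s then Finsupp.single (s.erase c) (a * sg s c) else 0 := by
  simp only [uncn, Finsupp.linearCombination_single]; split_ifs <;> simp

lemma sg_sq (s : Finset P) (x : P) : sg s x * sg s x = 1 := by
  rw [sg, ← mul_pow]; norm_num

lemma sg_insert (s : Finset P) (c x : P) (hc : c ∉ s) :
    sg (insert c s) x = if c < x then - sg s x else sg s x := by
  unfold sg
  rw [filter_insert]
  split_ifs with h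
  · rw [card_insert_of_notMem (by simp [hc]), pow_succ]; ring
  · rfl

lemma sg_erase (s : Finset P) (c x : P) (hc : c ∈ s) :
    sg (s.erase c) x = if c < x then - sg s x else sg s x := by
  have := sg_insert (s.erase c) c x (by simp)
  rw [insert_erase hc] at this
  split_ifs at * <;> simp [this]

/-- The chain group. -/
def Ch (S : Set P) (k : ℕ) : Submodule ℤ (Finset P →₀ ℤ) :=
  Finsupp.supported ℤ ℤ {s | (∀ x ∈ s, x ∈ S) ∧ (∀ x ∈ s, ∀ y ∈ s, x ≤ y ∨ y ≤ x) ∧ s.card = k}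

lemma Ch_ind {S : Set P} {k : ℕ} {V : Type*} [AddCommGroup V] (f g : (Finset P →₀ ℤ) →ₗ[ℤ] V)
    (h : ∀ s : Finset P, (∀ x ∈ s, x ∈ S) → (∀ x ∈ s, ∀ y ∈ s, x ≤ y ∨ y ≤ x) → s.card = k →
      f (Finsupp.single s 1) = g (Finsupp.single s 1)) {z} (hz : z ∈ Ch S k) : f z = g z := by
  rw [← Finsupp.sum_single z, Finsupp.sum, _root_.map_sum, _root_.map_sum]
  refine Finset.sum_congr rfl fun s hs => ?_
  have := hz hs
  have e : (Finsupp.single s (z s) : Finset P →₀ ℤ) = z s • Finsupp.single s 1 := by simp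
  rw [e, _root_.map_smul, _root_.map_smul, h s this.1 this.2.1 this.2.2]

lemma Ch_map {S : Set P} {k : ℕ} {V : Type*} [AddCommGroup V] (f : (Finset P →₀ ℤ) →ₗ[ℤ] V)
    (W : Submodule ℤ V)
    (h : ∀ s : Finset P, (∀ x ∈ s, x ∈ S) → (∀ x ∈ s, ∀ y ∈ s, x ≤ y ∨ y ≤ x) → s.card = k →
      f (Finsupp.single s 1) ∈ W) {z} (hz : z ∈ Ch S k) : f z ∈ W := by
  rw [← Finsupp.sum_single z, Finsupp.sum, _root_.map_sum]
  refine Submodule.sum_mem _ fun s hs => ?_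
  have := hz hs
  have e : (Finsupp.single s (z s) : Finset P →₀ ℤ) = z s • Finsupp.single s 1 := by simp
  rw [e, _root_.map_smul]
  exact W.smul_mem _ (h s this.1 this.2.1 this.2.2)

lemma single_mem_Ch {S : Set P} {k : ℕ} {s : Finset P} (a : ℤ) (h1 : ∀ x ∈ s, x ∈ S)
    (h2 : ∀ x ∈ s, ∀ y ∈ s, x ≤ y ∨ y ≤ x) (h3 : s.card = k) : Finsupp.single s a ∈ Ch S k :=
  Finsupp.single_mem_supported ℤ a ⟨h1, h2, h3⟩

lemma Ch_mono {S T : Set P} (h : S ⊆ T) (k : ℕ) : Ch S k ≤ Ch T k :=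
  Finsupp.supported_mono fun _ hs => ⟨fun x hx => h (hs.1 x hx), hs.2⟩

lemma bd_mem {S : Set P} {k : ℕ} {z} (hz : z ∈ Ch S (k+1)) : bd z ∈ Ch S k := by
  refine Ch_map bd _ (fun s h1 h2 h3 => ?_) hz
  rw [bd_single]
  refine Submodule.sum_mem _ fun x hx => single_mem_Ch _ ?_ ?_ ?_
  · intro y hy; exact h1 y (mem_of_mem_erase hy)
  · intro y hy z hz; exact h2 y (mem_of_mem_erase hy) z (mem_of_mem_erase hz)
  · rw [card_erase_of_mem hx, h3]; rfl

lemma cone_single (c : P) (s : Finset P) (hs : ∀ x ∈ s, x ≤ c ∨ c ≤ x) :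
    bd (cn c (Finsupp.single s 1)) + cn c (bd (Finsupp.single s 1)) = Finsupp.single s 1 := by
  by_cases hc : c ∈ s
  · rw [cn_single, if_pos hc, bd_single, _root_.map_zero, zero_add, _root_.map_sum,
      Finset.sum_eq_single c]
    · rw [cn_single, if_neg (by simp), insert_erase hc, sg_erase _ _ _ hc, if_neg (lt_irrefl _),
        sg_sq]
    · intro x hx hxc
      rw [cn_single, if_pos (by simp [hc, hxc.symm])]
    · intro h; exact absurd hc h
  · have e : (Finsupp.single (insert c s) (1 * sg s c) : Finset P →₀ ℤ)
      = sg s c • Finsupp.single (insert c s) 1 := by simp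
    rw [cn_single, if_neg hc, bd_single, e, _root_.map_smul, bd_single, sum_insert hc,
      _root_.map_sum, erase_insert hc, sg_insert _ _ _ hc, if_neg (lt_irrefl _), smul_add,
      Finset.smul_sum, add_assoc, ← Finset.sum_add_distrib, Finset.sum_eq_zero]
    · simp [sg_sq]
    · intro x hx
      have hxc : x ≠ c := fun h => hc (h ▸ hx)
      rw [cn_single, if_neg (by simp [hc]), erase_insert_of_ne hxc.symm, sg_insert _ _ _ hc,
        sg_erase _ _ _ hx, Finsupp.smul_single, ← Finsupp.single_add]
      rcases hs x hx with h | h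
      · have h1 : x < c := lt_of_le_of_ne h hxc
        rw [if_neg h1.asymm, if_pos h1]; simp [mul_comm]
      · have h1 : c < x := lt_of_le_of_ne h hxc.symm
        rw [if_pos h1, if_neg h1.asymm]; simp [mul_comm]

lemma cone_Ch {S : Set P} {k : ℕ} (c : P) (hS : ∀ x ∈ S, x ≤ c ∨ c ≤ x) {z} (hz : z ∈ Ch S k) :
    bd (cn c z) + cn c (bd z) = z :=
  Ch_ind (bd ∘ₗ cn c + cn c ∘ₗ bd) LinearMap.id
    (fun s h1 _ _ => cone_single c s fun x hx => hS x (h1 x hx)) hz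

lemma cn_mem {S : Set P} {k : ℕ} (c : P) (hS : ∀ x ∈ S, x ≤ c ∨ c ≤ x) {z} (hz : z ∈ Ch S k) :
    cn c z ∈ Ch (insert c S) (k+1) := by
  refine Ch_map (cn c) _ (fun s h1 h2 h3 => ?_) hz
  rw [cn_single]
  split_ifs with h
  · exact Submodule.zero_mem _
  · refine single_mem_Ch _ ?_ ?_ ?_
    · intro x hx
      rcases mem_insert.1 hx with rfl | hx
      · exact Or.inl rfl
      · exact Or.inr (h1 x hx)
    · intro x hx y hy
      rcases mem_insert.1 hx with h4 | h4 <;> rcases mem_insert.1 hy with h5 | h5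
      · exact Or.inl (h4.trans h5.symm).le
      · rw [h4]; exact (hS y (h1 y h5)).symm
      · rw [h5]; exact hS x (h1 x h4)
      · exact h2 x h4 y h5
    · rw [card_insert_of_notMem h, h3]

lemma bd_bd_single (k : ℕ) : ∀ s : Finset P, (∀ x ∈ s, ∀ y ∈ s, x ≤ y ∨ y ≤ x) → s.card = k →
    bd (bd (Finsupp.single s (1:ℤ))) = 0 := by
  induction k with
  | zero => intro s _ h; rw [card_eq_zero] at h; subst h; simp [bd_single]
  | succ k ih =>
    intro s h2 h3
    obtain ⟨c, hc⟩ : s.Nonempty := by rw [← card_pos]; omega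
    have hcar : (s.erase c).card = k := by rw [card_erase_of_mem hc, h3]; rfl
    have hch : ∀ x ∈ s.erase c, ∀ y ∈ s.erase c, x ≤ y ∨ y ≤ x := fun x hx y hy =>
      h2 x (mem_of_mem_erase hx) y (mem_of_mem_erase hy)
    have h := cone_single c (s.erase c) (fun x hx => h2 x (mem_of_mem_erase hx) c hc)
    rw [cn_single, if_neg (by simp), insert_erase hc] at h
    have e : (Finsupp.single s (1 * sg (s.erase c) c) : Finset P →₀ ℤ)
      = sg (s.erase c) c • Finsupp.single s 1 := by simp
    rw [e, _root_.map_smul] at h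
    have hm : bd (Finsupp.single (s.erase c) (1:ℤ)) ∈ Ch {x | x ∈ s.erase c} (k-1) := by
      cases k with
      | zero => rw [card_eq_zero.1 hcar, bd_single]; simp
      | succ k => exact bd_mem (single_mem_Ch _ (fun x hx => hx) hch hcar)
    have h' := cone_Ch c (fun x hx => h2 x (mem_of_mem_erase hx) c hc) hm
    rw [ih _ hch hcar, _root_.map_zero, add_zero] at h'
    have h4 := congrArg bd h
    rw [_root_.map_add, h', _root_.map_smul] at h4
    have h5 : sg (s.erase c) c • bd (bd (Finsupp.single s (1:ℤ))) = 0 := by simpa using h4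
    have h6 := congrArg (fun z => sg (s.erase c) c • z) h5
    simpa [smul_smul, sg_sq] using h6

lemma bd_bd {S : Set P} {k : ℕ} {z} (hz : z ∈ Ch S k) : bd (bd z) = 0 := by
  have := Ch_ind (bd ∘ₗ bd) 0 (fun s _ h2 h3 => by
    rw [LinearMap.comp_apply, bd_bd_single k s h2 h3]; rfl) hz
  rw [← LinearMap.comp_apply, this]; rfl

/-- acyclicity -/
def Acy (S : Set P) : Prop := ∀ k, ∀ z ∈ Ch S k, bd z = 0 → ∃ w ∈ Ch S (k+1), bd w = z

/-- pushing cycles -/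
def Push (S T : Set P) : Prop :=
  ∀ k, ∀ z ∈ Ch S k, bd z = 0 → ∃ w ∈ Ch S (k+1), z + bd w ∈ Ch T k ∧ bd (z + bd w) = 0

lemma Push.refl (S : Set P) : Push S S := fun k z hz h => ⟨0, Submodule.zero_mem _, by simp [hz, h]⟩

lemma Push.trans {S T U : Set P} (hTS : T ⊆ S) (h1 : Push S T) (h2 : Push T U) : Push S U := by
  intro k z hz h
  obtain ⟨w, hw, hw', e⟩ := h1 k z hz h
  obtain ⟨v, hv, hv', e'⟩ := h2 k _ hw' e
  refine ⟨w + v, Submodule.add_mem _ hw (Ch_mono hTS _ hv), ?_⟩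
  rw [_root_.map_add, ← add_assoc]; exact ⟨hv', e'⟩

lemma Acy.of_push {S T : Set P} (hTS : T ⊆ S) (h1 : Push S T) (h2 : Acy T) : Acy S := by
  intro k z hz h
  obtain ⟨w, hw, hw', e⟩ := h1 k z hz h
  obtain ⟨v, hv, hv'⟩ := h2 k _ hw' e
  refine ⟨v - w, Submodule.sub_mem _ (Ch_mono hTS _ hv) hw, ?_⟩
  rw [_root_.map_sub, hv']; abel

lemma Acy.cone {S : Set P} (c : P) (hc : c ∈ S) (hS : ∀ x ∈ S, x ≤ c ∨ c ≤ x) : Acy S := by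
  intro k z hz h
  refine ⟨cn c z, ?_, ?_⟩
  · have := cn_mem c hS hz; rwa [Set.insert_eq_of_mem hc] at this
  · have := cone_Ch c hS hz; rwa [h, _root_.map_zero, add_zero] at this

/-- link -/
def Lk (S : Set P) (c : P) : Set P := {x | x ∈ S ∧ (x < c ∨ c < x)}

lemma uncn_cn {c : P} {s : Finset P} (h : c ∉ s) :
    uncn c (cn c (Finsupp.single s 1)) = Finsupp.single s 1 := by
  rw [cn_single, if_neg h, uncn_single, if_pos (by simp), sg_insert _ _ _ h, if_neg (lt_irrefl _),
    erase_insert h, one_mul, sg_sq]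

lemma uncn_zero {c : P} {s : Finset P} (h : c ∉ s) :
    uncn c (Finsupp.single s 1) = 0 := by rw [uncn_single, if_neg h]

lemma uncn_cn_Ch {S : Set P} {k : ℕ} {c : P} (h : c ∉ S) {z} (hz : z ∈ Ch S k) :
    uncn c (cn c z) = z :=
  Ch_ind (uncn c ∘ₗ cn c) LinearMap.id (fun _ h1 _ _ => uncn_cn fun hc => h (h1 _ hc)) hz

lemma uncn_Ch {S : Set P} {k : ℕ} {c : P} (h : c ∉ S) {z} (hz : z ∈ Ch S k) :
    uncn c z = 0 :=
  Ch_ind (uncn c) 0 (fun _ h1 _ _ => uncn_zero fun hc => h (h1 _ hc)) hz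

lemma Ch_zero_bd {S : Set P} {z} (hz : z ∈ Ch S 0) : bd z = 0 :=
  Ch_ind bd 0 (fun s _ _ h => by rw [card_eq_zero] at h; subst h; simp [bd_single]) hz

theorem push_remove {S : Set P} {c : P} (hL : Acy (Lk S c)) : Push S (S \ {c}) := by
  intro k z hz h
  cases k with
  | zero =>
    refine ⟨0, Submodule.zero_mem _, ?_⟩
    rw [_root_.map_zero, add_zero]
    refine ⟨fun s hs => ⟨?_, (hz hs).2⟩, h⟩
    have : s = ∅ := card_eq_zero.1 (hz hs).2.2
    subst this; simp
  | succ k =>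
    have hS' : ∀ x ∈ Lk S c, x ≤ c ∨ c ≤ x := fun x hx => hx.2.imp le_of_lt le_of_lt
    have hcL : c ∉ Lk S c := fun h => h.2.elim (lt_irrefl _) (lt_irrefl _)
    have hb : uncn c z ∈ Ch (Lk S c) k := by
      refine Ch_map (uncn c) _ (fun s h1 h2 h3 => ?_) hz
      rw [uncn_single]
      split_ifs with hc
      · refine single_mem_Ch _ ?_ ?_ ?_
        · intro x hx
          obtain ⟨hne, hx⟩ := mem_erase.1 hx
          exact ⟨h1 x hx, (h2 x hx c hc).imp (fun h => lt_of_le_of_ne h hne)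
            (fun h => lt_of_le_of_ne h hne.symm)⟩
        · intro x hx y hy; exact h2 x (mem_of_mem_erase hx) y (mem_of_mem_erase hy)
        · rw [card_erase_of_mem hc, h3]; rfl
      · exact Submodule.zero_mem _
    have hz0 : z - cn c (uncn c z) ∈ Ch (S \ {c}) (k+1) := by
      refine Ch_map (LinearMap.id - cn c ∘ₗ uncn c) _ (fun s h1 h2 h3 => ?_) hz
      simp only [LinearMap.sub_apply, LinearMap.id_apply, LinearMap.comp_apply]
      rw [uncn_single]
      split_ifs with hc
      · rw [cn_single, if_neg (by simp), insert_erase hc, sg_erase _ _ _ hc, if_neg (lt_irrefl _),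
          one_mul, sg_sq, sub_self]
        exact Submodule.zero_mem _
      · rw [_root_.map_zero, sub_zero]
        refine single_mem_Ch _ (fun x hx => ⟨h1 x hx, ?_⟩) h2 h3
        rintro rfl; exact hc hx
    set b := uncn c z with hbdef
    set z0 := z - cn c b with hz0def
    have ez : z = z0 + cn c b := by rw [hz0def]; abel
    have hco := cone_Ch c hS' hb
    have hcS : c ∉ S \ {c} := fun h => h.2 rfl
    have hLS : Lk S c ⊆ S \ {c} := fun x hx => ⟨hx.1, fun h => hcL (h ▸ hx)⟩
    have e1 : bd z0 + (b - cn c (bd b)) = 0 := by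
      rw [← h, ez, _root_.map_add, ← eq_sub_of_add_eq hco]
    have hbb : bd b = 0 ∨ bd b ∈ Ch (Lk S c) (k-1) := by
      cases k with
      | zero => exact Or.inl (Ch_zero_bd hb)
      | succ k => exact Or.inr (bd_mem hb)
    have hdb : bd b = 0 := by
      rcases hbb with hbb | hbb
      · exact hbb
      have e2 := congrArg (uncn c) e1
      rw [_root_.map_add, _root_.map_sub (uncn c) b, uncn_Ch hcS (bd_mem hz0), uncn_Ch hcL hb,
        uncn_cn_Ch hcL hbb] at e2
      simpa using e2
    obtain ⟨e, he, hde⟩ := hL k b hb hdb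
    have hcoe := cone_Ch c hS' he
    rw [hde] at hcoe
    have e3 : z + bd (cn c e) = z0 + e := by
      rw [ez, eq_sub_of_add_eq hcoe]; abel
    by_cases hc : c ∈ S
    · refine ⟨cn c e, ?_, ?_, ?_⟩
      · refine Ch_mono ?_ _ (cn_mem c hS' he)
        intro x hx
        rcases hx with rfl | hx
        · exact hc
        · exact hx.1
      · rw [e3]; exact Submodule.add_mem _ hz0 (Ch_mono hLS _ he)
      · rw [e3, _root_.map_add, hde]; rw [hdb] at e1; simpa using e1
    · refine ⟨0, Submodule.zero_mem _, ?_⟩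
      rw [_root_.map_zero, add_zero, Set.sdiff_singleton_eq_self hc]
      exact ⟨hz, h⟩

theorem push_beat {S : Set P} {x m : P} (hm : m ∈ Lk S x) (h : ∀ y ∈ Lk S x, y ≤ m ∨ m ≤ y) :
    Push S (S \ {x}) := push_remove (Acy.cone m hm h)

theorem push_closure (φ : P → P) (N : ℕ) : ∀ S : Set P,
    {x ∈ S | φ x ≠ x}.Finite → {x ∈ S | φ x ≠ x}.ncard = N →
    (∀ x ∈ S, φ x ∈ S) → (∀ x ∈ S, ∀ y ∈ S, x ≤ y → φ x ≤ φ y) →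
    ((∀ x ∈ S, x ≤ φ x) ∨ (∀ x ∈ S, φ x ≤ x)) → (∀ x ∈ S, φ (φ x) = φ x) →
    Push S {x ∈ S | φ x = x} := by
  induction N with
  | zero =>
    intro S hf h0 _ _ _ _
    rw [Set.ncard_eq_zero hf] at h0
    have : {x ∈ S | φ x = x} = S := by
      ext x; refine ⟨fun h => h.1, fun h => ⟨h, ?_⟩⟩
      by_contra hne
      have : x ∈ {x ∈ S | φ x ≠ x} := ⟨h, hne⟩
      rw [h0] at this; exact this
    rw [this]; exact Push.refl S
  | succ N ih =>
    intro S hf hN hmap hmon hle hid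
    have hne : {x ∈ S | φ x ≠ x}.Nonempty := by
      rw [← Set.ncard_pos hf]; omega
    have key : ∃ x ∈ {x ∈ S | φ x ≠ x}, Push S (S \ {x}) := by
      rcases hle with hle | hle
      · obtain ⟨x, hx⟩ := hf.exists_maximal hne
        refine ⟨x, hx.1, push_beat (m := φ x) ?_ ?_⟩
        · exact ⟨hmap x hx.1.1, Or.inr (lt_of_le_of_ne (hle x hx.1.1) hx.1.2.symm)⟩
        · rintro y ⟨hy, hy' | hy'⟩
          · exact Or.inl (hy'.le.trans (hle x hx.1.1))
          · right
            have : φ y = y := by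
              by_contra h
              exact absurd (hx.2 ⟨hy, h⟩ hy'.le) hy'.not_ge
            rw [← this]; exact hmon x hx.1.1 y hy hy'.le
      · obtain ⟨x, hx⟩ := hf.exists_minimal hne
        refine ⟨x, hx.1, push_beat (m := φ x) ?_ ?_⟩
        · exact ⟨hmap x hx.1.1, Or.inl (lt_of_le_of_ne (hle x hx.1.1) hx.1.2)⟩
        · rintro y ⟨hy, hy' | hy'⟩
          · left
            have : φ y = y := by
              by_contra h
              exact absurd (hx.2 ⟨hy, h⟩ hy'.le) hy'.not_ge
            rw [← this]; exact hmon y hy x hx.1.1 hy'.le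
          · exact Or.inr ((hle x hx.1.1).trans hy'.le)
    obtain ⟨x, hx, hp⟩ := key
    have e1 : {y ∈ S \ {x} | φ y ≠ y} = {y ∈ S | φ y ≠ y} \ {x} := by
      ext y; simp only [Set.mem_sdiff, Set.mem_ofPred_eq, Set.mem_singleton_iff]; tauto
    have e2 : {y ∈ S \ {x} | φ y = y} = {y ∈ S | φ y = y} := by
      ext y; simp only [Set.mem_sdiff, Set.mem_ofPred_eq, Set.mem_singleton_iff]
      refine ⟨fun h => ⟨h.1.1, h.2⟩, fun h => ⟨⟨h.1, ?_⟩, h.2⟩⟩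
      rintro rfl; exact hx.2 h.2
    have := ih (S \ {x}) (by rw [e1]; exact hf.sdiff)
      (by rw [e1, Set.ncard_sdiff_singleton_of_mem hx, hN]; rfl)
      (fun y hy => ⟨hmap y hy.1, fun h => hx.2 (by
        have h : φ y = x := h
        rw [← h]; exact hid y hy.1)⟩)
      (fun a ha b hb => hmon a ha.1 b hb.1)
      (hle.imp (fun h y hy => h y hy.1) (fun h y hy => h y hy.1))
      (fun y hy => hid y hy.1)
    rw [e2] at this
    exact Push.trans Set.sdiff_subset hp this

/-- induced map on chains -/
noncomputable def chMap (f : P → Q) : (Finset P →₀ ℤ) →ₗ[ℤ] (Finset Q →₀ ℤ) :=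
  Finsupp.lmapDomain ℤ ℤ (Finset.image f)

lemma chMap_single (f : P → Q) (s : Finset P) (a : ℤ) :
    chMap f (Finsupp.single s a) = Finsupp.single (s.image f) a := by
  simp [chMap]

lemma chMap_bd_single (f : P → Q) (s : Finset P)
    (hf : ∀ x ∈ s, ∀ y ∈ s, f x < f y ↔ x < y) (hi : Set.InjOn f s) :
    bd (chMap f (Finsupp.single s 1)) = chMap f (bd (Finsupp.single s 1)) := by
  rw [chMap_single, bd_single, bd_single, _root_.map_sum, Finset.sum_image hi]
  refine Finset.sum_congr rfl fun x hx => ?_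
  rw [chMap_single]
  congr 1
  · ext y
    simp only [mem_erase, mem_image]
    constructor
    · rintro ⟨h1, a, ha, rfl⟩
      exact ⟨a, ⟨fun h => h1 (h ▸ rfl), ha⟩, rfl⟩
    · rintro ⟨a, ⟨h1, ha⟩, rfl⟩
      exact ⟨fun h => h1 (hi ha hx h), a, ha, rfl⟩
  · unfold sg
    congr 1
    have : (s.image f).filter (· < f x) = (s.filter (· < x)).image f := by
      ext y
      simp only [mem_filter, mem_image]
      constructor
      · rintro ⟨⟨a, ha, rfl⟩, h⟩
        exact ⟨a, ⟨ha, (hf a ha x hx).1 h⟩, rfl⟩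
      · rintro ⟨a, ⟨ha, h⟩, rfl⟩
        exact ⟨⟨a, ha, rfl⟩, (hf a ha x hx).2 h⟩
    rw [this, card_image_of_injOn]
    exact hi.mono (fun a ha => (mem_filter.1 ha).1)

lemma le_iff_of_embed {S : Set P} {f : P → Q} (hf : ∀ x ∈ S, ∀ y ∈ S, f x ≤ f y ↔ x ≤ y) :
    Set.InjOn f S ∧ ∀ x ∈ S, ∀ y ∈ S, f x < f y ↔ x < y := by
  refine ⟨fun x hx y hy h => le_antisymm ((hf x hx y hy).1 h.le) ((hf y hy x hx).1 h.ge), ?_⟩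
  intro x hx y hy
  rw [lt_iff_le_not_ge, lt_iff_le_not_ge, hf x hx y hy, hf y hy x hx]

lemma chMap_bd {S : Set P} {k : ℕ} {f : P → Q} (hf : ∀ x ∈ S, ∀ y ∈ S, f x ≤ f y ↔ x ≤ y)
    {z} (hz : z ∈ Ch S k) : bd (chMap f z) = chMap f (bd z) :=
  Ch_ind (bd ∘ₗ chMap f) (chMap f ∘ₗ bd) (fun s h1 _ _ => chMap_bd_single f s
    (fun x hx y hy => (le_iff_of_embed hf).2 x (h1 x hx) y (h1 y hy))
    ((le_iff_of_embed hf).1.mono fun x hx => h1 x hx)) hz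

lemma chMap_mem {S : Set P} {T : Set Q} {k : ℕ} {f : P → Q}
    (hf : ∀ x ∈ S, ∀ y ∈ S, f x ≤ f y ↔ x ≤ y) (hST : ∀ x ∈ S, f x ∈ T)
    {z} (hz : z ∈ Ch S k) : chMap f z ∈ Ch T k := by
  refine Ch_map (chMap f) _ (fun s h1 h2 h3 => ?_) hz
  rw [chMap_single]
  refine single_mem_Ch _ ?_ ?_ ?_
  · intro y hy; obtain ⟨x, hx, rfl⟩ := mem_image.1 hy; exact hST x (h1 x hx)
  · intro y hy y' hy'
    obtain ⟨x, hx, rfl⟩ := mem_image.1 hy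
    obtain ⟨x', hx', rfl⟩ := mem_image.1 hy'
    rw [hf x (h1 x hx) x' (h1 x' hx'), hf x' (h1 x' hx') x (h1 x hx)]
    exact h2 x hx x' hx'
  · rw [card_image_of_injOn, h3]
    exact (le_iff_of_embed hf).1.mono fun x hx => h1 x hx

theorem Acy.transfer {S : Set P} {T : Set Q} (f : P → Q)
    (hf : ∀ x ∈ S, ∀ y ∈ S, f x ≤ f y ↔ x ≤ y) (hST : ∀ x ∈ S, f x ∈ T)
    (hTS : ∀ y ∈ T, ∃ x ∈ S, f x = y) (h : Acy S) : Acy T := by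
  rcases isEmpty_or_nonempty P with hP | hP
  · -- T is empty
    exfalso
    obtain ⟨w, hw, e⟩ := h 0 (Finsupp.single ∅ 1) (single_mem_Ch _ (by simp) (by simp) (by simp))
      (by simp [bd_single])
    have : w = 0 := by
      by_contra hne
      obtain ⟨s, hs⟩ := Finsupp.support_nonempty_iff.2 hne
      have h1 := (hw hs).2.2
      obtain ⟨x, _⟩ : s.Nonempty := by rw [← card_pos]; omega
      exact hP.elim x
    rw [this, _root_.map_zero] at e
    simpa using (Finsupp.single_eq_zero.1 e.symm)
  choose! g hg1 hg2 using hTS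
  have hg : ∀ x ∈ T, ∀ y ∈ T, g x ≤ g y ↔ x ≤ y := fun x hx y hy => by
    rw [← hf _ (hg1 x hx) _ (hg1 y hy), hg2 x hx, hg2 y hy]
  intro k z hz hdz
  obtain ⟨w, hw, e⟩ := h k (chMap g z) (chMap_mem hg hg1 hz)
    (by rw [chMap_bd hg hz, hdz, _root_.map_zero])
  refine ⟨chMap f w, chMap_mem hf hST hw, ?_⟩
  rw [chMap_bd hf hw, e]
  refine Ch_ind (chMap f ∘ₗ chMap g) LinearMap.id (fun s h1 _ _ => ?_) hz
  simp only [LinearMap.comp_apply, LinearMap.id_apply, chMap_single]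
  rw [image_image, image_congr (g := id), image_id]
  intro x hx; exact hg2 x (h1 x hx)

end Chains

section Lam
open Finset
open scoped Classical

variable {α : Type*}

/-- nonempty pairwise compatible subsets -/
def Lam (comp : α → α → Prop) (R : Finset α) : Set (Finset α) :=
  {σ | σ.Nonempty ∧ σ ⊆ R ∧ ∀ a ∈ σ, ∀ b ∈ σ, comp a b}

lemma Lam_finite (comp : α → α → Prop) (R : Finset α) : (Lam comp R).Finite :=
  (Finset.finite_toSet R.powerset).subset fun σ hσ => by simpa using hσ.2.1

lemma Lam_insert {comp : α → α → Prop} {R : Finset α} (hr : ∀ a, comp a a)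
    (hs : ∀ a b, comp a b → comp b a) {σ} (hσ : σ ∈ Lam comp R) {D} (hD : D ∈ R)
    (h : ∀ a ∈ σ, comp a D) : insert D σ ∈ Lam comp R := by
  refine ⟨by simp, insert_subset hD hσ.2.1, ?_⟩
  intro a ha b hb
  rcases mem_insert.1 ha with h4 | h4 <;> rcases mem_insert.1 hb with h5 | h5
  · rw [h4, h5]; exact hr _
  · rw [h4]; exact hs _ _ (h b h5)
  · rw [h5]; exact h a h4
  · exact hσ.2.2 a h4 b h5

theorem Lam_acy {comp : α → α → Prop} (hr : ∀ a, comp a a)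
    (hs : ∀ a b, comp a b → comp b a) (size : α → ℕ) (D0 : α) (N : ℕ) : ∀ R : Finset α,
    (R.filter (fun D => ¬ comp D D0)).card = N → D0 ∈ R →
    (∀ D ∈ R, ¬ comp D D0 → ∃ D' ∈ R, comp D' D0 ∧ comp D' D ∧
      ∀ E ∈ R, comp E D → E ≠ D → (¬ comp E D0 → size D ≤ size E) → comp E D') →
    Acy (Lam comp R) := by
  induction N with
  | zero =>
    intro R hN hD0 _
    rw [card_eq_zero, filter_eq_empty_iff] at hN
    have hN : ∀ D ∈ R, comp D D0 := fun D hD => not_not.1 (hN hD)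
    have hins : ∀ σ ∈ Lam comp R, insert D0 σ ∈ Lam comp R := fun σ hσ =>
      Lam_insert hr hs hσ hD0 fun a ha => hN a (hσ.2.1 ha)
    refine Acy.of_push (Set.sep_subset _ _) (push_closure (fun σ => insert D0 σ) _ (Lam comp R)
      ((Lam_finite comp R).subset (Set.sep_subset _ _)) rfl hins ?_ (Or.inl ?_) ?_)
      (Acy.cone {D0} ?_ ?_)
    · intro x _ y _ h; exact insert_subset_insert _ h
    · intro x _; exact subset_insert _ _
    · intro x _; simp
    · refine ⟨⟨by simp, by simpa using hD0, ?_⟩, by simp⟩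
      intro a ha b hb; rw [mem_singleton.1 ha, mem_singleton.1 hb]; exact hr _
    · intro σ hσ
      right
      have : D0 ∈ σ := by have := hσ.2; rw [← this]; exact mem_insert_self _ _
      exact singleton_subset_iff.2 this
  | succ N ih =>
    intro R hN hD0 hcor
    obtain ⟨D, hD, hmin⟩ := exists_min_image (R.filter (fun D => ¬ comp D D0)) size
      (by rw [← card_pos]; omega)
    obtain ⟨hDR, hDX⟩ := mem_filter.1 hD
    obtain ⟨D', hD'R, hD'0, hD'D, hE⟩ := hcor D hDR hDX
    have hne : D' ≠ D := fun h => hDX (h ▸ hD'0)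
    have hE' : ∀ E ∈ R, comp E D → comp E D' := by
      intro E hER hED
      by_cases h : E = D
      · rw [h]; exact hs _ _ hD'D
      · exact hE E hER hED h fun h0 => hmin E (mem_filter.2 ⟨hER, h0⟩)
    have hI : Acy (Lam comp (R.erase D)) := by
      refine ih _ ?_ (mem_erase.2 ⟨fun h => hDX (h ▸ hr _), hD0⟩) ?_
      · rw [filter_erase, card_erase_of_mem hD, hN]; rfl
      · intro D2 h2 h2X
        obtain ⟨D2', h1, h3, h4, h5⟩ := hcor D2 (mem_of_mem_erase h2) h2X
        exact ⟨D2', mem_erase.2 ⟨fun h => hDX (h ▸ h3), h1⟩, h3, h4,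
          fun E hE => h5 E (mem_of_mem_erase hE)⟩
    have p1 : Push (Lam comp R) {σ ∈ Lam comp R | (if D ∈ σ then insert D' σ else σ) = σ} := by
      refine push_closure (fun σ => if D ∈ σ then insert D' σ else σ) _ (Lam comp R)
        ((Lam_finite comp R).subset (Set.sep_subset _ _)) rfl ?_ ?_ (Or.inl ?_) ?_
      · intro σ hσ
        split_ifs with h
        · exact Lam_insert hr hs hσ hD'R fun a ha => hE' a (hσ.2.1 ha) (hσ.2.2 a ha D h)
        · exact hσ
      · intro σ _ τ _ h
        split_ifs with h1 h2 h2
        · exact insert_subset_insert _ h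
        · exact absurd (h h1) h2
        · exact h.trans (subset_insert _ _)
        · exact h
      · intro σ _; split_ifs
        · exact subset_insert _ _
        · exact le_rfl
      · intro σ _
        by_cases h : D ∈ σ
        · simp [h]
        · simp [h]
    set T : Set (Finset α) := {σ ∈ Lam comp R | (if D ∈ σ then insert D' σ else σ) = σ} with hT
    have hT' : ∀ σ ∈ T, D ∈ σ → D' ∈ σ := by
      intro σ hσ h
      have := hσ.2
      rw [if_pos h] at this
      rw [← this]; exact mem_insert_self _ _
    have hTm : ∀ σ ∈ Lam comp R, (D ∈ σ → D' ∈ σ) → σ ∈ T := by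
      intro σ hσ h
      refine ⟨hσ, ?_⟩
      split_ifs with h1
      · exact insert_eq_of_mem (h h1)
      · rfl
    have p2 : Push T {σ ∈ T | σ.erase D = σ} := by
      refine push_closure (fun σ => σ.erase D) _ T
        (((Lam_finite comp R).subset (Set.sep_subset _ _)).subset (Set.sep_subset _ _)) rfl
        ?_ ?_ (Or.inr ?_) ?_
      · intro σ hσ
        refine hTm _ ⟨?_, ?_, ?_⟩ ?_
        · by_cases h : D ∈ σ
          · exact ⟨D', mem_erase.2 ⟨hne, hT' σ hσ h⟩⟩
          · rw [erase_eq_of_notMem h]; exact hσ.1.1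
        · exact (erase_subset _ _).trans hσ.1.2.1
        · intro a ha b hb; exact hσ.1.2.2 a (mem_of_mem_erase ha) b (mem_of_mem_erase hb)
        · intro h; simp at h
      · intro σ _ τ _ h; exact erase_subset_erase _ h
      · intro σ _; exact erase_subset _ _
      · intro σ _; simp
    have e : {σ ∈ T | σ.erase D = σ} = Lam comp (R.erase D) := by
      ext σ
      constructor
      · rintro ⟨h1, h2⟩
        have hD : D ∉ σ := by rw [← h2]; simp
        exact ⟨h1.1.1, subset_erase.2 ⟨h1.1.2.1, hD⟩, h1.1.2.2⟩
      · intro h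
        have h' := subset_erase.1 h.2.1
        exact ⟨hTm σ ⟨h.1, h'.1, h.2.2⟩ fun h => absurd h h'.2, erase_eq_of_notMem h'.2⟩
    rw [e] at p2
    refine Acy.of_push ?_ (Push.trans (Set.sep_subset _ _) p1 p2) hI
    intro σ h
    exact ⟨h.1, h.2.1.trans (erase_subset _ _), h.2.2⟩

end Lam

section Cuts
set_option linter.unusedSectionVars false
open Finset FreeGroup

variable {n : ℕ}

/-- the twist hom -/
def sH (i : Fin n) (u : Fin n → ℤ) : FG n →* FG n :=
  FreeGroup.lift fun b => of i ^ (u b) * of b * (of i ^ (u b))⁻¹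

lemma sH_of (i : Fin n) (u : Fin n → ℤ) (b : Fin n) :
    sH i u (of b) = of i ^ (u b) * of b * (of i ^ (u b))⁻¹ := by simp [sH]

lemma sH_self (i : Fin n) (u : Fin n → ℤ) : sH i u (of i) = of i := by
  rw [sH_of, (Commute.refl (of i)).zpow_left (u i) |>.eq]; group

lemma sH_comp (i : Fin n) (u v : Fin n → ℤ) (y : FG n) : sH i u (sH i v y) = sH i (u + v) y := by
  have : (sH i u).comp (sH i v) = sH i (u + v) := by
    apply FreeGroup.ext_hom
    intro b
    rw [MonoidHom.comp_apply, sH_of, sH_of, _root_.map_mul, _root_.map_mul, _root_.map_inv,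
      _root_.map_zpow, sH_self, sH_of, Pi.add_apply, zpow_add, (Commute.refl (of i)).zpow_zpow (u b) (v b) |>.eq]
    group
  exact DFunLike.congr_fun this y

lemma sH_zero (i : Fin n) (y : FG n) : sH i 0 y = y := by
  have : (sH i 0) = MonoidHom.id (FG n) := by
    apply FreeGroup.ext_hom
    intro b; simp [sH_of]
  rw [this]; rfl

/-- twist automorphism -/
def sA (i : Fin n) (u : Fin n → ℤ) : MulAut (FG n) where
  toFun := sH i u
  invFun := sH i (-u)
  left_inv y := by rw [sH_comp, neg_add_cancel, sH_zero]
  right_inv y := by rw [sH_comp, add_neg_cancel, sH_zero]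
  map_mul' := _root_.map_mul _

/-- twist element of the group -/
def sP (i : Fin n) (u : Fin n → ℤ) : PSigmaAut n :=
  ⟨sA i u, fun b => ⟨of i ^ (u b), sH_of i u b⟩⟩

lemma sP_apply (i : Fin n) (u : Fin n → ℤ) (y : FG n) : (sP i u).1 y = sH i u y := rfl

lemma sP_add (i : Fin n) (u v : Fin n → ℤ) : sP i (u + v) = sP i u * sP i v :=
  Subtype.ext (MulEquiv.ext fun y => (sH_comp i u v y).symm)

lemma sP_zero (i : Fin n) : sP i (0 : Fin n → ℤ) = 1 :=
  Subtype.ext (MulEquiv.ext fun y => sH_zero i y)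

lemma sP_neg (i : Fin n) (u : Fin n → ℤ) : sP i (-u) = (sP i u)⁻¹ := by
  rw [eq_inv_iff_mul_eq_one, ← sP_add, neg_add_cancel, sP_zero]

/-- inverse letter -/
def il (b : Fin n × Bool) : Fin n × Bool := (b.1, !b.2)

/-- intersection number -/
def cap (D : Finset (Fin n × Bool)) : Bool → List (Fin n × Bool) → ℤ
  | p, [] => if p then 1 else 0
  | p, b :: L => (if p = decide (b ∈ D) then 0 else 1) + cap D (decide (il b ∈ D)) L

lemma cap_sub (D E : Finset (Fin n × Bool)) (L : List (Fin n × Bool)) : ∀ p q : Bool,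
    cap (D ∩ E) (p && q) L + cap (D ∪ E) (p || q) L ≤ cap D p L + cap E q L := by
  induction L with
  | nil => intro p q; cases p <;> cases q <;> simp [cap]
  | cons b L ih =>
    intro p q
    have := ih (decide (il b ∈ D)) (decide (il b ∈ E))
    simp only [cap, mem_inter, mem_union, Bool.decide_and, Bool.decide_or]
    have h : (if (p && q) = (decide (b ∈ D) && decide (b ∈ E)) then (0:ℤ) else 1)
      + (if (p || q) = (decide (b ∈ D) || decide (b ∈ E)) then 0 else 1) ≤
      (if p = decide (b ∈ D) then 0 else 1) + (if q = decide (b ∈ E) then 0 else 1) := by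
      generalize decide (b ∈ D) = x
      generalize decide (b ∈ E) = y
      revert p q x y; decide
    linarith

lemma cap_posi (D E : Finset (Fin n × Bool)) (L : List (Fin n × Bool)) : ∀ p q : Bool,
    cap (D \ E) (p && !q) L + cap (E \ D) (q && !p) L ≤ cap D p L + cap E q L := by
  induction L with
  | nil => intro p q; cases p <;> cases q <;> simp [cap]
  | cons b L ih =>
    intro p q
    have := ih (decide (il b ∈ D)) (decide (il b ∈ E))
    simp only [cap, mem_sdiff, Bool.decide_and, decide_not]
    have h : (if (p && !q) = (decide (b ∈ D) && !decide (b ∈ E)) then (0:ℤ) else 1)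
      + (if (q && !p) = (decide (b ∈ E) && !decide (b ∈ D)) then 0 else 1) ≤
      (if p = decide (b ∈ D) then 0 else 1) + (if q = decide (b ∈ E) then 0 else 1) := by
      generalize decide (b ∈ D) = x
      generalize decide (b ∈ E) = y
      revert p q x y; decide
    linarith

/-- the explicit word -/
def fw (i : Fin n) (ε : Bool) (D : Finset (Fin n × Bool)) :
    Bool → List (Fin n × Bool) → List (Fin n × Bool)
  | p, [] => if p then [(i, !ε)] else []
  | p, b :: L => (if p = decide (b ∈ D) then [] else [(i, xor p ε)]) ++
      ((if b.1 = i then [] else [b]) ++ fw i ε D (decide (il b ∈ D)) L)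

/-- letters count -/
def ctL (i : Fin n) (L : List (Fin n × Bool)) : ℕ := L.countP (fun l => l.1 = i)

lemma fw_ct_self (i : Fin n) (ε : Bool) (D) (L) : ∀ p, (ctL i (fw i ε D p L) : ℤ) = cap D p L := by
  induction L with
  | nil => intro p; cases p <;> simp [fw, cap, ctL]
  | cons b L ih =>
    intro p
    simp only [fw, cap, ctL, List.countP_append, Nat.cast_add]
    have := ih (decide (il b ∈ D))
    rw [ctL] at this
    rw [this]
    have h1 : List.countP (fun l : Fin n × Bool => decide (l.1 = i)) (if b.1 = i then [] else [b]) = 0 := by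
      split_ifs with h <;> simp [h]
    rw [h1]
    split_ifs <;> simp

lemma fw_ct_ne (i j : Fin n) (hij : j ≠ i) (ε : Bool) (D) (L) :
    ∀ p, ctL j (fw i ε D p L) = ctL j L := by
  induction L with
  | nil => intro p; cases p <;> simp [fw, ctL, hij.symm]
  | cons b L ih =>
    intro p
    simp only [fw, ctL, List.countP_append, List.countP_cons]
    have := ih (decide (il b ∈ D))
    rw [ctL, ctL] at this
    rw [this]
    have h1 : List.countP (fun l : Fin n × Bool => decide (l.1 = j))
      (if p = decide (b ∈ D) then [] else [(i, xor p ε)]) = 0 := by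
      split_ifs with h <;> simp [hij.symm]
    rw [h1]
    by_cases h : b.1 = i
    · simp [h, hij.symm]
    · simp [h, add_comm]

/-- predicate: `D` is the letter set of the cut `(i, ε, B)` -/
def IsCS (i : Fin n) (ε : Bool) (B : Finset (Fin n)) (D : Finset (Fin n × Bool)) : Prop :=
  ∀ b : Fin n × Bool, (b.1 = i → (b ∈ D ↔ b.2 = ε)) ∧ (b.1 ≠ i → (b ∈ D ↔ b.1 ∈ B))

/-- sign as integer -/
def sgn (ε : Bool) : ℤ := if ε then 1 else -1

lemma fw_reduced {i : Fin n} {ε : Bool} {B D} (hD : IsCS i ε B D) (L : List (Fin n × Bool)) :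
    ∀ b, IsReduced (b :: L) → IsReduced (b :: fw i ε D (decide (il b ∈ D)) L) ∧
      ∀ c : Fin n × Bool, c.1 ≠ i → b.1 = i → (il c ∈ D ↔ b ∈ D) →
        IsReduced (c :: fw i ε D (decide (il b ∈ D)) L) := by
  induction L with
  | nil =>
    intro b _
    constructor
    · rw [fw]
      split_ifs with h
      · rw [FreeGroup.isReduced_cons_cons]
        refine ⟨fun hb => ?_, IsReduced.singleton⟩
        have := ((hD (il b)).1 hb).1 (by simpa using h)
        rw [il] at this
        simp [← this]
      · exact IsReduced.singleton
    · intro c hc _ _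
      rw [fw]
      split_ifs with h
      · rw [FreeGroup.isReduced_cons_cons]
        exact ⟨fun h => absurd h hc, IsReduced.singleton⟩
      · exact IsReduced.singleton
  | cons b' L ih =>
    intro b hb
    rw [FreeGroup.isReduced_cons_cons] at hb
    have h1 := ih b' hb.2
    -- emission part
    have hem : ∀ p : Bool, p ≠ decide (b' ∈ D) → IsReduced ((i, xor p ε) ::
        ((if b'.1 = i then [] else [b']) ++ fw i ε D (decide (il b' ∈ D)) L)) := by
      intro p hp
      split_ifs with hbi
      · have : (i, xor p ε) = b' := by
          refine Prod.ext hbi.symm ?_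
          have := (hD b').1 hbi
          rcases b' with ⟨x, y⟩
          simp only at *
          by_cases hm : (x, y) ∈ D
          · have h3 := this.1 hm
            subst h3; simp [hm] at hp; simp [hp]
          · have h3 : ¬ y = ε := fun h => hm (this.2 h)
            simp [hm] at hp; subst hp; cases y <;> cases ε <;> simp_all
        rw [this]; exact h1.1
      · rw [List.singleton_append, FreeGroup.isReduced_cons_cons]
        exact ⟨fun h => absurd h.symm hbi, h1.1⟩
    constructor
    · rw [fw]
      by_cases hp : decide (il b ∈ D) = decide (b' ∈ D)
      · rw [if_pos hp, List.nil_append]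
        split_ifs with hbi
        · rw [List.nil_append]
          have hbb : (b ∈ D ↔ b ∈ D) := Iff.rfl
          have hbn : b.1 ≠ i := by
            intro hb1
            have e := hb.1 (hb1.trans hbi.symm)
            have h2 := (hD (il b)).1 hb1
            have h3 := (hD b').1 hbi
            rw [decide_eq_decide, h2, h3, ← e, il] at hp
            cases h5 : b.2 <;> cases ε <;> simp [h5] at hp
          exact h1.2 b hbn hbi (by simpa using hp)
        · rw [List.singleton_append, FreeGroup.isReduced_cons_cons]
          exact ⟨hb.1, h1.1⟩
      · rw [if_neg hp, List.singleton_append, FreeGroup.isReduced_cons_cons]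
        refine ⟨fun hb1 => ?_, hem _ hp⟩
        have h2 := (hD (il b)).1 hb1
        show b.2 = xor (decide (il b ∈ D)) ε
        have e2 : decide (il b ∈ D) = decide ((!b.2) = ε) := decide_eq_decide.2 h2
        rw [e2]
        generalize b.2 = y
        cases y <;> cases ε <;> rfl
    · intro c hc hbi hcb
      rw [fw]
      by_cases hp : decide (il b ∈ D) = decide (b' ∈ D)
      · rw [if_pos hp, List.nil_append]
        have hflip : (il b ∈ D) ↔ ¬ (b ∈ D) := by
          rw [(hD (il b)).1 hbi, (hD b).1 hbi, il]
          cases b.2 <;> cases ε <;> simp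
        split_ifs with hbi'
        · exfalso
          have e := hb.1 (hbi.trans hbi'.symm)
          have : b = b' := Prod.ext (hbi.trans hbi'.symm) e
          subst this
          rw [decide_eq_decide] at hp
          tauto
        · rw [List.singleton_append, FreeGroup.isReduced_cons_cons]
          refine ⟨fun h => ?_, h1.1⟩
          by_contra hne
          have : b' = il c := by
            refine Prod.ext h.symm ?_
            rw [il]; revert hne; cases c.2 <;> cases b'.2 <;> simp
          rw [decide_eq_decide, this] at hp
          tauto
      · rw [if_neg hp, List.singleton_append, FreeGroup.isReduced_cons_cons]
        exact ⟨fun h => absurd h hc, hem _ hp⟩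

lemma fw_reduced' {i : Fin n} {ε : Bool} {B D} (hD : IsCS i ε B D) (L : List (Fin n × Bool))
    (hL : IsReduced L) : IsReduced (fw i ε D false L) := by
  -- use a letter `c` outside `D` via case analysis on the first letter
  cases L with
  | nil => simp [fw]
  | cons b L =>
    have h1 := fw_reduced hD L b hL
    have ht : ∀ {c : Fin n × Bool} {M}, IsReduced (c :: M) → IsReduced M := fun h =>
      List.IsChain.tail h
    rw [fw]
    by_cases hbi : b.1 = i
    · rw [if_pos hbi, List.nil_append]
      split_ifs with hp
      · exact ht h1.1
      · have : b = (i, xor false ε) := by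
          refine Prod.ext hbi ?_
          have := (hD b).1 hbi
          simp at hp
          simpa using this.1 hp
        rw [← this]; exact h1.1
    · rw [if_neg hbi]
      split_ifs with hp
      · exact h1.1
      · rw [List.singleton_append, List.singleton_append, FreeGroup.isReduced_cons_cons]
        exact ⟨fun h => absurd h.symm hbi, h1.1⟩

/-- the letter as element -/
lemma mkc_cons (b : Fin n × Bool) (L : List (Fin n × Bool)) :
    (mk (b :: L) : FG n) = of b.1 ^ (sgn b.2) * mk L := by
  have : (mk (b :: L) : FG n) = mk [b] * mk L := by rw [mul_mk]; rfl
  rw [this]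
  congr 1
  rcases b with ⟨b, s⟩
  cases s
  · simp [sgn, of, inv_mk, invRev]
  · simp [sgn, of]

lemma fw_mk {i : Fin n} {ε : Bool} {B D} (hD : IsCS i ε B D) (hB : i ∉ B)
    (L : List (Fin n × Bool)) : ∀ p,
    (mk (fw i ε D p L) : FG n) = of i ^ (if p then - sgn ε else 0) *
      sH i (fun b => if b ∈ B then sgn ε else 0) (mk L) := by
  induction L with
  | nil =>
    intro p
    cases p
    · simp [fw, ← one_eq_mk]
    · cases ε <;> simp [fw, ← one_eq_mk, mkc_cons, sgn]
  | cons b L ih =>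
    intro p
    have e1 : (mk (fw i ε D p (b :: L)) : FG n) =
      of i ^ (if p = decide (b ∈ D) then 0 else sgn (xor p ε)) *
        ((if b.1 = i then 1 else of b.1 ^ (sgn b.2)) * mk (fw i ε D (decide (il b ∈ D)) L)) := by
      rw [fw]
      split_ifs <;> simp [mkc_cons]
    rw [e1, ih, mkc_cons b L, _root_.map_mul, _root_.map_zpow]
    by_cases hbi : b.1 = i
    · rw [if_pos hbi, hbi, sH_self, one_mul, ← mul_assoc, ← mul_assoc, ← zpow_add, ← zpow_add]
      congr 2
      have h1 := (hD b).1 hbi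
      have h2 := (hD (il b)).1 hbi
      have e2 : decide (b ∈ D) = decide (b.2 = ε) := decide_eq_decide.2 h1
      have e3 : decide (il b ∈ D) = decide ((!b.2) = ε) := decide_eq_decide.2 h2
      rw [e2, e3]
      generalize b.2 = y
      cases y <;> cases ε <;> cases p <;> simp [sgn]
    · have h1 := (hD b).2 hbi
      have h2 : il b ∈ D ↔ b.1 ∈ B := (hD (il b)).2 hbi
      have e2 : decide (b ∈ D) = decide (b.1 ∈ B) := decide_eq_decide.2 h1
      have e3 : decide (il b ∈ D) = decide (b.1 ∈ B) := decide_eq_decide.2 h2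
      rw [if_neg hbi, sH_of, e2, e3]
      by_cases hm : b.1 ∈ B
      · rw [conj_zpow]
        cases p <;> simp [hm, mul_assoc]
      · cases p <;> simp [hm]
        cases ε <;> simp [sgn]

/-- letter count of group element -/
def ct (i : Fin n) (y : FG n) : ℕ := ctL i y.toWord

lemma toWord_sH {i : Fin n} {ε : Bool} {B D} (hD : IsCS i ε B D) (hB : i ∉ B) (y : FG n) :
    (sH i (fun b => if b ∈ B then sgn ε else 0) y).toWord = fw i ε D false y.toWord := by
  have h := fw_mk hD hB y.toWord false
  rw [mk_toWord] at h
  simp only [Bool.false_eq_true, if_false, zpow_zero, one_mul] at h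
  rw [← h, toWord_mk, (fw_reduced' hD _ isReduced_toWord).reduce_eq]

lemma ct_sH_self {i : Fin n} {ε : Bool} {B D} (hD : IsCS i ε B D) (hB : i ∉ B) (y : FG n) :
    (ct i (sH i (fun b => if b ∈ B then sgn ε else 0) y) : ℤ) = cap D false y.toWord := by
  rw [ct, toWord_sH hD hB, fw_ct_self]

lemma ct_sH_ne {i j : Fin n} (hij : j ≠ i) {ε : Bool} {B D} (hD : IsCS i ε B D) (hB : i ∉ B)
    (y : FG n) : ct j (sH i (fun b => if b ∈ B then sgn ε else 0) y) = ct j y := by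
  rw [ct, toWord_sH hD hB, fw_ct_ne i j hij, ct]

lemma norm_eq_sum_ct (y : FG n) : (y.norm) = ∑ i, ct i y := by
  rw [FreeGroup.norm]
  unfold ct ctL
  induction y.toWord with
  | nil => simp
  | cons b L ih =>
    simp only [List.length_cons, ih, List.countP_cons, sum_add_distrib]
    simp

end Cuts

section Cuts2
set_option linter.unusedSectionVars false
open Finset FreeGroup
open scoped Classical

variable {n : ℕ}

/-- cut data -/
abbrev CT (n : ℕ) := Fin n × Bool × Finset (Fin n)

/-- letter set of a cut -/
def Cs (a : CT n) : Finset (Fin n × Bool) :=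
  univ.filter (fun l => l.1 ∈ a.2.2 ∨ l = (a.1, a.2.1))

lemma mem_Cs (a : CT n) (l : Fin n × Bool) : l ∈ Cs a ↔ l.1 ∈ a.2.2 ∨ l = (a.1, a.2.1) := by
  simp [Cs]

lemma isCS_Cs (a : CT n) (ha : a.1 ∉ a.2.2) : IsCS a.1 a.2.1 a.2.2 (Cs a) := by
  rintro ⟨x, s⟩
  simp only [mem_Cs]
  constructor
  · rintro rfl; simp [ha]
  · intro h; simp [h]

/-- vector of a cut -/
def uv (a : CT n) : Fin n → ℤ := fun b => if b ∈ a.2.2 then sgn a.2.1 else 0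

lemma exists_CT (D : Finset (Fin n × Bool)) (i : Fin n)
    (h1 : (i, true) ∈ D ↔ (i, false) ∉ D) (h2 : ∀ j, j ≠ i → ((j, true) ∈ D ↔ (j, false) ∈ D)) :
    ∃ a : CT n, a.1 ∉ a.2.2 ∧ a.1 = i ∧ Cs a = D := by
  refine ⟨(i, decide ((i, true) ∈ D), univ.filter (fun j => j ≠ i ∧ (j, true) ∈ D)), by simp, rfl, ?_⟩
  ext ⟨j, s⟩
  rw [mem_Cs]
  simp only [mem_filter, mem_univ, true_and, Prod.mk.injEq]
  by_cases hj : j = i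
  · subst hj
    by_cases ht : (j, true) ∈ D <;> cases s <;> simp_all
  · have := h2 j hj
    cases s <;> simp [hj, this]

lemma Cs_split (a : CT n) (ha : a.1 ∉ a.2.2) (j : Fin n) :
    ((j, true) ∈ Cs a ↔ (j, false) ∈ Cs a) ↔ j ≠ a.1 := by
  rw [mem_Cs, mem_Cs]
  rcases a with ⟨i, s, B⟩
  simp only at *
  by_cases h : j = i
  · subst h; cases s <;> simp [ha]
  · simp [h]

lemma Cs_inj {a b : CT n} (ha : a.1 ∉ a.2.2) (hb : b.1 ∉ b.2.2) (h : Cs a = Cs b) : a = b := by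
  have h1 : a.1 = b.1 := by
    by_contra hne
    exact (Cs_split a ha a.1).not.2 (by simp) (by rw [h]; exact (Cs_split b hb a.1).2 hne)
  rcases a with ⟨i, s, B⟩
  rcases b with ⟨i', s', B'⟩
  simp only at h1; subst h1
  simp only at ha hb
  have hs : s = s' := by
    have := (mem_Cs (i, s', B') (i, s)).1 (h ▸ (mem_Cs (i, s, B) (i, s)).2 (by simp))
    simpa [hb] using this
  subst hs
  have : B = B' := by
    ext j
    have e := Finset.ext_iff.1 h (j, !s)
    rw [mem_Cs, mem_Cs] at e
    simpa using e
  rw [this]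

/-- compatibility of cuts -/
def cmpC (a b : CT n) : Prop := Cs a ⊆ Cs b ∨ Cs b ⊆ Cs a ∨ Disjoint (Cs a) (Cs b)

lemma cmpC_refl (a : CT n) : cmpC a a := Or.inl (Subset.refl _)

lemma cmpC_symm (a b : CT n) (h : cmpC a b) : cmpC b a := by
  rcases h with h | h | h
  · exact Or.inr (Or.inl h)
  · exact Or.inl h
  · exact Or.inr (Or.inr h.symm)

lemma exists_corner (a b : CT n) (ha : a.1 ∉ a.2.2) (hb : b.1 ∉ b.2.2) :
    ∃ c d : CT n, c.1 ∉ c.2.2 ∧ d.1 ∉ d.2.2 ∧ ((c.1 = a.1 ∧ d.1 = b.1) ∨ (c.1 = b.1 ∧ d.1 = a.1)) ∧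
      ((Cs c = Cs a ∩ Cs b ∧ Cs d = Cs a ∪ Cs b) ∨ (Cs c = Cs a \ Cs b ∧ Cs d = Cs b \ Cs a)) := by
  have A := Cs_split a ha
  have B := Cs_split b hb
  set D := Cs a
  set E := Cs b
  have Ai : (a.1, true) ∈ D ↔ (a.1, false) ∉ D := by have := (A a.1); tauto
  have Bi : (b.1, true) ∈ E ↔ (b.1, false) ∉ E := by have := (B b.1); tauto
  have An : ∀ j, j ≠ a.1 → ((j, true) ∈ D ↔ (j, false) ∈ D) := fun j hj => (A j).2 hj
  have Bn : ∀ j, j ≠ b.1 → ((j, true) ∈ E ↔ (j, false) ∈ E) := fun j hj => (B j).2 hj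
  -- finishing lemma
  have fin1 : ∀ i j : Fin n, ((i = a.1 ∧ j = b.1) ∨ (i = b.1 ∧ j = a.1)) →
      ((i, true) ∈ D ∩ E ↔ (i, false) ∉ D ∩ E) →
      (∀ k, k ≠ i → ((k, true) ∈ D ∩ E ↔ (k, false) ∈ D ∩ E)) →
      ((j, true) ∈ D ∪ E ↔ (j, false) ∉ D ∪ E) →
      (∀ k, k ≠ j → ((k, true) ∈ D ∪ E ↔ (k, false) ∈ D ∪ E)) →
      ∃ c d : CT n, c.1 ∉ c.2.2 ∧ d.1 ∉ d.2.2 ∧ ((c.1 = a.1 ∧ d.1 = b.1) ∨ (c.1 = b.1 ∧ d.1 = a.1)) ∧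
      ((Cs c = D ∩ E ∧ Cs d = D ∪ E) ∨ (Cs c = D \ E ∧ Cs d = E \ D)) := by
    intro i j h h1 h2 h3 h4
    obtain ⟨c, c1, c2, c3⟩ := exists_CT _ i h1 h2
    obtain ⟨d, d1, d2, d3⟩ := exists_CT _ j h3 h4
    exact ⟨c, d, c1, d1, by rw [c2, d2]; exact h, Or.inl ⟨c3, d3⟩⟩
  have fin2 : ∀ i j : Fin n, ((i = a.1 ∧ j = b.1) ∨ (i = b.1 ∧ j = a.1)) →
      ((i, true) ∈ D \ E ↔ (i, false) ∉ D \ E) →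
      (∀ k, k ≠ i → ((k, true) ∈ D \ E ↔ (k, false) ∈ D \ E)) →
      ((j, true) ∈ E \ D ↔ (j, false) ∉ E \ D) →
      (∀ k, k ≠ j → ((k, true) ∈ E \ D ↔ (k, false) ∈ E \ D)) →
      ∃ c d : CT n, c.1 ∉ c.2.2 ∧ d.1 ∉ d.2.2 ∧ ((c.1 = a.1 ∧ d.1 = b.1) ∨ (c.1 = b.1 ∧ d.1 = a.1)) ∧
      ((Cs c = D ∩ E ∧ Cs d = D ∪ E) ∨ (Cs c = D \ E ∧ Cs d = E \ D)) := by
    intro i j h h1 h2 h3 h4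
    obtain ⟨c, c1, c2, c3⟩ := exists_CT _ i h1 h2
    obtain ⟨d, d1, d2, d3⟩ := exists_CT _ j h3 h4
    exact ⟨c, d, c1, d1, by rw [c2, d2]; exact h, Or.inr ⟨c3, d3⟩⟩
  simp only [mem_inter, mem_union, mem_sdiff] at fin1 fin2
  clear_value D E
  have hall : ∀ k, k ≠ a.1 → k ≠ b.1 → (((k, true) ∈ D ↔ (k, false) ∈ D) ∧ ((k, true) ∈ E ↔ (k, false) ∈ E)) :=
    fun k h1 h2 => ⟨An k h1, Bn k h2⟩
  clear A B
  by_cases hab : a.1 = b.1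
  · by_cases hs : (a.1, true) ∈ D ↔ (a.1, true) ∈ E
    · refine fin1 a.1 b.1 (Or.inl ⟨rfl, rfl⟩) ?_ ?_ ?_ ?_
      · rw [← hab] at Bi; grind only
      · intro k hk; have := hall k hk (hab ▸ hk); grind only
      · rw [← hab] at Bi ⊢; grind only
      · intro k hk; have := hall k (hab ▸ hk) hk; grind only
    · refine fin2 a.1 b.1 (Or.inl ⟨rfl, rfl⟩) ?_ ?_ ?_ ?_
      · rw [← hab] at Bi; grind only
      · intro k hk; have := hall k hk (hab ▸ hk); grind only
      · rw [← hab] at Bi ⊢; grind only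
      · intro k hk; have := hall k (hab ▸ hk) hk; grind only
  · have hab' : b.1 ≠ a.1 := fun h => hab h.symm
    have A' := An b.1 hab'
    have B' := Bn a.1 hab
    have hk : ∀ i k, k ≠ i → (i = a.1 → k = b.1 ∨ (k ≠ a.1 ∧ k ≠ b.1)) ∧
        (i = b.1 → k = a.1 ∨ (k ≠ a.1 ∧ k ≠ b.1)) := by
      intro i k h
      constructor
      · rintro rfl; tauto
      · rintro rfl; tauto
    by_cases hI : (a.1, true) ∈ E <;> by_cases hJ : (b.1, true) ∈ D
    · refine fin2 b.1 a.1 (Or.inr ⟨rfl, rfl⟩) ?_ ?_ ?_ ?_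
      · grind only
      · intro k h; rcases (hk _ k h).2 rfl with rfl | h
        · grind only
        · have := hall k h.1 h.2; grind only
      · grind only
      · intro k h; rcases (hk _ k h).1 rfl with rfl | h
        · grind only
        · have := hall k h.1 h.2; grind only
    · refine fin1 a.1 b.1 (Or.inl ⟨rfl, rfl⟩) ?_ ?_ ?_ ?_
      · grind only
      · intro k h; rcases (hk _ k h).1 rfl with rfl | h
        · grind only
        · have := hall k h.1 h.2; grind only
      · grind only
      · intro k h; rcases (hk _ k h).2 rfl with rfl | h
        · grind only
        · have := hall k h.1 h.2; grind only
    · refine fin1 b.1 a.1 (Or.inr ⟨rfl, rfl⟩) ?_ ?_ ?_ ?_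
      · grind only
      · intro k h; rcases (hk _ k h).2 rfl with rfl | h
        · grind only
        · have := hall k h.1 h.2; grind only
      · grind only
      · intro k h; rcases (hk _ k h).1 rfl with rfl | h
        · grind only
        · have := hall k h.1 h.2; grind only
    · refine fin2 a.1 b.1 (Or.inl ⟨rfl, rfl⟩) ?_ ?_ ?_ ?_
      · grind only
      · intro k h; rcases (hk _ k h).1 rfl with rfl | h
        · grind only
        · have := hall k h.1 h.2; grind only
      · grind only
      · intro k h; rcases (hk _ k h).2 rfl with rfl | h
        · grind only
        · have := hall k h.1 h.2; grind only

/-- length change -/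
def cy (a : CT n) (y : FG n) : ℤ := cap (Cs a) false y.toWord - ct a.1 y

lemma cy_corner {a b c d : CT n} (h1 : (c.1 = a.1 ∧ d.1 = b.1) ∨ (c.1 = b.1 ∧ d.1 = a.1))
    (h2 : (Cs c = Cs a ∩ Cs b ∧ Cs d = Cs a ∪ Cs b) ∨ (Cs c = Cs a \ Cs b ∧ Cs d = Cs b \ Cs a))
    (y : FG n) : cy c y + cy d y ≤ cy a y + cy b y := by
  have h3 : cap (Cs c) false y.toWord + cap (Cs d) false y.toWord ≤
      cap (Cs a) false y.toWord + cap (Cs b) false y.toWord := by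
    rcases h2 with ⟨e1, e2⟩ | ⟨e1, e2⟩
    · rw [e1, e2]; exact cap_sub (Cs a) (Cs b) y.toWord false false
    · rw [e1, e2]; exact cap_posi (Cs a) (Cs b) y.toWord false false
  unfold cy
  rcases h1 with ⟨e1, e2⟩ | ⟨e1, e2⟩ <;> rw [e1, e2] <;> linarith

lemma cy_eq {a : CT n} (ha : a.1 ∉ a.2.2) (y : FG n) :
    cy a y = (ct a.1 (sH a.1 (uv a) y) : ℤ) - ct a.1 y := by
  rw [cy, ← ct_sH_self (isCS_Cs a ha) ha]; rfl

/-- an enumeration of the free group -/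
noncomputable def enumF (n : ℕ) : ℕ → FG n := (exists_surjective_nat (FG n)).choose

lemma enumF_surj (n : ℕ) : Function.Surjective (enumF n) := (exists_surjective_nat (FG n)).choose_spec

/-- lexicographic vector of a function on the free group -/
noncomputable def LV (F : FG n → ℤ) : Lex (ℕ → ℤ) :=
  toLex fun k => match k with
    | 0 => ∑ j, F (of j)
    | k + 1 => F (enumF n k)

lemma LV_add (F G : FG n → ℤ) : LV (F + G) = LV F + LV G := by
  apply toLex.symm.injective
  funext k
  cases k with
  | zero =>
    show ∑ j, (F (of j) + G (of j)) = ∑ j, F (of j) + ∑ j, G (of j)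
    rw [sum_add_distrib]
  | succ k => rfl

lemma LV_zero : LV (0 : FG n → ℤ) = 0 := by
  have := LV_add (0 : FG n → ℤ) 0
  simpa using this

lemma LV_mono {F G : FG n → ℤ} (h : ∀ y, F y ≤ G y) : LV F ≤ LV G := by
  apply Pi.toLex_monotone
  intro k
  cases k with
  | zero => exact sum_le_sum fun j _ => h _
  | succ k => exact h _

/-- reductivity -/
noncomputable def rho (g : PSigmaAut n) (a : CT n) : Lex (ℕ → ℤ) := LV fun y => cy a ((g⁻¹).1 y)

/-- norm -/
noncomputable def NN (g : PSigmaAut n) : Lex (ℕ → ℤ) := LV fun y => (norm ((g⁻¹).1 y) : ℤ)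

/-- reductive cuts -/
noncomputable def RR (g : PSigmaAut n) : Finset (CT n) :=
  univ.filter fun a => a.1 ∉ a.2.2 ∧ rho g a < 0

theorem RR_acy (g : PSigmaAut n) (hR : (RR g).Nonempty) : Acy (Lam cmpC (RR g)) := by
  obtain ⟨a0, ha0⟩ := hR
  rw [RR, mem_filter] at ha0
  obtain ⟨b, hb, hmin⟩ := exists_min_image (univ.filter fun a : CT n => a.1 ∉ a.2.2) (rho g)
    ⟨a0, by simpa using ha0.2.1⟩
  have hbv : b.1 ∉ b.2.2 := by simpa using hb
  have hmin : ∀ c : CT n, c.1 ∉ c.2.2 → rho g b ≤ rho g c := fun c hc => hmin c (by simpa using hc)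
  have hbR : b ∈ RR g := by
    rw [RR, mem_filter]
    exact ⟨mem_univ _, hbv, (hmin a0 ha0.2.1).trans_lt ha0.2.2⟩
  refine Lam_acy cmpC_refl cmpC_symm (fun a => (Cs a).card) b _ (RR g) rfl hbR ?_
  intro a haR hab
  rw [RR, mem_filter] at haR
  obtain ⟨-, hav, har⟩ := haR
  obtain ⟨c, d, hc, hd, h1, h2⟩ := exists_corner a b hav hbv
  have hle : rho g c + rho g d ≤ rho g a + rho g b := by
    unfold rho
    rw [← LV_add, ← LV_add]
    exact LV_mono fun y => cy_corner h1 h2 _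
  have hcr : rho g c < 0 := by
    have h3 := hmin d hd
    have : rho g c + rho g b ≤ rho g a + rho g b := (add_le_add_right h3 _).trans hle
    exact (le_of_add_le_add_right this).trans_lt har
  refine ⟨c, by rw [RR, mem_filter]; exact ⟨mem_univ _, hc, hcr⟩, ?_, ?_, ?_⟩
  · rcases h2 with h2 | h2
    · left; rw [h2.1]; exact inter_subset_right
    · right; right; rw [h2.1]; exact sdiff_disjoint
  · left
    rcases h2 with h2 | h2
    · rw [h2.1]; exact inter_subset_left
    · rw [h2.1]; exact sdiff_subset
  · intro e he hea hne hsz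
    have hca : Cs c ⊆ Cs a := by
      rcases h2 with h2 | h2
      · rw [h2.1]; exact inter_subset_left
      · rw [h2.1]; exact sdiff_subset
    rcases hea with h | h | h
    · have hev : e.1 ∉ e.2.2 := by rw [RR, mem_filter] at he; exact he.2.1
      have hlt : (Cs e).card < (Cs a).card :=
        card_lt_card (h.ssubset_of_ne fun h' => hne (Cs_inj hev hav h'))
      have heb : cmpC e b := by
        by_contra h'
        exact absurd (hsz h') (not_le.2 hlt)
      rcases heb with h' | h' | h'
      · rcases h2 with h2 | h2
        · left; rw [h2.1]; exact subset_inter h h'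
        · right; right; rw [h2.1]; exact (sdiff_disjoint.mono_right h').symm
      · exact absurd (Or.inr (Or.inl (h'.trans h))) hab
      · rcases h2 with h2 | h2
        · right; right; rw [h2.1]; exact h'.mono_right inter_subset_right
        · left; rw [h2.1]; exact subset_sdiff.2 ⟨h, h'⟩
    · exact Or.inr (Or.inl (hca.trans h))
    · exact Or.inr (Or.inr (h.mono_right hca))

lemma RR_nontriv {g : PSigmaAut n} {a : CT n} (ha : a ∈ RR g) : a.2.2.Nonempty := by
  rw [RR, mem_filter] at ha
  by_contra h
  rw [not_nonempty_iff_eq_empty] at h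
  have hu : uv a = 0 := by funext b; simp [uv, h]
  have : rho g a = 0 := by
    rw [rho, ← LV_zero]
    congr 1
    funext y
    rw [cy_eq ha.2.1, hu, sH_zero]; simp
  rw [this] at ha
  exact absurd ha.2.2 (lt_irrefl _)

/-- unit vectors -/
def UnitV (u : Fin n → ℤ) : Prop := ∃ (ε : Bool) (B : Finset (Fin n)), u = fun b => if b ∈ B then sgn ε else 0

lemma ct_unit {i j : Fin n} (hij : j ≠ i) {u : Fin n → ℤ} (hu : UnitV u) (hui : u i = 0) (y : FG n) :
    ct j (sH i u y) = ct j y := by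
  obtain ⟨ε, B, rfl⟩ := hu
  have hB : i ∉ B := by intro h; cases ε <;> simp [h, sgn] at hui
  exact ct_sH_ne hij (isCS_Cs (i, ε, B) hB) hB y

lemma norm_unit {i : Fin n} {u : Fin n → ℤ} (hu : UnitV u) (hui : u i = 0) (y : FG n) :
    (norm (sH i u y) : ℤ) = norm y + (ct i (sH i u y) - ct i y) := by
  rw [norm_eq_sum_ct, norm_eq_sum_ct]
  rw [← add_sum_erase univ _ (mem_univ i), ← add_sum_erase univ (fun j => ct j y) (mem_univ i)]
  rw [sum_congr rfl fun j hj => ct_unit (ne_of_mem_erase hj) hu hui y]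
  push_cast; ring

/-- ordered product along a list -/
def SL (δ : Fin n → Fin n → ℤ) (l : List (Fin n)) : PSigmaAut n := (l.map fun i => sP i (δ i)).prod

lemma SL_commute {δ : Fin n → Fin n → ℤ} {t : PSigmaAut n} {l : List (Fin n)}
    (h : ∀ i ∈ l, Commute t (sP i (δ i))) : Commute t (SL δ l) := by
  induction l with
  | nil => exact Commute.one_right _
  | cons i l ih =>
    have : SL δ (i :: l) = sP i (δ i) * SL δ l := by simp [SL]
    rw [this]
    exact (h i (by simp)).mul_right (ih fun j hj => h j (by simp [hj]))

lemma norm_SL {δ : Fin n → Fin n → ℤ} (hu : ∀ i, UnitV (δ i)) (h0 : ∀ i, δ i i = 0)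
    (hc : ∀ i j, i ≠ j → Commute (sP i (δ i)) (sP j (δ j))) (l : List (Fin n)) : l.Nodup →
    ∀ y, (∀ j ∉ l, ct j ((SL δ l).1 y) = ct j y) ∧
      (norm ((SL δ l).1 y) : ℤ) = norm y + (l.map fun i => (ct i (sH i (δ i) y) - ct i y : ℤ)).sum := by
  induction l with
  | nil => intro _ y; simp [SL]
  | cons i l ih =>
    intro hl y
    rw [List.nodup_cons] at hl
    obtain ⟨h1, h2⟩ := ih hl.2 y
    have e : SL δ (i :: l) = sP i (δ i) * SL δ l := by simp [SL]
    have e2 : (SL δ (i :: l)).1 y = sH i (δ i) ((SL δ l).1 y) := by rw [e]; rfl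
    have e3 : (SL δ (i :: l)).1 y = (SL δ l).1 (sH i (δ i) y) := by
      have hcm : Commute (sP i (δ i)) (SL δ l) :=
        SL_commute fun j hj => hc i j fun h => hl.1 (h ▸ hj)
      rw [e, hcm.eq]; rfl
    constructor
    · intro j hj
      rw [List.mem_cons, not_or] at hj
      rw [e2, ct_unit hj.1 (hu i) (h0 i), h1 j hj.2]
    · rw [e2, norm_unit (hu i) (h0 i), ← e2, e3, (ih hl.2 _).1 i hl.1, h1 i hl.1, h2]
      simp only [List.map_cons, List.sum_cons]; ring

end Cuts2

section Cells
set_option linter.unusedSectionVars false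
open Finset FreeGroup
open scoped Classical

variable {n : ℕ}

/-- exponent hom -/
def eH (i : Fin n) : FG n →* Multiplicative ℤ :=
  FreeGroup.lift fun k => if k = i then Multiplicative.ofAdd 1 else 1

/-- exponent -/
def ex (i : Fin n) (w : FG n) : ℤ := Multiplicative.toAdd (eH i w)

lemma ex_mul (i : Fin n) (v w : FG n) : ex i (v * w) = ex i v + ex i w := by simp [ex]
lemma ex_inv (i : Fin n) (w : FG n) : ex i w⁻¹ = - ex i w := by simp [ex]
lemma ex_of (i k : Fin n) : ex i (of k) = if k = i then 1 else 0 := by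
  simp only [ex, eH, FreeGroup.lift_apply_of]; split_ifs <;> rfl
lemma ex_zpow (i : Fin n) (w : FG n) (m : ℤ) : ex i (w ^ m) = m * ex i w := by simp [ex]

lemma ex_aut (i : Fin n) (g : PSigmaAut n) (y : FG n) : ex i (g.1 y) = ex i y := by
  have : (eH i).comp (g.1 : FG n ≃* FG n).toMonoidHom = eH i := by
    apply FreeGroup.ext_hom
    intro b
    obtain ⟨w, hw⟩ := g.2 b
    show eH i (g.1 (of b)) = _
    rw [hw, _root_.map_mul, _root_.map_mul, _root_.map_inv, mul_comm, inv_mul_cancel_left]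
  exact congrArg Multiplicative.toAdd (DFunLike.congr_fun this y)

/-- shift -/
def shA : Equiv.Perm (ℤ × ℤ) where
  toFun p := (p.1 + 1, p.2)
  invFun p := (p.1 - 1, p.2)
  left_inv p := by simp
  right_inv p := by simp

/-- shear -/
def shB : Equiv.Perm (ℤ × ℤ) where
  toFun p := (p.1, p.2 + p.1)
  invFun p := (p.1, p.2 - p.1)
  left_inv p := by simp
  right_inv p := by simp

/-- Heisenberg action -/
def hz (i b : Fin n) : FG n →* Equiv.Perm (ℤ × ℤ) :=
  FreeGroup.lift fun k => if k = i then shA else if k = b then shB else 1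

lemma hz_form (i b : Fin n) (w : FG n) : ∀ a, ∃ f, ∀ c, hz i b w (a, c) = (a + ex i w, c + f) := by
  induction w using FreeGroup.induction_on with
  | C1 => intro a; exact ⟨0, fun c => by simp [ex]⟩
  | of k =>
    intro a
    rw [ex_of]
    simp only [hz, FreeGroup.lift_apply_of]
    split_ifs
    · exact ⟨0, fun c => by simp [shA]⟩
    · exact ⟨a, fun c => by simp [shB]⟩
    · exact ⟨0, fun c => by simp⟩
  | inv_of k ih =>
    intro a
    obtain ⟨f, hf⟩ := ih (a - ex i (of k))
    refine ⟨-f, fun c => ?_⟩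
    rw [_root_.map_inv, Equiv.Perm.inv_eq_iff_eq, ex_inv, ← sub_eq_add_neg]
    show _ = hz i b (pure k) _
    have := hf (c + -f)
    simp only [sub_add_cancel, neg_add_cancel_right] at this
    exact this.symm
  | mul v w hv hw =>
    intro a
    obtain ⟨f, hf⟩ := hw a
    obtain ⟨f', hf'⟩ := hv (a + ex i w)
    refine ⟨f + f', fun c => ?_⟩
    rw [_root_.map_mul, Equiv.Perm.mul_apply, hf, hf', ex_mul]
    ext <;> simp <;> ring

/-- the abelianization coordinates -/
def chi (g : PSigmaAut n) (i b : Fin n) : ℤ :=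
  if i = b then 0 else -((hz i b (g.1 (of b))) (0, 0)).2

lemma chi_self (g : PSigmaAut n) (i : Fin n) : chi g i i = 0 := by simp [chi]

lemma chi_eq {g : PSigmaAut n} {i b : Fin n} (h : i ≠ b) {w : FG n} (hw : g.1 (of b) = w * of b * w⁻¹) :
    chi g i b = ex i w := by
  rw [chi, if_neg h, hw, _root_.map_mul, _root_.map_mul, _root_.map_inv, Equiv.Perm.mul_apply,
    Equiv.Perm.mul_apply]
  obtain ⟨f, hf⟩ := hz_form i b w (- ex i w)
  have e1 : (hz i b w)⁻¹ (0, 0) = (- ex i w, -f) := by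
    rw [Equiv.Perm.inv_eq_iff_eq, hf]; simp
  have e2 : ∀ p, hz i b (of b) p = (p.1, p.2 + p.1) := by
    intro p; simp [hz, Ne.symm h, shB]
  rw [e1, e2, hf]
  simp

lemma chi_mul (g h : PSigmaAut n) : chi (g * h) = chi g + chi h := by
  funext i b
  by_cases hib : i = b
  · subst hib; simp [chi_self]
  obtain ⟨w, hw⟩ := g.2 b
  obtain ⟨v, hv⟩ := h.2 b
  have : (g * h).1 (of b) = (g.1 v * w) * of b * (g.1 v * w)⁻¹ := by
    show g.1 (h.1 (of b)) = _
    rw [hv, _root_.map_mul, _root_.map_mul, _root_.map_inv, hw]; group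
  rw [Pi.add_apply, Pi.add_apply, chi_eq hib this, chi_eq hib hw, chi_eq hib hv, ex_mul, ex_aut, add_comm]

lemma chi_one : chi (1 : PSigmaAut n) = 0 := by
  have := chi_mul (1 : PSigmaAut n) 1
  simpa using this

lemma chi_inv (g : PSigmaAut n) : chi g⁻¹ = - chi g := by
  have := chi_mul g⁻¹ g
  rw [inv_mul_cancel, chi_one] at this
  exact eq_neg_of_add_eq_zero_left this.symm

lemma chi_sP (i : Fin n) (u : Fin n → ℤ) (hu : u i = 0) (k : Fin n) :
    chi (sP i u) k = if k = i then u else 0 := by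
  funext b
  by_cases hkb : k = b
  · subst hkb; rw [chi_self]; split_ifs with h
    · rw [h, hu]
    · rfl
  · rw [chi_eq hkb (sH_of i u b), ex_zpow, ex_of]
    by_cases h : i = k
    · simp [h]
    · simp [h, Ne.symm h]

/-- matrices with zero diagonal -/
def ZD (δ : Fin n → Fin n → ℤ) : Prop := ∀ i, δ i i = 0

lemma chi_SL {δ : Fin n → Fin n → ℤ} (h0 : ZD δ) (l : List (Fin n)) (hl : l.Nodup) (k : Fin n) :
    chi (SL δ l) k = if k ∈ l then δ k else 0 := by
  induction l with
  | nil => simp [SL, chi_one]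
  | cons i l ih =>
    rw [List.nodup_cons] at hl
    have e : SL δ (i :: l) = sP i (δ i) * SL δ l := by simp [SL]
    rw [e, chi_mul, Pi.add_apply, ih hl.2, chi_sP _ _ (h0 i)]
    by_cases h : k = i
    · subst h; simp [hl.1]
    · simp [h]

/-- the standard product -/
def Sm (δ : Fin n → Fin n → ℤ) : PSigmaAut n := SL δ (List.finRange n)

lemma chi_Sm {δ : Fin n → Fin n → ℤ} (h0 : ZD δ) : chi (Sm δ) = δ := by
  funext k
  rw [Sm, chi_SL h0 _ (List.nodup_finRange n)]; simp

lemma SL_add {δ ε : Fin n → Fin n → ℤ} (hc : ∀ i j, i ≠ j → Commute (sP i (ε i)) (sP j (δ j)))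
    (l : List (Fin n)) (hl : l.Nodup) : SL (δ + ε) l = SL δ l * SL ε l := by
  induction l with
  | nil => simp [SL]
  | cons i l ih =>
    rw [List.nodup_cons] at hl
    have e : ∀ δ : Fin n → Fin n → ℤ, SL δ (i :: l) = sP i (δ i) * SL δ l := fun δ => by simp [SL]
    have hcm : Commute (sP i (ε i)) (SL δ l) := SL_commute fun j hj => hc i j fun h => hl.1 (h ▸ hj)
    rw [e, e, e, ih hl.2, Pi.add_apply, sP_add]
    calc _ = sP i (δ i) * (sP i (ε i) * SL δ l) * SL ε l := by group
      _ = _ := by rw [hcm.eq]; group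

lemma Sm_add {δ ε : Fin n → Fin n → ℤ} (hc : ∀ i j, i ≠ j → Commute (sP i (ε i)) (sP j (δ j))) :
    Sm (δ + ε) = Sm δ * Sm ε := SL_add hc _ (List.nodup_finRange n)

lemma Sm_zero : Sm (0 : Fin n → Fin n → ℤ) = 1 := by
  simp [Sm, SL, sP_zero]

/-- compatibility of supports -/
def Cmp (i : Fin n) (p : Fin n → Prop) (j : Fin n) (q : Fin n → Prop) : Prop :=
  (∀ b, ¬ p b) ∨ (∀ b, ¬ q b) ∨ (¬ p j ∧ ¬ q i ∧ ∀ b, p b → ¬ q b) ∨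
    (p j ∧ ∀ b, q b → p b) ∨ (q i ∧ ∀ b, p b → q b)

lemma Cmp_symm {i : Fin n} {p : Fin n → Prop} {j : Fin n} {q : Fin n → Prop} (h : Cmp i p j q) :
    Cmp j q i p := by
  rcases h with h | h | ⟨h1, h2, h3⟩ | h | h
  · exact Or.inr (Or.inl h)
  · exact Or.inl h
  · exact Or.inr (Or.inr (Or.inl ⟨h2, h1, fun b hq hp => h3 b hp hq⟩))
  · exact Or.inr (Or.inr (Or.inr (Or.inr h)))
  · exact Or.inr (Or.inr (Or.inr (Or.inl h)))

lemma Cmp_xor {i : Fin n} {p1 p2 p : Fin n → Prop} {j : Fin n} {q : Fin n → Prop}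
    (h1 : Cmp i p1 j q) (h2 : Cmp i p2 j q) (hi1 : ¬ p1 i) (hi2 : ¬ p2 i)
    (hp : ∀ b, p b ↔ ((p1 b ∧ ¬ p2 b) ∨ (¬ p1 b ∧ p2 b))) : Cmp i p j q := by
  unfold Cmp at *
  rcases h1 with h | h | ⟨h1, h3, h4⟩ | ⟨h, h'⟩ | ⟨h, h'⟩ <;>
  rcases h2 with k | k | ⟨k1, k3, k4⟩ | ⟨k, k'⟩ | ⟨k, k'⟩ <;> grind

/-- compatibility of vectors -/
def Cm (i : Fin n) (u : Fin n → ℤ) (j : Fin n) (v : Fin n → ℤ) : Prop :=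
  Cmp i (fun b => u b ≠ 0) j (fun b => v b ≠ 0)

lemma UnitV.same {u : Fin n → ℤ} (hu : UnitV u) {b c : Fin n} (hb : u b ≠ 0) (hc : u c ≠ 0) :
    u b = u c := by
  obtain ⟨ε, B, rfl⟩ := hu
  simp only at *
  split_ifs at * <;> simp_all

lemma UnitV.neg {u : Fin n → ℤ} (hu : UnitV u) : UnitV (-u) := by
  obtain ⟨ε, B, rfl⟩ := hu
  refine ⟨!ε, B, ?_⟩
  funext b
  cases ε <;> by_cases h : b ∈ B <;> simp [h, sgn]

lemma UnitV.bd {u : Fin n → ℤ} (hu : UnitV u) (b : Fin n) : u b = 0 ∨ u b = 1 ∨ u b = -1 := by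
  obtain ⟨ε, B, rfl⟩ := hu
  cases ε <;> by_cases h : b ∈ B <;> simp [h, sgn]

lemma Cm_sub {i j : Fin n} {u1 u2 v : Fin n → ℤ} (h1 : Cm i u1 j v) (h2 : Cm i u2 j v)
    (hu1 : UnitV u1) (hu2 : UnitV u2) (hu : UnitV (u1 - u2)) (hi1 : u1 i = 0) (hi2 : u2 i = 0) :
    Cm i (u1 - u2) j v := by
  refine Cmp_xor h1 h2 (by simpa using hi1) (by simpa using hi2) fun b => ?_
  have a1 := hu1.bd b
  have a2 := hu2.bd b
  have a3 := hu.bd b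
  simp only [Pi.sub_apply] at *
  omega

lemma Cm_symm {i j : Fin n} {u v : Fin n → ℤ} (h : Cm i u j v) : Cm j v i u := Cmp_symm h

lemma aut_ext {g h : PSigmaAut n} (e : ∀ b, g.1 (of b) = h.1 (of b)) : g = h := by
  apply Subtype.ext
  apply MulEquiv.ext
  intro y
  have : (g.1 : FG n ≃* FG n).toMonoidHom = (h.1 : FG n ≃* FG n).toMonoidHom :=
    FreeGroup.ext_hom _ _ e
  exact DFunLike.congr_fun this y

lemma commute_aux {i j : Fin n} {u v : Fin n → ℤ} (hu : UnitV u)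
    (_hv : v j = 0) (hui : u i = 0)
    (h : (u j = 0 ∧ v i = 0 ∧ ∀ b, u b ≠ 0 → v b = 0) ∨ (u j ≠ 0 ∧ ∀ b, v b ≠ 0 → u b ≠ 0)) :
    Commute (sP i u) (sP j v) := by
  have hvi : v i = 0 := by
    rcases h with h | h
    · exact h.2.1
    · by_contra hne; exact h.2 i hne hui
  apply aut_ext
  intro b
  show sH i u (sH j v (of b)) = sH j v (sH i u (of b))
  have e1 : sH j v (of i) = of i := by rw [sH_of, hvi]; simp
  rw [sH_of, sH_of, _root_.map_mul, _root_.map_mul, _root_.map_inv, _root_.map_zpow,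
    _root_.map_mul, _root_.map_mul, _root_.map_inv, _root_.map_zpow, e1, sH_of j v b, sH_of i u b,
    sH_of i u j]
  by_cases hb : v b = 0
  · simp [hb]
  · rcases h with h | h
    · have : u b = 0 := by by_contra hne; exact hb (h.2.2 b hne)
      rw [h.1, this]; simp
    · rw [hu.same h.1 (h.2 b hb), conj_zpow]; group

lemma Cm.commute {i j : Fin n} {u v : Fin n → ℤ} (h : Cm i u j v) (hu : UnitV u) (hv : UnitV v)
    (hui : u i = 0) (hvj : v j = 0) : Commute (sP i u) (sP j v) := by
  rcases h with h | h | ⟨h1, h2, h3⟩ | h | h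
  · have : u = 0 := by funext b; simpa using h b
    rw [this, sP_zero]; exact Commute.one_left _
  · have : v = 0 := by funext b; simpa using h b
    rw [this, sP_zero]; exact Commute.one_right _
  · exact commute_aux hu hvj hui (Or.inl ⟨by simpa using h1, by simpa using h2, fun b hb => by simpa using h3 b hb⟩)
  · exact commute_aux hu hvj hui (Or.inr h)
  · exact (commute_aux hv hui hvj (Or.inr h)).symm

end Cells

section Cells2
set_option linter.unusedSectionVars false
open Finset FreeGroup
open scoped Classical

variable {n : ℕ}

/-- boxes -/
abbrev Vx (n : ℕ) := Fin n → Finset (Fin n → ℤ)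

/-- good boxes -/
structure Good (V : Vx n) : Prop where
  unit : ∀ i, ∀ u ∈ V i, ∀ v ∈ V i, UnitV (u - v)
  zd : ∀ i, ∀ u ∈ V i, u i = 0
  cm : ∀ i j, i ≠ j → ∀ u ∈ V i, ∀ u' ∈ V i, ∀ v ∈ V j, ∀ v' ∈ V j, Cm i (u - u') j (v - v')

lemma Good.mono {V W : Vx n} (h : Good V) (hW : ∀ i, W i ⊆ V i) : Good W where
  unit i u hu v hv := h.unit i u (hW i hu) v (hW i hv)
  zd i u hu := h.zd i u (hW i hu)
  cm i j hij u hu u' hu' v hv v' hv' :=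
    h.cm i j hij u (hW i hu) u' (hW i hu') v (hW j hv) v' (hW j hv')

/-- the cell of a box -/
noncomputable def cell (g : PSigmaAut n) (V : Vx n) : Finset (PSigmaAut n) :=
  (Fintype.piFinset V).image fun v => g * Sm (v - chi g)

/-- cells -/
def IsCell (c : Finset (PSigmaAut n)) : Prop :=
  ∃ g V, Good V ∧ chi g ∈ Fintype.piFinset V ∧ c = cell g V

lemma Good.commute {V : Vx n} (h : Good V) {i j : Fin n} (hij : i ≠ j) {u u' v v' : Fin n → ℤ}
    (hu : u ∈ V i) (hu' : u' ∈ V i) (hv : v ∈ V j) (hv' : v' ∈ V j) :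
    Commute (sP i (u - u')) (sP j (v - v')) :=
  (h.cm i j hij u hu u' hu' v hv v' hv').commute (h.unit i u hu u' hu') (h.unit j v hv v' hv')
    (by simp [h.zd i u hu, h.zd i u' hu']) (by simp [h.zd j v hv, h.zd j v' hv'])

lemma Good.Sm_add {V : Vx n} (h : Good V) {a b c : Fin n → Fin n → ℤ} (ha : a ∈ Fintype.piFinset V)
    (hb : b ∈ Fintype.piFinset V) (hc : c ∈ Fintype.piFinset V) :
    Sm (c - a) = Sm (b - a) * Sm (c - b) := by
  rw [Fintype.mem_piFinset] at *
  rw [← _root_.Sm_add, add_comm, sub_add_sub_cancel]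
  intro i j hij
  exact h.commute hij (hc i) (hb i) (hb j) (ha j)

lemma Good.chi_mem {V : Vx n} (h : Good V) {g : PSigmaAut n} (hg : chi g ∈ Fintype.piFinset V)
    {v : Fin n → Fin n → ℤ} (hv : v ∈ Fintype.piFinset V) : chi (g * Sm (v - chi g)) = v := by
  rw [chi_mul, chi_Sm, add_sub_cancel]
  rw [Fintype.mem_piFinset] at *
  intro i
  simp [h.zd i _ (hv i), h.zd i _ (hg i)]

lemma Good.mem_cell {V : Vx n} (h : Good V) {g : PSigmaAut n} (hg : chi g ∈ Fintype.piFinset V)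
    {x : PSigmaAut n} : x ∈ cell g V ↔ chi x ∈ Fintype.piFinset V ∧ x = g * Sm (chi x - chi g) := by
  rw [cell, mem_image]
  constructor
  · rintro ⟨v, hv, rfl⟩
    rw [h.chi_mem hg hv]; exact ⟨hv, rfl⟩
  · rintro ⟨h1, h2⟩
    exact ⟨_, h1, h2.symm⟩

lemma Good.rebase {V : Vx n} (h : Good V) {g : PSigmaAut n} (hg : chi g ∈ Fintype.piFinset V)
    {x : PSigmaAut n} (hx : x ∈ cell g V) : chi x ∈ Fintype.piFinset V ∧ cell x V = cell g V := by
  obtain ⟨h1, h2⟩ := (h.mem_cell hg).1 hx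
  refine ⟨h1, ?_⟩
  unfold cell
  refine image_congr fun v hv => ?_
  show x * _ = g * _
  rw [h.Sm_add hg h1 hv, ← mul_assoc, ← h2]

lemma Good.self_mem {V : Vx n} (h : Good V) {g : PSigmaAut n} (hg : chi g ∈ Fintype.piFinset V) :
    g ∈ cell g V := by
  rw [h.mem_cell hg, sub_self, Sm_zero, mul_one]; exact ⟨hg, rfl⟩

lemma IsCell.at {c : Finset (PSigmaAut n)} (hc : IsCell c) {g : PSigmaAut n} (hg : g ∈ c) :
    ∃ V, Good V ∧ chi g ∈ Fintype.piFinset V ∧ c = cell g V := by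
  obtain ⟨x, V, hV, hx, rfl⟩ := hc
  exact ⟨V, hV, (hV.rebase hx hg).1, (hV.rebase hx hg).2.symm⟩

lemma IsCell.nonempty {c : Finset (PSigmaAut n)} (hc : IsCell c) : c.Nonempty := by
  obtain ⟨x, V, hV, hx, rfl⟩ := hc
  exact ⟨x, hV.self_mem hx⟩

/-- projections -/
noncomputable def prj (c : Finset (PSigmaAut n)) (i : Fin n) : Finset (Fin n → ℤ) :=
  c.image fun x => chi x i

lemma mem_prj {c : Finset (PSigmaAut n)} {x : PSigmaAut n} (hx : x ∈ c) (i : Fin n) :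
    chi x i ∈ prj c i := mem_image_of_mem _ hx

lemma prj_mono {c d : Finset (PSigmaAut n)} (h : c ⊆ d) (i : Fin n) : prj c i ⊆ prj d i :=
  image_subset_image h

lemma Good.prj {V : Vx n} (h : Good V) {g : PSigmaAut n} (hg : chi g ∈ Fintype.piFinset V)
    (i : Fin n) : prj (cell g V) i = V i := by
  ext u
  rw [_root_.prj, mem_image]
  constructor
  · rintro ⟨x, hx, rfl⟩
    exact Fintype.mem_piFinset.1 ((h.mem_cell hg).1 hx).1 i
  · intro hu
    have hv : Function.update (chi g) i u ∈ Fintype.piFinset V := by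
      rw [Fintype.mem_piFinset] at *
      intro j
      by_cases hj : j = i
      · subst hj; simpa using hu
      · simpa [hj] using hg j
    refine ⟨_, mem_image_of_mem _ hv, ?_⟩
    rw [h.chi_mem hg hv]; simp

lemma IsCell.good {c : Finset (PSigmaAut n)} (hc : IsCell c) : Good (prj c) := by
  obtain ⟨g, V, hV, hg, rfl⟩ := hc
  have : _root_.prj (cell g V) = V := funext fun i => hV.prj hg i
  rwa [this]

lemma IsCell.eq_cell {c : Finset (PSigmaAut n)} (hc : IsCell c) {g : PSigmaAut n} (hg : g ∈ c) :
    c = cell g (prj c) := by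
  obtain ⟨V, hV, hg', rfl⟩ := hc.at hg
  have : prj (cell g V) = V := funext fun i => hV.prj hg' i
  rw [this]

lemma chi_mem_prj {c : Finset (PSigmaAut n)} {g : PSigmaAut n} (hg : g ∈ c) :
    chi g ∈ Fintype.piFinset (prj c) := by
  rw [Fintype.mem_piFinset]; exact fun i => mem_prj hg i

lemma IsCell.mem_iff {c : Finset (PSigmaAut n)} (hc : IsCell c) {g : PSigmaAut n} (hg : g ∈ c)
    {x : PSigmaAut n} : x ∈ c ↔ (∀ i, chi x i ∈ prj c i) ∧ x = g * Sm (chi x - chi g) := by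
  have := hc.good.mem_cell (chi_mem_prj hg) (x := x)
  rw [← hc.eq_cell hg, Fintype.mem_piFinset] at this
  exact this

lemma IsCell.inj {c : Finset (PSigmaAut n)} (hc : IsCell c) {x y : PSigmaAut n} (hx : x ∈ c)
    (hy : y ∈ c) (h : chi x = chi y) : x = y := by
  have := ((hc.mem_iff hx).1 hy).2
  rw [h, sub_self, Sm_zero, mul_one] at this
  exact this.symm

lemma IsCell.full {c : Finset (PSigmaAut n)} (hc : IsCell c) {v : Fin n → Fin n → ℤ}
    (hv : ∀ i, v i ∈ prj c i) : ∃ y ∈ c, chi y = v := by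
  obtain ⟨g, hg⟩ := hc.nonempty
  have hv' : v ∈ Fintype.piFinset (prj c) := by rwa [Fintype.mem_piFinset]
  have h1 := hc.good.chi_mem (chi_mem_prj hg) hv'
  refine ⟨g * Sm (v - chi g), ?_, h1⟩
  rw [hc.eq_cell hg]
  exact mem_image_of_mem _ hv'

lemma IsCell.filter {c : Finset (PSigmaAut n)} (hc : IsCell c) (W : Vx n)
    {h : PSigmaAut n} (hh : h ∈ c) (hW : ∀ i, chi h i ∈ W i) :
    IsCell (c.filter fun x => ∀ i, chi x i ∈ W i) := by
  have hG : Good (fun i => prj c i ∩ W i) := hc.good.mono fun i => inter_subset_left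
  have hm : chi h ∈ Fintype.piFinset (fun i => prj c i ∩ W i) := by
    rw [Fintype.mem_piFinset]; exact fun i => mem_inter.2 ⟨mem_prj hh i, hW i⟩
  refine ⟨h, _, hG, hm, ?_⟩
  ext x
  rw [hG.mem_cell hm, mem_filter, hc.mem_iff hh, Fintype.mem_piFinset]
  simp only [mem_inter, forall_and]
  tauto

/-- if `g` and a subcell `F` lie in a cell and coordinates of `g` occur in `F` then `g ∈ F`. -/
lemma IsCell.mem_of_prj {c F : Finset (PSigmaAut n)} (hc : IsCell c) (hF : IsCell F) (hFc : F ⊆ c)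
    {g : PSigmaAut n} (hg : g ∈ c) (h : ∀ i, chi g i ∈ prj F i) : g ∈ F := by
  obtain ⟨y, hy, e⟩ := hF.full h
  rwa [← hc.inj (hFc hy) hg e]

lemma isCell_singleton (g : PSigmaAut n) : IsCell {g} := by
  have hG : Good (fun i => {chi g i} : Vx n) := by
    constructor
    · intro i u hu v hv
      rw [mem_singleton] at hu hv
      subst hu; subst hv
      exact ⟨true, ∅, by funext; simp⟩
    · intro i u hu
      rw [mem_singleton] at hu; subst hu; exact chi_self _ _
    · intro i j _ u hu u' hu' v _ v' _
      rw [mem_singleton] at hu hu'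
      subst hu; subst hu'
      left; intro b; simp
  have hm : chi g ∈ Fintype.piFinset (fun i => {chi g i} : Vx n) := by
    rw [Fintype.mem_piFinset]; simp
  refine ⟨g, _, hG, hm, ?_⟩
  ext x
  rw [hG.mem_cell hm, Fintype.mem_piFinset, mem_singleton]
  simp only [mem_singleton]
  constructor
  · rintro rfl; simp [Sm_zero]
  · rintro ⟨h1, h2⟩
    rw [show chi x = chi g from funext h1, sub_self, Sm_zero, mul_one] at h2
    exact h2

lemma IsCell.smul {c : Finset (PSigmaAut n)} (hc : IsCell c) (γ : PSigmaAut n) :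
    IsCell (c.image (γ * ·)) := by
  obtain ⟨g, V, hV, hg, rfl⟩ := hc
  have hmem : ∀ (i : Fin n) (u : Fin n → ℤ), u ∈ (V i).image (chi γ i + ·) ↔ ∃ a ∈ V i, chi γ i + a = u := by
    intro i u; rw [mem_image]
  rw [Fintype.mem_piFinset] at hg
  refine ⟨γ * g, fun i => (V i).image (chi γ i + ·), ⟨?_, ?_, ?_⟩, ?_, ?_⟩
  · intro i u hu v hv
    obtain ⟨a, ha, rfl⟩ := (hmem i u).1 hu
    obtain ⟨b, hb, rfl⟩ := (hmem i v).1 hv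
    rw [add_sub_add_left_eq_sub]; exact hV.unit i a ha b hb
  · intro i u hu
    obtain ⟨a, ha, rfl⟩ := (hmem i u).1 hu
    rw [Pi.add_apply, chi_self, hV.zd i a ha]; rfl
  · intro i j hij u hu u' hu' v hv v' hv'
    obtain ⟨a, ha, rfl⟩ := (hmem i u).1 hu
    obtain ⟨b, hb, rfl⟩ := (hmem i u').1 hu'
    obtain ⟨a', ha', rfl⟩ := (hmem j v).1 hv
    obtain ⟨b', hb', rfl⟩ := (hmem j v').1 hv'
    rw [add_sub_add_left_eq_sub, add_sub_add_left_eq_sub]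
    exact hV.cm i j hij a ha b hb a' ha' b' hb'
  · rw [Fintype.mem_piFinset, chi_mul]
    intro i
    exact (hmem _ _).2 ⟨_, hg i, rfl⟩
  · ext x
    simp only [cell]
    rw [mem_image, mem_image]
    constructor
    · rintro ⟨y, hy, rfl⟩
      rw [mem_image] at hy
      obtain ⟨v, hv, rfl⟩ := hy
      rw [Fintype.mem_piFinset] at hv
      refine ⟨chi γ + v, ?_, ?_⟩
      · rw [Fintype.mem_piFinset]; intro i; exact (hmem _ _).2 ⟨_, hv i, rfl⟩
      · rw [chi_mul, add_sub_add_left_eq_sub, mul_assoc]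
    · rintro ⟨v, hv, rfl⟩
      rw [Fintype.mem_piFinset] at hv
      refine ⟨g * Sm ((v - chi γ) - chi g), mem_image_of_mem _ ?_, ?_⟩
      · rw [Fintype.mem_piFinset]; intro i
        obtain ⟨a, ha, e⟩ := (hmem _ _).1 (hv i)
        rw [Pi.sub_apply, ← e, add_sub_cancel_left]; exact ha
      · simp only [chi_mul, ← mul_assoc]
        rw [sub_sub]

/-- change of norm -/
noncomputable def rT (g : PSigmaAut n) (i : Fin n) (u : Fin n → ℤ) : Lex (ℕ → ℤ) :=
  LV fun y => (ct i (sH i u ((g⁻¹).1 y)) : ℤ) - ct i ((g⁻¹).1 y)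

lemma rT_zero (g : PSigmaAut n) (i : Fin n) : rT g i 0 = 0 := by
  rw [rT, ← LV_zero]; congr 1; funext y; rw [sH_zero]; simp

lemma rT_uv (g : PSigmaAut n) {a : CT n} (ha : a.1 ∉ a.2.2) : rT g a.1 (uv a) = rho g a := by
  rw [rT, rho]; congr 1; funext y; rw [cy_eq ha]

lemma LV_sum {ι : Type*} (s : Finset ι) (F : ι → FG n → ℤ) : LV (∑ i ∈ s, F i) = ∑ i ∈ s, LV (F i) := by
  induction s using Finset.induction_on with
  | empty => simp [LV_zero]
  | insert a s ha ih => rw [sum_insert ha, sum_insert ha, LV_add, ih]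

lemma IsCell.NN_eq {c : Finset (PSigmaAut n)} (hc : IsCell c) {g h : PSigmaAut n} (hg : g ∈ c)
    (hh : h ∈ c) : NN h = NN g + ∑ i, rT g i (chi g i - chi h i) := by
  have hG := hc.good
  have e : h⁻¹ = Sm (chi g - chi h) * g⁻¹ := by
    have := ((hc.mem_iff hh).1 hg).2
    rw [eq_mul_inv_iff_mul_eq, inv_mul_eq_iff_eq_mul]; exact this
  have key := norm_SL (δ := chi g - chi h) (fun i => hG.unit i _ (mem_prj hg i) _ (mem_prj hh i))
    (fun i => by simp [chi_self]) (fun i j hij => hG.commute hij (mem_prj hg i) (mem_prj hh i)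
      (mem_prj hg j) (mem_prj hh j)) (List.finRange n) (List.nodup_finRange n)
  rw [NN, NN]
  have e2 : (fun y => (norm ((h⁻¹).1 y) : ℤ)) = (fun y => (norm ((g⁻¹).1 y) : ℤ)) +
      ∑ i, (fun y => (ct i (sH i (chi g i - chi h i) ((g⁻¹).1 y)) : ℤ) - ct i ((g⁻¹).1 y)) := by
    funext y
    have : (h⁻¹).1 y = (SL (chi g - chi h) (List.finRange n)).1 ((g⁻¹).1 y) := by rw [e]; rfl
    rw [this, (key _).2, Pi.add_apply, Finset.sum_apply, ← List.ofFn_eq_map, List.sum_ofFn]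
    rfl
  rw [e2, LV_add, LV_sum]
  rfl

end Cells2

section Cells3
set_option linter.unusedSectionVars false
open Finset FreeGroup
open scoped Classical

variable {n : ℕ}

/-- nontrivial valid cuts -/
def VC (a : CT n) : Prop := a.1 ∉ a.2.2 ∧ a.2.2.Nonempty

lemma sgn_ne (ε : Bool) : sgn ε ≠ 0 := by cases ε <;> simp [sgn]

lemma uv_ne {a : CT n} {k : Fin n} : uv a k ≠ 0 ↔ k ∈ a.2.2 := by
  unfold uv; split_ifs with h <;> simp [h, sgn_ne]

lemma uv_unit (a : CT n) : UnitV (uv a) := ⟨a.2.1, a.2.2, rfl⟩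

lemma uv_zd {a : CT n} (ha : a.1 ∉ a.2.2) : uv a a.1 = 0 := by simp [uv, ha]

lemma VC.uv_ne_zero {a : CT n} (ha : VC a) : uv a ≠ 0 := by
  obtain ⟨k, hk⟩ := ha.2
  intro h
  exact uv_ne.2 hk (by rw [h]; rfl)

lemma uv_inj {a b : CT n} (ha : VC a) (h1 : a.1 = b.1) (h : uv a = uv b) : a = b := by
  have h2 : a.2.2 = b.2.2 := by
    ext k; rw [← uv_ne, ← uv_ne, h]
  obtain ⟨k, hk⟩ := ha.2
  have h3 : a.2.1 = b.2.1 := by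
    have := congrFun h k
    unfold uv at this
    rw [if_pos hk, if_pos (h2 ▸ hk)] at this
    revert this
    cases a.2.1 <;> cases b.2.1 <;> simp [sgn]
  exact Prod.ext h1 (Prod.ext h3 h2)

lemma unit_exists {u : Fin n → ℤ} (hu : UnitV u) {i : Fin n} (hi : u i = 0) (h0 : u ≠ 0) :
    ∃ a : CT n, VC a ∧ a.1 = i ∧ uv a = u := by
  obtain ⟨ε, B, rfl⟩ := hu
  refine ⟨(i, ε, B), ⟨?_, ?_⟩, rfl, rfl⟩
  · intro h
    have : i ∈ B := h
    simp [this, sgn_ne] at hi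
  · by_contra h
    rw [not_nonempty_iff_eq_empty] at h
    have h : B = ∅ := h
    apply h0; funext b; simp [h]

lemma Cs_sub_iff {a b : CT n} (hb : b.1 ∉ b.2.2) (h : a.1 ≠ b.1) :
    Cs a ⊆ Cs b ↔ a.1 ∈ b.2.2 ∧ a.2.2 ⊆ b.2.2 := by
  obtain ⟨i, ε, A⟩ := a
  obtain ⟨j, ε', B⟩ := b
  simp only at *
  constructor
  · intro hs
    refine ⟨?_, fun k hk => ?_⟩
    · have := hs ((mem_Cs (i, ε, A) (i, ε)).2 (by simp))
      rw [mem_Cs] at this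
      simpa [h] using this
    · have h1 := hs ((mem_Cs (i, ε, A) (k, true)).2 (by simp [hk]))
      have h2 := hs ((mem_Cs (i, ε, A) (k, false)).2 (by simp [hk]))
      rw [mem_Cs] at h1 h2
      simp only [Prod.mk.injEq] at h1 h2
      grind
  · rintro ⟨h1, h2⟩ ⟨k, s⟩ hk
    rw [mem_Cs] at *
    simp only [Prod.mk.injEq] at *
    grind

lemma Cs_disj_iff {a b : CT n} (h : a.1 ≠ b.1) :
    Disjoint (Cs a) (Cs b) ↔ b.1 ∉ a.2.2 ∧ a.1 ∉ b.2.2 ∧ ∀ k ∈ a.2.2, k ∉ b.2.2 := by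
  obtain ⟨i, ε, A⟩ := a
  obtain ⟨j, ε', B⟩ := b
  simp only [disjoint_left, mem_Cs, Prod.forall, Prod.mk.injEq] at *
  constructor
  · intro hs
    refine ⟨fun hj => hs j ε' (Or.inl hj) (Or.inr ⟨rfl, rfl⟩),
      fun hi => hs i ε (Or.inr ⟨rfl, rfl⟩) (Or.inl hi), fun k hk hk' => hs k ε (Or.inl hk) (Or.inl hk')⟩
  · rintro ⟨h1, h2, h3⟩ k s hk hk'
    grind

lemma cmpC_iff_Cm {a b : CT n} (ha : VC a) (hb : VC b) (h : a.1 ≠ b.1) :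
    cmpC a b ↔ Cm a.1 (uv a) b.1 (uv b) := by
  unfold cmpC Cm Cmp
  rw [Cs_sub_iff hb.1 h, Cs_sub_iff ha.1 h.symm, Cs_disj_iff h]
  simp only [uv_ne]
  obtain ⟨k, hk⟩ := ha.2
  obtain ⟨l, hl⟩ := hb.2
  constructor
  · rintro (⟨h1, h2⟩ | ⟨h1, h2⟩ | ⟨h1, h2, h3⟩)
    · exact Or.inr (Or.inr (Or.inr (Or.inr ⟨h1, h2⟩)))
    · exact Or.inr (Or.inr (Or.inr (Or.inl ⟨h1, h2⟩)))
    · exact Or.inr (Or.inr (Or.inl ⟨h1, h2, h3⟩))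
  · rintro (h1 | h1 | ⟨h1, h2, h3⟩ | ⟨h1, h2⟩ | ⟨h1, h2⟩)
    · exact absurd hk (h1 k)
    · exact absurd hl (h1 l)
    · exact Or.inr (Or.inr ⟨h1, h2, h3⟩)
    · exact Or.inr (Or.inl ⟨h1, h2⟩)
    · exact Or.inl ⟨h1, h2⟩

lemma cmpC_same_sgn {i : Fin n} {ε : Bool} {A B : Finset (Fin n)} (hA : i ∉ A) (hB : i ∉ B) :
    cmpC (i, ε, A) (i, ε, B) ↔ A ⊆ B ∨ B ⊆ A := by
  have key : ∀ A B : Finset (Fin n), i ∉ A → i ∉ B → (Cs (i, ε, A) ⊆ Cs (i, ε, B) ↔ A ⊆ B) := by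
    intro A B hA hB
    constructor
    · intro h k hk
      have := h ((mem_Cs (i, ε, A) (k, ε)).2 (Or.inl hk))
      rw [mem_Cs] at this
      simp only [Prod.mk.injEq] at this
      rcases this with h | h
      · exact h
      · exact absurd hk (h.1 ▸ hA)
    · intro h l hl
      rw [mem_Cs] at *
      exact hl.imp (fun h' => h h') id
  unfold cmpC
  rw [key A B hA hB, key B A hB hA]
  have : ¬ Disjoint (Cs (i, ε, A)) (Cs (i, ε, B)) := by
    rw [not_disjoint_iff]
    exact ⟨(i, ε), by simp [mem_Cs], by simp [mem_Cs]⟩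
  tauto

lemma cmpC_opp_sgn {i : Fin n} {ε : Bool} {A B : Finset (Fin n)} (hA : i ∉ A) (hB : i ∉ B) :
    cmpC (i, ε, A) (i, !ε, B) ↔ Disjoint A B := by
  unfold cmpC
  have h1 : ¬ Cs (i, ε, A) ⊆ Cs (i, !ε, B) := by
    intro h
    have := h ((mem_Cs (i, ε, A) (i, ε)).2 (by simp))
    rw [mem_Cs] at this
    simp [hB] at this
  have h2 : ¬ Cs (i, !ε, B) ⊆ Cs (i, ε, A) := by
    intro h
    have := h ((mem_Cs (i, !ε, B) (i, !ε)).2 (by simp))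
    rw [mem_Cs] at this
    simp [hA] at this
  simp only [h1, h2, false_or, disjoint_left, mem_Cs, Prod.forall, Prod.mk.injEq]
  constructor
  · intro h k hk hk'; exact h k ε (Or.inl hk) (Or.inl hk')
  · intro h k s hk hk'
    rcases hk with hk | ⟨rfl, rfl⟩
    · rcases hk' with hk' | ⟨rfl, rfl⟩
      · exact h hk hk'
      · exact hA hk
    · rcases hk' with hk' | ⟨-, h⟩
      · exact hB hk'
      · cases s <;> simp at h

lemma cmpC_iff_unit {a b : CT n} (ha : a.1 ∉ a.2.2) (hb : b.1 ∉ b.2.2) (h : a.1 = b.1) :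
    cmpC a b ↔ UnitV (uv a - uv b) := by
  obtain ⟨i, ε, A⟩ := a
  obtain ⟨j, ε', B⟩ := b
  simp only at *
  subst h
  by_cases he : ε' = ε
  · subst he
    rw [cmpC_same_sgn ha hb]
    constructor
    · rintro (h | h)
      · refine ⟨!ε', B \ A, ?_⟩
        funext k
        have := @h k
        by_cases h1 : k ∈ A <;> by_cases h2 : k ∈ B <;> cases ε' <;> simp_all [uv, sgn]
      · refine ⟨ε', A \ B, ?_⟩
        funext k
        have := @h k
        by_cases h1 : k ∈ A <;> by_cases h2 : k ∈ B <;> simp_all [uv]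
    · intro h
      by_contra hne
      rw [not_or, not_subset, not_subset] at hne
      obtain ⟨⟨k, hk, hk'⟩, ⟨l, hl, hl'⟩⟩ := hne
      have := h.same (b := k) (c := l) (by simp [uv, hk, hk', sgn_ne]) (by simp [uv, hl, hl', sgn_ne])
      simp only [Pi.sub_apply, uv, hk, hk', hl, hl', if_true, if_false] at this
      cases ε' <;> simp [sgn] at this <;> omega
  · have he : ε' = !ε := by cases ε <;> cases ε' <;> simp_all
    subst he
    rw [cmpC_opp_sgn ha hb]
    constructor
    · intro h
      refine ⟨ε, A ∪ B, ?_⟩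
      funext k
      have hh : k ∈ A → k ∉ B := fun h1 => disjoint_left.1 h h1
      clear h
      by_cases h1 : k ∈ A <;> by_cases h2 : k ∈ B <;> cases ε <;> simp_all [uv, sgn]
    · intro h
      rw [disjoint_left]
      intro k hk hk'
      have := h.bd k
      simp only [Pi.sub_apply, uv, hk, hk', if_true] at this
      cases ε <;> simp [sgn] at this

/-- box of a family of cuts at `g` -/
noncomputable def Vs (g : PSigmaAut n) (σ : Finset (CT n)) : Vx n :=
  fun i => (insert 0 ((σ.filter (·.1 = i)).image uv)).image (fun t => chi g i - t)

/-- cell of a family of cuts at `g` -/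
noncomputable def box (g : PSigmaAut n) (σ : Finset (CT n)) : Finset (PSigmaAut n) := cell g (Vs g σ)

/-- laminar families -/
def LamF (σ : Finset (CT n)) : Prop := (∀ a ∈ σ, VC a) ∧ ∀ a ∈ σ, ∀ b ∈ σ, cmpC a b

lemma mem_Vs {g : PSigmaAut n} {σ : Finset (CT n)} {i : Fin n} {v : Fin n → ℤ} :
    v ∈ Vs g σ i ↔ ∃ t, (t = 0 ∨ ∃ a ∈ σ, a.1 = i ∧ uv a = t) ∧ chi g i - t = v := by
  simp only [Vs, mem_image, mem_insert, mem_filter, and_assoc]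

lemma Vs_self (g : PSigmaAut n) (σ : Finset (CT n)) : chi g ∈ Fintype.piFinset (Vs g σ) := by
  rw [Fintype.mem_piFinset]; intro i
  exact mem_Vs.2 ⟨0, Or.inl rfl, by simp⟩

lemma unit_zero : UnitV (0 : Fin n → ℤ) := ⟨true, ∅, by funext; simp⟩

lemma Vs_good (g : PSigmaAut n) {σ : Finset (CT n)} (hσ : LamF σ) : Good (Vs g σ) := by
  have A : ∀ i t, (t = 0 ∨ ∃ a ∈ σ, a.1 = i ∧ uv a = t) → UnitV t ∧ t i = 0 := by
    rintro i t (rfl | ⟨a, ha, rfl, rfl⟩)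
    · exact ⟨unit_zero, rfl⟩
    · exact ⟨uv_unit a, uv_zd (hσ.1 a ha).1⟩
  have B : ∀ i t t', (t = 0 ∨ ∃ a ∈ σ, a.1 = i ∧ uv a = t) → (t' = 0 ∨ ∃ a ∈ σ, a.1 = i ∧ uv a = t') →
      UnitV (t - t') := by
    intro i t t' ht ht'
    have hu := (A i t ht).1
    have hu' := (A i t' ht').1
    rcases ht with rfl | ⟨a, ha, e, rfl⟩
    · rw [zero_sub]; exact hu'.neg
    · rcases ht' with rfl | ⟨b, hb, e', rfl⟩
      · rw [sub_zero]; exact hu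
      · exact (cmpC_iff_unit (hσ.1 a ha).1 (hσ.1 b hb).1 (e.trans e'.symm)).1 (hσ.2 a ha b hb)
  have C : ∀ i j t s, i ≠ j → (t = 0 ∨ ∃ a ∈ σ, a.1 = i ∧ uv a = t) →
      (s = 0 ∨ ∃ a ∈ σ, a.1 = j ∧ uv a = s) → Cm i t j s := by
    rintro i j t s hij (rfl | ⟨a, ha, rfl, rfl⟩) hs
    · left; simp
    · rcases hs with rfl | ⟨b, hb, rfl, rfl⟩
      · right; left; simp
      · exact (cmpC_iff_Cm (hσ.1 a ha) (hσ.1 b hb) hij).1 (hσ.2 a ha b hb)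
  constructor
  · intro i u hu v hv
    obtain ⟨t, ht, rfl⟩ := mem_Vs.1 hu
    obtain ⟨s, hs, rfl⟩ := mem_Vs.1 hv
    rw [sub_sub_sub_cancel_left]
    exact B i s t hs ht
  · intro i u hu
    obtain ⟨t, ht, rfl⟩ := mem_Vs.1 hu
    rw [Pi.sub_apply, chi_self, (A i t ht).2, sub_zero]
  · intro i j hij u hu u' hu' v hv v' hv'
    obtain ⟨t, ht, rfl⟩ := mem_Vs.1 hu
    obtain ⟨t', ht', rfl⟩ := mem_Vs.1 hu'
    obtain ⟨s, hs, rfl⟩ := mem_Vs.1 hv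
    obtain ⟨s', hs', rfl⟩ := mem_Vs.1 hv'
    rw [sub_sub_sub_cancel_left, sub_sub_sub_cancel_left]
    have D : ∀ s, (s = 0 ∨ ∃ a ∈ σ, a.1 = j ∧ uv a = s) → Cm i (t' - t) j s := fun s hs =>
      Cm_sub (C i j t' s hij ht' hs) (C i j t s hij ht hs) (A i t' ht').1 (A i t ht).1
        (B i t' t ht' ht) (A i t' ht').2 (A i t ht).2
    exact Cm_symm (Cm_sub (Cm_symm (D s' hs')) (Cm_symm (D s hs)) (A j s' hs').1 (A j s hs).1
      (B j s' s hs' hs) (A j s' hs').2 (A j s hs).2)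

lemma box_cell (g : PSigmaAut n) {σ : Finset (CT n)} (hσ : LamF σ) : IsCell (box g σ) :=
  ⟨g, _, Vs_good g hσ, Vs_self g σ, rfl⟩

lemma box_self (g : PSigmaAut n) {σ : Finset (CT n)} (hσ : LamF σ) : g ∈ box g σ :=
  (Vs_good g hσ).self_mem (Vs_self g σ)

lemma box_prj (g : PSigmaAut n) {σ : Finset (CT n)} (hσ : LamF σ) : prj (box g σ) = Vs g σ :=
  funext fun i => (Vs_good g hσ).prj (Vs_self g σ) i

lemma box_mono (g : PSigmaAut n) {σ τ : Finset (CT n)} (h : σ ⊆ τ) : box g σ ⊆ box g τ := by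
  apply image_subset_image
  apply Fintype.piFinset_subset
  intro i v hv
  obtain ⟨t, ht, e⟩ := mem_Vs.1 hv
  refine mem_Vs.2 ⟨t, ht.imp id ?_, e⟩
  rintro ⟨a, ha, h'⟩
  exact ⟨a, h ha, h'⟩

/-- cuts of a cell at `g` -/
noncomputable def sgm (g : PSigmaAut n) (c : Finset (PSigmaAut n)) : Finset (CT n) :=
  univ.filter fun a => VC a ∧ chi g a.1 - uv a ∈ prj c a.1

lemma mem_sgm {g : PSigmaAut n} {c : Finset (PSigmaAut n)} {a : CT n} :
    a ∈ sgm g c ↔ VC a ∧ chi g a.1 - uv a ∈ prj c a.1 := by simp [sgm]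

lemma sgm_mono (g : PSigmaAut n) {c d : Finset (PSigmaAut n)} (h : c ⊆ d) : sgm g c ⊆ sgm g d := by
  intro a ha
  rw [mem_sgm] at *
  exact ⟨ha.1, prj_mono h _ ha.2⟩

lemma sgm_box (g : PSigmaAut n) {σ : Finset (CT n)} (hσ : LamF σ) : sgm g (box g σ) = σ := by
  ext a
  rw [mem_sgm, box_prj g hσ, mem_Vs]
  constructor
  · rintro ⟨ha, t, ht, e⟩
    have e : t = uv a := sub_right_injective e
    rcases ht with rfl | ⟨b, hb, h1, rfl⟩
    · exact absurd e.symm ha.uv_ne_zero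
    · rwa [← uv_inj (hσ.1 b hb) h1 e]
  · intro ha
    exact ⟨hσ.1 a ha, uv a, Or.inr ⟨a, ha, rfl, rfl⟩, rfl⟩

lemma sgm_lam {g : PSigmaAut n} {c : Finset (PSigmaAut n)} (hc : IsCell c) (hg : g ∈ c) :
    LamF (sgm g c) := by
  refine ⟨fun a ha => (mem_sgm.1 ha).1, fun a ha b hb => ?_⟩
  rw [mem_sgm] at ha hb
  have hG := hc.good
  by_cases h : a.1 = b.1
  · rw [cmpC_iff_unit ha.1.1 hb.1.1 h]
    have := hG.unit b.1 _ hb.2 _ (h ▸ ha.2)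
    rwa [sub_sub_sub_cancel_left] at this
  · rw [cmpC_iff_Cm ha.1 hb.1 h]
    have := hG.cm a.1 b.1 h _ (mem_prj hg _) _ ha.2 _ (mem_prj hg _) _ hb.2
    rwa [sub_sub_cancel, sub_sub_cancel] at this

lemma box_sgm {g : PSigmaAut n} {c : Finset (PSigmaAut n)} (hc : IsCell c) (hg : g ∈ c) :
    box g (sgm g c) = c := by
  have : Vs g (sgm g c) = prj c := by
    funext i
    ext v
    rw [mem_Vs]
    constructor
    · rintro ⟨t, rfl | ⟨a, ha, rfl, rfl⟩, rfl⟩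
      · rw [sub_zero]; exact mem_prj hg i
      · exact (mem_sgm.1 ha).2
    · intro hv
      by_cases h : chi g i = v
      · exact ⟨0, Or.inl rfl, by rw [sub_zero, h]⟩
      · obtain ⟨a, ha, rfl, e⟩ := unit_exists (hc.good.unit i _ (mem_prj hg i) v hv) (i := i)
          (by rw [Pi.sub_apply, hc.good.zd i _ (mem_prj hg i), hc.good.zd i _ hv]; rfl) (sub_ne_zero.2 h)
        refine ⟨uv a, Or.inr ⟨a, ?_, rfl, rfl⟩, by rw [e, sub_sub_cancel]⟩
        rw [mem_sgm, e, sub_sub_cancel]; exact ⟨ha, hv⟩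
  show cell g (Vs g (sgm g c)) = c
  rw [this, ← hc.eq_cell hg]

end Cells3

section P5a
set_option linter.unusedSectionVars false
open Finset FreeGroup
open scoped Classical
variable {n : ℕ}

lemma LV_inj {F G : FG n → ℤ} (h : LV F = LV G) : F = G := by
  funext y
  obtain ⟨k, rfl⟩ := enumF_surj n y
  have := congrFun (congrArg ofLex h) (k + 1)
  simpa [LV] using this

lemma norm_one_eq {y : FG n} {j : Fin n} (h1 : norm y = 1) (h2 : ex j y = 1) : y = of j := by
  have h3 : y.toWord.length = 1 := h1
  obtain ⟨l, hl⟩ := List.length_eq_one_iff.1 h3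
  have h4 : y = of l.1 ^ sgn l.2 := by
    rw [← mk_toWord (x := y), hl, mkc_cons]
    exact mul_one _
  rw [h4, ex_zpow, ex_of] at h2
  rw [h4]
  by_cases hj : l.1 = j
  · rw [if_pos hj] at h2
    rw [show sgn l.2 = 1 by simpa using h2, hj]; simp
  · rw [if_neg hj] at h2; simp at h2

lemma NN_inj {g h : PSigmaAut n} (e : NN g = NN h) : g = h := by
  have h1 := LV_inj e
  have h2 : ∀ y, norm ((g⁻¹).1 y) = norm ((h⁻¹).1 y) := fun y => by
    have := congrFun h1 y
    simpa using this
  have : g⁻¹ * h = 1 := by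
    apply aut_ext
    intro b
    have h3 := h2 (h.1 (of b))
    have e1 : (g⁻¹ * h).1 (of b) = (g⁻¹).1 (h.1 (of b)) := rfl
    have e2 : (h⁻¹).1 (h.1 (of b)) = of b := by
      have : (h⁻¹ * h).1 (of b) = of b := by rw [inv_mul_cancel]; rfl
      exact this
    rw [e2, norm_of] at h3
    show _ = of b
    apply norm_one_eq
    · rw [e1, h3]
    · rw [ex_aut, ex_of]; simp
  exact (inv_mul_eq_one.1 this)

lemma lex_le_zero {a b : Lex (ℕ → ℤ)} (h : a ≤ b) : ofLex a 0 ≤ ofLex b 0 := by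
  rcases h.eq_or_lt with h | h
  · rw [h]
  · obtain ⟨i, h1, h2⟩ := h
    rcases Nat.eq_zero_or_pos i with hi | hi
    · subst hi; exact h2.le
    · exact (h1 0 hi).le

lemma NN_fin (g : PSigmaAut n) : {h : PSigmaAut n | NN h ≤ NN g}.Finite := by
  obtain ⟨N, hN⟩ : ∃ N : ℕ, ofLex (NN g) 0 ≤ N := ⟨_, Int.self_le_toNat _⟩
  have hfin : {y : FG n | norm y ≤ N}.Finite := by
    apply Set.Finite.of_finite_image (f := toWord)
    · refine (List.finite_length_le (Fin n × Bool) N).subset ?_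
      rintro _ ⟨y, hy, rfl⟩; exact hy
    · exact fun _ _ _ _ h => toWord_injective h
  have h2 : (Set.pi Set.univ fun _ : Fin n => {y : FG n | norm y ≤ N}).Finite := Set.Finite.pi fun _ => hfin
  apply Set.Finite.of_finite_image (f := fun (h : PSigmaAut n) (j : Fin n) => (h⁻¹).1 (of j))
  · refine h2.subset ?_
    rintro _ ⟨h, hh, rfl⟩ j -
    have h3 := (lex_le_zero hh).trans hN
    have h4 : ofLex (NN h) 0 = ∑ j, (norm ((h⁻¹).1 (of j)) : ℤ) := by simp [NN, LV]
    rw [h4] at h3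
    have h5 := Finset.single_le_sum (f := fun j => (norm ((h⁻¹).1 (of j)) : ℤ)) (fun i _ => by positivity) (mem_univ j)
    have h6 := h5.trans h3
    exact_mod_cast h6
  · intro a _ b _ e
    have : a⁻¹ = b⁻¹ := aut_ext fun j => congrFun e j
    exact inv_injective this

/-- The word does not end in a letter of index `i`. -/
def NE (i : Fin n) (U : List (Fin n × Bool)) : Prop := ∀ V δ, U ≠ V ++ [(i, δ)]

lemma toWord_ap {i : Fin n} {u z : FG n} (hu : NE i u.toWord) {δ : Bool} {Z : List (Fin n × Bool)}
    (hz : z.toWord = (i, δ) :: Z) : (u * z).toWord = u.toWord ++ z.toWord := by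
  have h : FreeGroup.IsReduced (u.toWord ++ z.toWord) := by
    rcases List.eq_nil_or_concat u.toWord with h | ⟨V, l, h⟩
    · rw [h]; exact isReduced_toWord
    · have h1 := isReduced_toWord (x := u)
      have h2 := isReduced_toWord (x := z)
      rw [hz] at h2 ⊢
      rw [h] at h1 ⊢
      unfold FreeGroup.IsReduced at *
      simp only [List.concat_eq_append] at h1 h ⊢
      rw [List.isChain_append] at h1 ⊢
      refine ⟨List.isChain_append.2 h1, h2, ?_⟩
      intro x hx y hy
      simp at hx hy
      subst hx; subst hy
      intro h3
      have h3' : l.1 = i := h3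
      refine absurd ?_ (hu V l.2)
      rw [h, ← h3']
  rw [toWord_mul, h.reduce_eq]

lemma toWord_cons {l : Fin n × Bool} {L : List (Fin n × Bool)} (h : FreeGroup.IsReduced (l :: L)) :
    (mk (l :: L)).toWord = l :: L := by rw [toWord_mk, h.reduce_eq]

lemma lemA {i : Fin n} {u : FG n} (hu : NE i u.toWord) {ε : Bool} {y : FG n}
    (h : ¬ (u.toWord ++ [(i, !ε)] <+: y.toWord)) :
    u.toWord ++ [(i, ε)] <+: (u * of i ^ sgn ε * u⁻¹ * y).toWord := by
  set z := u⁻¹ * y with hz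
  have h1 : ∀ Z, z.toWord ≠ (i, !ε) :: Z := by
    intro Z hZ
    apply h
    have := toWord_ap hu hZ
    rw [show u * z = y by rw [hz]; group, hZ] at this
    exact ⟨Z, by rw [this]; simp⟩
  have h2 : FreeGroup.IsReduced ((i, ε) :: z.toWord) := by
    have h3 := isReduced_toWord (x := z)
    rcases hw : z.toWord with _ | ⟨l, Z⟩
    · simp [FreeGroup.IsReduced]
    · rw [hw] at h3
      unfold FreeGroup.IsReduced at *
      rw [List.isChain_cons_cons]
      refine ⟨fun e => ?_, h3⟩
      by_contra hne
      apply h1 Z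
      rw [hw]
      congr 1
      have e' : i = l.1 := e
      have hne' : ¬ (ε = l.2) := hne
      ext <;> simp [e'] 
      cases ε <;> cases hl : l.2 <;> simp_all
  have h4 : (of i ^ sgn ε * z).toWord = (i, ε) :: z.toWord := by
    rw [← toWord_cons h2, mkc_cons, mk_toWord]
  have h5 := toWord_ap hu h4
  rw [h4, show u * (of i ^ sgn ε * z) = u * of i ^ sgn ε * u⁻¹ * y by rw [hz]; group] at h5
  exact ⟨z.toWord, by rw [h5]; simp⟩

lemma zpow_conj' (u x : FG n) (m : ℤ) : (u * x * u⁻¹) ^ m = u * x ^ m * u⁻¹ := by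
  exact conj_zpow 

lemma lemB {f : PSigmaAut n} {u : Fin n → FG n} (hf : ∀ i, f.1 (of i) = u i * of i * (u i)⁻¹)
    (hu : ∀ i, NE i (u i).toWord)
    (hp : ∀ i j ε, i ≠ j → ¬ ((u i).toWord ++ [(i, ε)] <+: (u j).toWord)) :
    ∀ (w : List (Fin n × Bool)) (i : Fin n) (ε : Bool), FreeGroup.IsReduced ((i, ε) :: w) →
      (u i).toWord ++ [(i, ε)] <+: (f.1 (mk ((i, ε) :: w))).toWord := by
  intro w
  induction w with
  | nil =>
    intro i ε _
    rw [mkc_cons, _root_.map_mul, _root_.map_zpow, hf, conj_zpow]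
    apply lemA (hu i)
    intro h
    have : f.1 (mk ([] : List (Fin n × Bool))) = 1 := _root_.map_one f.1
    rw [this] at h
    simp at h
  | cons l w ih =>
    intro i ε hr
    rw [mkc_cons, _root_.map_mul, _root_.map_zpow, hf, conj_zpow]
    apply lemA (hu i)
    intro h
    obtain ⟨k, δ⟩ := l
    unfold FreeGroup.IsReduced at hr
    rw [List.isChain_cons_cons] at hr
    have h2 := ih k δ hr.2
    have key : ∀ a b α β, (u a).toWord ++ [(a, α)] <+: (u b).toWord ++ [(b, β)] → a = b ∧ α = β := by
      intro a b α β hh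
      rw [List.prefix_concat_iff] at hh
      rcases hh with hh | hh
      · have := List.append_inj' hh rfl
        simpa using this.2
      · by_cases e : a = b
        · subst e
          have := hh.length_le
          simp at this
        · exact absurd hh (hp a b α e)
    rcases List.prefix_or_prefix_of_prefix h h2 with h3 | h3
    · obtain ⟨e1, e2⟩ := key _ _ _ _ h3
      have := hr.1 e1
      simp at this; subst this; cases ε <;> simp at e2
    · obtain ⟨e1, e2⟩ := key _ _ _ _ h3
      have := hr.1 e1.symm
      simp at this; subst this; cases ε <;> simp at e2

lemma lemC {f : PSigmaAut n} {u : Fin n → FG n} (hf : ∀ i, f.1 (of i) = u i * of i * (u i)⁻¹)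
    (hu : ∀ i, NE i (u i).toWord)
    (hp : ∀ i j ε, i ≠ j → ¬ ((u i).toWord ++ [(i, ε)] <+: (u j).toWord)) : f = 1 := by
  apply aut_ext
  intro k
  show _ = of k
  have hk : u k = 1 := by
    have e2 : f.1 ((f⁻¹).1 (of k)) = of k := by
      have : (f * f⁻¹).1 (of k) = of k := by rw [mul_inv_cancel]; rfl
      exact this
    set w := (f⁻¹).1 (of k) with hw
    rcases hW : w.toWord with _ | ⟨⟨i, ε⟩, L⟩
    · rw [toWord_eq_nil_iff] at hW
      rw [hW, _root_.map_one] at e2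
      exact absurd e2.symm (of_ne_one k)
    · have h1 := lemB hf hu hp L i ε (by rw [← hW]; exact isReduced_toWord)
      rw [← hW, mk_toWord, e2, toWord_of] at h1
      have hl := h1.length_le
      simp only [List.length_append, List.length_singleton] at hl
      have hn : (u i) = 1 := by
        rw [← toWord_eq_nil_iff, ← List.length_eq_zero_iff]; omega
      rw [hn] at h1
      simp at h1
      rw [h1.1] at hn; exact hn
  rw [hf, hk]; simp

/-- Minimal conjugator length. -/
noncomputable def ml (f : PSigmaAut n) (j : Fin n) : ℕ :=
  Nat.find (p := fun m => ∃ w, f.1 (of j) = w * of j * w⁻¹ ∧ norm w = m)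
    (let ⟨w, hw⟩ := f.2 j; ⟨_, w, hw, rfl⟩)

lemma ml_spec (f : PSigmaAut n) (j : Fin n) : ∃ w, f.1 (of j) = w * of j * w⁻¹ ∧ norm w = ml f j :=
  Nat.find_spec (p := fun m => ∃ w, f.1 (of j) = w * of j * w⁻¹ ∧ norm w = m) _

lemma ml_le {f : PSigmaAut n} {j : Fin n} {w : FG n} (h : f.1 (of j) = w * of j * w⁻¹) : ml f j ≤ norm w :=
  Nat.find_min' _ ⟨w, h, rfl⟩

/-- The subgroup generated by the elementary automorphisms. -/
def GenS (n : ℕ) : Set (PSigmaAut n) := {s | ∃ i j ε, i ≠ j ∧ s = sP i (uv (i, ε, {j}))}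

lemma gen_aux (N : ℕ) : ∀ f : PSigmaAut n, ∑ j, ml f j ≤ N → f ∈ Subgroup.closure (GenS n) := by
  induction N with
  | zero =>
    intro f hf
    have : f = 1 := by
      apply aut_ext
      intro j
      obtain ⟨w, h1, h2⟩ := ml_spec f j
      have h3 := Finset.single_le_sum (f := fun j => ml f j) (fun i _ => by positivity) (mem_univ j)
      have h4 : norm w = 0 := by rw [h2]; omega
      rw [FreeGroup.norm_eq_zero] at h4
      rw [h1, h4]; simp
    rw [this]; exact one_mem _
  | succ N ih =>
    intro f hf
    choose u hu1 hu2 using ml_spec f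
    have hne : ∀ i, NE i (u i).toWord := by
      intro i V δ hV
      have h1 : u i = mk V * of i ^ sgn δ := by
        rw [← mk_toWord (x := u i), hV, ← mul_mk, mkc_cons (i, δ) []]
        congr 1
        exact mul_one _
      have h2 : f.1 (of i) = mk V * of i * (mk V)⁻¹ := by
        rw [hu1, h1]; group
      have h3 := ml_le h2
      have h4 : norm (u i) = V.length + 1 := by
        show (u i).toWord.length = _; rw [hV]; simp
      have h5 := norm_mk_le (L₁ := V)
      rw [hu2] at h4; omega
    by_cases hp : ∀ i j ε, i ≠ j → ¬ ((u i).toWord ++ [(i, ε)] <+: (u j).toWord)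
    · rw [lemC hu1 hne hp]; exact one_mem _
    · push Not at hp
      obtain ⟨i, j, ε, hij, T, hT⟩ := hp
      have hs : sP i (uv (i, !ε, {j})) ∈ Subgroup.closure (GenS n) :=
        Subgroup.subset_closure ⟨i, j, _, hij, rfl⟩
      have hsg : sgn (!ε) = - sgn ε := by cases ε <;> rfl
      have e0 : ∀ b, (f * sP i (uv (i, !ε, {j}))).1 (of b) = f.1 (sH i (uv (i, !ε, {j})) (of b)) := fun _ => rfl
      suffices h : f * sP i (uv (i, !ε, {j})) ∈ Subgroup.closure (GenS n) from
        (Subgroup.mul_mem_cancel_right _ hs).1 h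
      apply ih
      have hlt : ml (f * sP i (uv (i, !ε, {j}))) j < ml f j := by
        have h1 : (f * sP i (uv (i, !ε, {j}))).1 (of j) =
            (u i * mk T) * of j * (u i * mk T)⁻¹ := by
          have h2 : u j = u i * of i ^ sgn ε * mk T := by
            rw [← mk_toWord (x := u j), ← hT, ← mul_mk, ← mul_mk, mk_toWord, mkc_cons (i, ε) []]
            congr 2
            exact mul_one _
          rw [e0, sH_of]
          simp only [uv, Finset.mem_singleton, if_true, _root_.map_mul, _root_.map_zpow, _root_.map_inv, hu1, hsg, conj_zpow, h2]
          group
        have h3 := ml_le h1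
        have h4 := norm_mul_le (u i) (mk T)
        have h5 := norm_mk_le (L₁ := T)
        have h6 : norm (u j) = norm (u i) + 1 + T.length := by
          show (u j).toWord.length = (u i).toWord.length + 1 + _
          rw [← hT]; simp; omega
        rw [hu2] at h6; omega
      have hle : ∀ b ∈ univ, ml (f * sP i (uv (i, !ε, {j}))) b ≤ ml f b := by
        intro b _
        by_cases hb : b = j
        · subst hb; exact hlt.le
        · rw [← hu2 b]
          apply ml_le
          rw [e0, sH_of]
          simp [uv, hb, hu1]
      have := Finset.sum_lt_sum hle ⟨j, mem_univ j, hlt⟩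
      omega

theorem gen_top : Subgroup.closure (GenS n) = ⊤ := by
  rw [eq_top_iff]; intro f _; exact gen_aux _ f le_rfl
end P5a

section P5b
set_option linter.unusedSectionVars false
open Finset FreeGroup
open scoped Classical
variable {n : ℕ}

lemma both_mem {a : CT n} {j : Fin n} (h1 : (j, true) ∈ Cs a) (h2 : (j, false) ∈ Cs a) : j ∈ a.2.2 := by
  rw [mem_Cs] at h1 h2
  rcases h1 with h1 | h1
  · exact h1
  · rcases h2 with h2 | h2
    · exact h2
    · rw [← h1] at h2; simp at h2

lemma letters_mem {a : CT n} {j : Fin n} (h : j ∈ a.2.2) (ε : Bool) : (j, ε) ∈ Cs a := by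
  rw [mem_Cs]; exact Or.inl h

lemma self_letter (a : CT n) : (a.1, a.2.1) ∈ Cs a := by rw [mem_Cs]; exact Or.inr rfl

lemma B_sub {a b : CT n} (h : Cs a ⊆ Cs b) {j : Fin n} (hj : j ∈ a.2.2) : j ∈ b.2.2 :=
  both_mem (h (letters_mem hj _)) (h (letters_mem hj _))

lemma dim_pick {σ : Finset (CT n)} (hσ : LamF σ) {D : CT n} (hD : D ∈ σ) :
    ∃ j ∈ D.2.2, ∀ E ∈ σ, Cs E ⊂ Cs D → j ∉ E.2.2 := by
  by_contra hcon
  push Not at hcon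
  have hV := hσ.1
  let X := σ.filter fun E => Cs E ⊂ Cs D
  have memX : ∀ E, E ∈ X ↔ E ∈ σ ∧ Cs E ⊂ Cs D := fun E => by simp [X]
  have nest : ∀ {E E'}, E ∈ σ → E' ∈ σ → E.1 ∈ E'.2.2 → Cs E ⊂ Cs E' := by
    intro E E' hE hE' h
    rcases hσ.2 E hE E' hE' with h1 | h1 | h1
    · refine h1.ssubset_of_ne fun e => ?_
      rw [Cs_inj (hV E hE).1 (hV E' hE').1 e] at h
      exact (hV E' hE').1 h
    · exact absurd (B_sub h1 h) (hV E hE).1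
    · exact absurd (letters_mem h _) (Finset.disjoint_left.1 h1 (self_letter E))
  have h1 : ∀ E ∈ X, ∃ F ∈ X, (D.1, D.2.1) ∈ Cs F ∧ Cs E ⊆ Cs F := by
    by_contra hX
    push Not at hX
    let Y := X.filter fun E => ∀ F ∈ X, (D.1, D.2.1) ∈ Cs F → ¬ Cs E ⊆ Cs F
    obtain ⟨E0, hE0, hE0'⟩ := hX
    obtain ⟨E, hE, hmax⟩ := Finset.exists_max_image Y (fun E => (Cs E).card) ⟨E0, Finset.mem_filter.2 ⟨hE0, hE0'⟩⟩
    simp only [Y, Finset.mem_filter] at hE hmax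
    obtain ⟨hEX, hE⟩ := hE
    have hEs := (memX E).1 hEX
    have he : E.1 ≠ D.1 := by
      intro e
      have h2 : (E.1, E.2.1) = (D.1, D.2.1) := by
        have := hEs.2.1 (self_letter E)
        rw [mem_Cs] at this
        rcases this with h | h
        · simp only [e] at h; exact absurd h (hV D hD).1
        · exact h
      exact hE E hEX (h2 ▸ self_letter E) subset_rfl
    have heD : E.1 ∈ D.2.2 := by
      have := hEs.2.1 (self_letter E)
      rw [mem_Cs] at this
      rcases this with h | h
      · exact h
      · exact absurd (congrArg Prod.fst h) he
    obtain ⟨F, hF, hFD, hj⟩ := hcon _ heD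
    have hlt := nest hEs.1 hF hj
    have := hmax F ⟨(memX F).2 ⟨hF, hFD⟩, fun G hG hG' hs => hE G hG hG' (hlt.1.trans hs)⟩
    exact absurd (Finset.card_lt_card hlt) (not_lt.2 this)
  obtain ⟨j0, hj0⟩ := (hV D hD).2
  obtain ⟨E0, hE0, hE0D, -⟩ := hcon j0 hj0
  obtain ⟨F0, hF0, hF0', -⟩ := h1 E0 ((memX _).2 ⟨hE0, hE0D⟩)
  obtain ⟨F, hF, hmax⟩ := Finset.exists_max_image (X.filter fun F => (D.1, D.2.1) ∈ Cs F) (fun E => (Cs E).card)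
    ⟨F0, by simp [hF0, hF0']⟩
  simp only [Finset.mem_filter] at hF hmax
  obtain ⟨hFX, hF⟩ := hF
  have hFs := (memX F).1 hFX
  apply hFs.2.2
  intro l hl
  rw [mem_Cs] at hl
  rcases hl with hl | hl
  · obtain ⟨E, hE, hED, hj⟩ := hcon _ hl
    obtain ⟨G, hG, hG', hs⟩ := h1 E ((memX _).2 ⟨hE, hED⟩)
    have hGF : Cs G ⊆ Cs F := by
      rcases hσ.2 G ((memX G).1 hG).1 F hFs.1 with h | h | h
      · exact h
      · exact (Finset.eq_of_subset_of_card_le h (hmax G ⟨hG, hG'⟩)).superset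
      · exact absurd hF (Finset.disjoint_left.1 h hG')
    exact hGF (hs (letters_mem hj l.2))
  · rw [hl]; exact hF

lemma dim_root (hn : 0 < n) {σ : Finset (CT n)} (hσ : LamF σ) : ∃ j : Fin n, ∀ E ∈ σ, j ∉ E.2.2 := by
  rcases σ.eq_empty_or_nonempty with rfl | hne
  · exact ⟨⟨0, hn⟩, by simp⟩
  obtain ⟨E, hE, hmax⟩ := Finset.exists_max_image σ (fun E => (Cs E).card) hne
  refine ⟨E.1, fun F hF h => ?_⟩
  rcases hσ.2 E hE F hF with h1 | h1 | h1
  · have := Finset.eq_of_subset_of_card_le h1 (hmax F hF)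
    rw [← Cs_inj (hσ.1 E hE).1 (hσ.1 F hF).1 this] at h
    exact (hσ.1 E hE).1 h
  · exact (hσ.1 E hE).1 (B_sub h1 h)
  · exact absurd (letters_mem h _) (Finset.disjoint_left.1 h1 (self_letter E))

theorem LamF_card (hn : 0 < n) {σ : Finset (CT n)} (hσ : LamF σ) : σ.card < n := by
  obtain ⟨r, hr⟩ := dim_root hn hσ
  have : ∀ D : CT n, ∃ j : Fin n, D ∈ σ → j ∈ D.2.2 ∧ ∀ E ∈ σ, Cs E ⊂ Cs D → j ∉ E.2.2 := by
    intro D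
    by_cases hD : D ∈ σ
    · obtain ⟨j, h1, h2⟩ := dim_pick hσ hD
      exact ⟨j, fun _ => ⟨h1, h2⟩⟩
    · exact ⟨⟨0, hn⟩, fun h => absurd h hD⟩
  choose J hJ using this
  have h1 : σ.card ≤ ((univ : Finset (Fin n)).erase r).card := by
    apply Finset.card_le_card_of_injOn J
    · intro D hD
      have := (hJ D hD).1
      simp only [Finset.coe_erase, Finset.coe_univ, Set.mem_sdiff, Set.mem_univ, true_and, Set.mem_singleton_iff]
      rintro e
      rw [e] at this
      exact hr D hD this
    · intro D hD E hE e
      have a1 := hJ D hD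
      have a2 := hJ E hE
      have e : J D = J E := e
      rw [← e] at a2
      by_contra hne
      rcases hσ.2 D hD E hE with h1 | h1 | h1
      · exact a2.2 D hD (h1.ssubset_of_ne fun h => hne (Cs_inj (hσ.1 D hD).1 (hσ.1 E hE).1 h)) a1.1
      · exact a1.2 E hE (h1.ssubset_of_ne fun h => hne (Cs_inj (hσ.1 E hE).1 (hσ.1 D hD).1 h).symm) a2.1
      · exact absurd (letters_mem a2.1 true) (Finset.disjoint_left.1 h1 (letters_mem a1.1 true))
  rw [Finset.card_erase_of_mem (mem_univ _), Finset.card_univ, Fintype.card_fin] at h1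
  omega

theorem chain_card (hn : 0 < n) {s : Finset (Finset (PSigmaAut n))} (h1 : ∀ c ∈ s, IsCell c)
    (h2 : ∀ x ∈ s, ∀ y ∈ s, x ≤ y ∨ y ≤ x) : s.card ≤ n := by
  rcases s.eq_empty_or_nonempty with rfl | hne
  · simp
  obtain ⟨c0, hc0, hmin⟩ := Finset.exists_min_image s Finset.card hne
  obtain ⟨g, hg⟩ := (h1 c0 hc0).nonempty
  have hg' : ∀ c ∈ s, g ∈ c := by
    intro c hc
    rcases h2 c0 hc0 c hc with h | h
    · exact h hg
    · rw [Finset.eq_of_subset_of_card_le h (hmin c hc)]; exact hg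
  have : s.card ≤ (Finset.range n).card := by
    apply Finset.card_le_card_of_injOn (fun c => (sgm g c).card)
    · intro c hc
      simpa using LamF_card hn (sgm_lam (h1 c hc) (hg' c hc))
    · intro c hc d hd e
      have e : (sgm g c).card = (sgm g d).card := e
      have : sgm g c = sgm g d := by
        rcases h2 c hc d hd with h | h
        · exact Finset.eq_of_subset_of_card_le (sgm_mono g h) e.ge
        · exact (Finset.eq_of_subset_of_card_le (sgm_mono g h) e.le).symm
      rw [← box_sgm (h1 c hc) (hg' c hc), this, box_sgm (h1 d hd) (hg' d hd)]
  simpa using this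

lemma chi_pow_sum {c : Finset (PSigmaAut n)} (hc : IsCell c) {γ : PSigmaAut n} (h : c.image (γ * ·) = c) : γ = 1 := by
  have h0 : ∑ x ∈ c, chi x = ∑ x ∈ c, chi γ + ∑ x ∈ c, chi x := by
    conv_lhs => rw [← h]
    rw [Finset.sum_image (fun a _ b _ e => mul_left_cancel e), ← Finset.sum_add_distrib]
    exact Finset.sum_congr rfl fun x _ => chi_mul _ _
  have h1 : c.card • chi γ = 0 := by
    rw [Finset.sum_const] at h0
    exact left_eq_add.1 (h0.trans (add_comm _ _)) 
  obtain ⟨x, hx⟩ := hc.nonempty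
  have h2 : chi γ = 0 := by
    rcases smul_eq_zero.1 h1 with h | h
    · rw [Finset.card_eq_zero] at h; subst h; simp at hx
    · exact h
  have h3 : γ * x ∈ c := by rw [← h]; exact mem_image_of_mem _ hx
  have := hc.inj h3 hx (by rw [chi_mul, h2, zero_add])
  simpa using this

/-- The action of a group element on cells. -/
noncomputable def act (γ : PSigmaAut n) (c : Finset (PSigmaAut n)) : Finset (PSigmaAut n) := c.image (γ * ·)

lemma act_inj (γ : PSigmaAut n) : Function.Injective (act γ) :=
  Finset.image_injective (mul_right_injective γ)

lemma act_le (γ : PSigmaAut n) {c d : Finset (PSigmaAut n)} : act γ c ≤ act γ d ↔ c ≤ d :=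
  Finset.image_subset_image_iff (mul_right_injective γ)

lemma act_mul (γ δ : PSigmaAut n) (c : Finset (PSigmaAut n)) : act (γ * δ) c = act γ (act δ c) := by
  simp only [act, Finset.image_image]
  congr 1

lemma act_one (c : Finset (PSigmaAut n)) : act 1 c = c := by simp [act]

theorem chain_free {s : Finset (Finset (PSigmaAut n))} (hs : s.Nonempty) (h1 : ∀ c ∈ s, IsCell c)
    (h2 : ∀ x ∈ s, ∀ y ∈ s, x ≤ y ∨ y ≤ x) {γ : PSigmaAut n} (h : s.image (act γ) = s) : γ = 1 := by
  obtain ⟨c, hc⟩ := hs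
  apply chi_pow_sum (h1 c hc)
  have h3 : act γ c ∈ s := by rw [← h]; exact mem_image_of_mem _ hc
  have h4 : (act γ c).card = c.card := Finset.card_image_of_injective _ (mul_right_injective γ)
  rcases h2 _ h3 c hc with h | h
  · exact Finset.eq_of_subset_of_card_le h h4.ge
  · exact (Finset.eq_of_subset_of_card_le h h4.le).symm
end P5b

section P5c
set_option linter.unusedSectionVars false
open Finset FreeGroup
open scoped Classical
variable {n : ℕ}

/-- Cells below level `g`. -/
def PL (g : PSigmaAut n) : Set (Finset (PSigmaAut n)) := {c | IsCell c ∧ ∀ h ∈ c, NN h ≤ NN g}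
/-- Cells strictly below level `g`. -/
def PLt (g : PSigmaAut n) : Set (Finset (PSigmaAut n)) := {c | IsCell c ∧ ∀ h ∈ c, NN h < NN g}

lemma PLt_sub (g : PSigmaAut n) : PLt g ⊆ PL g := fun _ hc => ⟨hc.1, fun h hh => (hc.2 h hh).le⟩

lemma PL_fin (g : PSigmaAut n) : (PL g).Finite := by
  have : ((NN_fin g).toFinset.powerset : Set (Finset (PSigmaAut n))).Finite := Finset.finite_toSet _
  refine this.subset fun c hc => ?_
  simp only [Finset.coe_powerset, Set.mem_preimage, Set.mem_powerset_iff]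
  intro h hh
  simpa using hc.2 h hh

lemma PLt_of {g : PSigmaAut n} {c : Finset (PSigmaAut n)} (hc : c ∈ PL g) (hg : g ∉ c) : c ∈ PLt g :=
  ⟨hc.1, fun h hh => lt_of_le_of_ne (hc.2 h hh) fun e => hg (NN_inj e ▸ hh)⟩

lemma not_PLt {g : PSigmaAut n} {c : Finset (PSigmaAut n)} (hg : g ∈ c) : c ∉ PLt g :=
  fun h => lt_irrefl _ (h.2 g hg)

lemma sgm_RR {g : PSigmaAut n} {c : Finset (PSigmaAut n)} (hc : c ∈ PL g) (hg : g ∈ c) : sgm g c ⊆ RR g := by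
  intro a ha
  rw [mem_sgm] at ha
  obtain ⟨hV, ha⟩ := ha
  obtain ⟨y, hy, e⟩ := hc.1.full (v := Function.update (chi g) a.1 (chi g a.1 - uv a)) (by
    intro i
    by_cases h : i = a.1
    · subst h; simpa using ha
    · simpa [h] using mem_prj hg i)
  have h1 := hc.1.NN_eq hg hy
  rw [Finset.sum_eq_single a.1 (by
    intro i _ hi
    rw [e]; simp [hi, rT_zero]) (by simp), e] at h1
  simp only [Function.update_self, sub_sub_cancel] at h1
  rw [rT_uv g hV.1] at h1
  have h2 := hc.2 y hy
  rw [RR, Finset.mem_filter]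
  refine ⟨mem_univ _, hV.1, lt_of_le_of_ne ?_ ?_⟩
  · rw [h1] at h2; exact (add_le_iff_nonpos_right _).1 h2
  · intro e0
    rw [e0, add_zero] at h1
    have := NN_inj h1
    subst this
    have h3 := congrFun e a.1
    simp only [Function.update_self] at h3
    exact hV.uv_ne_zero (sub_eq_self.1 h3.symm)

lemma RR_VC {g : PSigmaAut n} {a : CT n} (ha : a ∈ RR g) : VC a :=
  ⟨(Finset.mem_filter.1 ha).2.1, RR_nontriv ha⟩

lemma box_PL {g : PSigmaAut n} {σ : Finset (CT n)} (hσ : LamF σ) (h : σ ⊆ RR g) : box g σ ∈ PL g := by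
  refine ⟨box_cell g hσ, fun y hy => ?_⟩
  rw [(box_cell g hσ).NN_eq (box_self g hσ) hy]
  rw [add_le_iff_nonpos_right]
  apply Finset.sum_nonpos
  intro i _
  have h1 := mem_prj hy i
  rw [box_prj g hσ, mem_Vs] at h1
  obtain ⟨t, ht, e⟩ := h1
  rw [← e, sub_sub_cancel]
  rcases ht with rfl | ⟨a, ha, rfl, rfl⟩
  · rw [rT_zero]
  · rw [rT_uv g (hσ.1 a ha).1]
    exact (Finset.mem_filter.1 (h ha)).2.2.le

lemma sgm_single (g : PSigmaAut n) : sgm g {g} = ∅ := by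
  rw [Finset.eq_empty_iff_forall_notMem]
  intro a ha
  rw [mem_sgm] at ha
  have := ha.2
  simp only [prj, Finset.image_singleton, Finset.mem_singleton] at this
  exact ha.1.uv_ne_zero (sub_eq_self.1 this)

lemma eq_single {g : PSigmaAut n} {c : Finset (PSigmaAut n)} (hc : IsCell c) (hg : g ∈ c) (h : sgm g c = ∅) :
    c = {g} := by
  rw [← box_sgm hc hg, h, ← sgm_single g, box_sgm (isCell_singleton g) (by simp)]

lemma link_top {g : PSigmaAut n} (hR : (RR g).Nonempty) : Acy (Lk (PL g) {g}) := by
  have hL : ∀ σ ∈ Lam cmpC (RR g), LamF σ ∧ σ ⊆ RR g ∧ σ.Nonempty := by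
    intro σ hσ
    obtain ⟨h1, h2, h3⟩ := hσ
    exact ⟨⟨fun a ha => RR_VC (h2 ha), h3⟩, h2, h1⟩
  refine Acy.transfer (box g) ?_ ?_ ?_ (RR_acy g hR)
  · intro σ hσ τ hτ
    constructor
    · intro h
      have := sgm_mono g h
      rwa [sgm_box g (hL σ hσ).1, sgm_box g (hL τ hτ).1] at this
    · exact fun h => box_mono g h
  · intro σ hσ
    obtain ⟨h1, h2, h3⟩ := hL σ hσ
    refine ⟨box_PL h1 h2, Or.inr ?_⟩
    refine lt_of_le_of_ne (by simpa using box_self g h1) fun e => ?_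
    have := sgm_box g h1
    rw [← e, sgm_single] at this
    exact h3.ne_empty this.symm
  · intro c hc
    have hgc : {g} < c := by
      rcases hc.2 with h | h
      · exact absurd (Finset.ssubset_singleton_iff.1 h) hc.1.1.nonempty.ne_empty
      · exact h
    have hg : g ∈ c := by simpa using hgc.1
    refine ⟨sgm g c, ⟨?_, sgm_RR hc.1 hg, (sgm_lam hc.1.1 hg).2⟩, box_sgm hc.1.1 hg⟩
    rw [Finset.nonempty_iff_ne_empty]
    intro h
    exact hgc.ne (eq_single hc.1.1 hg h).symm

lemma exists_opp {g : PSigmaAut n} {c : Finset (PSigmaAut n)} (hc : IsCell c) (hg : g ∈ c) (hne : c ≠ {g}) :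
    ∃ h ∈ c, h ≠ g ∧ ∀ i, chi h i = chi g i → ∀ u ∈ prj c i, u = chi g i := by
  have : ∀ i, ∃ v, v ∈ prj c i ∧ (v = chi g i → ∀ u ∈ prj c i, u = chi g i) := by
    intro i
    by_cases h : ∃ u ∈ prj c i, u ≠ chi g i
    · obtain ⟨u, hu, hu'⟩ := h
      exact ⟨u, hu, fun e => absurd e hu'⟩
    · push Not at h
      exact ⟨chi g i, mem_prj hg i, fun _ => h⟩
  choose v hv hv' using this
  obtain ⟨h, hh, e⟩ := hc.full hv
  refine ⟨h, hh, ?_, fun i hi => hv' i (by rw [← e, hi])⟩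
  rintro rfl
  apply hne
  apply Finset.eq_singleton_iff_unique_mem.2 ⟨hg, fun x hx => ?_⟩
  apply hc.inj hx hg
  funext i
  exact hv' i (by rw [e]) _ (mem_prj hx i)

lemma link_mid {g : PSigmaAut n} {S : Set (Finset (PSigmaAut n))} {c : Finset (PSigmaAut n)}
    (h1 : PLt g ⊆ S) (h2 : S ⊆ PL g) (hc : c ∈ S) (hg : g ∈ c) (hne : c ≠ {g})
    (hmin : ∀ F ∈ S, F < c → g ∉ F) : Acy (Lk S c) := by
  have hC := (h2 hc).1
  obtain ⟨h, hh, hhg, hopp⟩ := exists_opp hC hg hne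
  let ψ : Finset (PSigmaAut n) → Finset (PSigmaAut n) := fun F =>
    c.filter fun x => ∀ i, chi x i ∈ insert (chi h i) (prj F i)
  have ψm : ∀ F x, x ∈ ψ F ↔ x ∈ c ∧ ∀ i, chi x i = chi h i ∨ chi x i ∈ prj F i := by
    intro F x; simp [ψ]
  let φ : Finset (PSigmaAut n) → Finset (PSigmaAut n) := fun F => if F < c then ψ F else F
  have φ1 : ∀ {F}, F < c → φ F = ψ F := fun hF => if_pos hF
  have φ2 : ∀ {F}, c < F → φ F = F := fun hF => if_neg (not_lt_of_gt hF)
  have ψh : ∀ F, h ∈ ψ F := fun F => (ψm F h).2 ⟨hh, fun i => Or.inl rfl⟩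
  have ψc : ∀ F, ψ F ⊆ c := fun F => Finset.filter_subset _ _
  have ψF : ∀ {F}, F < c → F ⊆ ψ F := fun {F} hF x hx => (ψm F x).2 ⟨hF.1 hx, fun i => Or.inr (mem_prj hx i)⟩
  have ψg : ∀ {F}, F ∈ S → F < c → g ∉ ψ F := by
    intro F hF hFc hgF
    apply hmin F hF hFc
    apply hC.mem_of_prj (h2 hF).1 hFc.1 hg
    intro i
    rcases ((ψm F g).1 hgF).2 i with e | e
    · obtain ⟨x, hx⟩ := (h2 hF).1.nonempty
      have := hopp i e.symm _ (prj_mono hFc.1 i (mem_prj hx i))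
      rw [← this]; exact mem_prj hx i
    · exact e
  have ψlt : ∀ {F}, F ∈ S → F < c → ψ F < c := fun {F} hF hFc =>
    lt_of_le_of_ne (ψc F) fun e => ψg hF hFc (by rw [e]; exact hg)
  have inS : ∀ {F}, IsCell F → F ⊆ c → g ∉ F → F ∈ S := fun {F} hF hFc hgF =>
    h1 (PLt_of ⟨hF, fun x hx => (h2 hc).2 x (hFc hx)⟩ hgF)
  have ψS : ∀ {F}, F ∈ S → F < c → ψ F ∈ S := fun {F} hF hFc =>
    inS (hC.filter _ hh (fun i => Finset.mem_insert_self _ _)) (ψc F) (ψg hF hFc)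
  have mem : ∀ {F}, F ∈ Lk S c → (F ∈ S ∧ F < c) ∨ (F ∈ S ∧ c < F) := fun {F} hF => by
    rcases hF.2 with h | h
    · exact Or.inl ⟨hF.1, h⟩
    · exact Or.inr ⟨hF.1, h⟩
  have hsub : {x ∈ Lk S c | φ x = x} ⊆ Lk S c := fun x hx => hx.1
  refine Acy.of_push hsub (push_closure φ _ (Lk S c) ?_ rfl ?_ ?_ (Or.inl ?_) ?_) (Acy.cone {h} ?_ ?_)
  · exact (PL_fin g).subset fun x hx => h2 hx.1.1
  · intro F hF
    rcases mem hF with hF | hF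
    · rw [φ1 hF.2]; exact ⟨ψS hF.1 hF.2, Or.inl (ψlt hF.1 hF.2)⟩
    · rw [φ2 hF.2]; exact ⟨hF.1, Or.inr hF.2⟩
  · intro F hF F' hF' hle
    rcases mem hF with hF | hF <;> rcases mem hF' with hF' | hF'
    · rw [φ1 hF.2, φ1 hF'.2]
      intro x hx
      rw [ψm] at hx ⊢
      exact ⟨hx.1, fun i => (hx.2 i).imp id fun h => prj_mono hle i h⟩
    · rw [φ1 hF.2, φ2 hF'.2]; exact le_trans (ψc F) hF'.2.le
    · exact absurd (hF.2.trans_le hle) (not_lt_of_gt hF'.2)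
    · rw [φ2 hF.2, φ2 hF'.2]; exact hle
  · intro F hF
    rcases mem hF with hF | hF
    · rw [φ1 hF.2]; exact ψF hF.2
    · rw [φ2 hF.2]
  · intro F hF
    rcases mem hF with hF | hF
    · have h3 := ψlt hF.1 hF.2
      rw [φ1 hF.2, φ1 h3]
      apply subset_antisymm _ (ψF h3)
      intro x hx
      rw [ψm] at hx ⊢
      refine ⟨hx.1, fun i => ?_⟩
      rcases hx.2 i with e | e
      · exact Or.inl e
      · obtain ⟨y, hy, e'⟩ := Finset.mem_image.1 e
        rw [← e']; exact ((ψm F y).1 hy).2 i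
    · rw [φ2 hF.2, φ2 hF.2]
  · have h3 : {h} < c := by
      refine lt_of_le_of_ne (by simpa using hh) fun e => ?_
      rw [← e] at hg; simp at hg; exact hhg hg.symm
    refine ⟨⟨inS (isCell_singleton h) h3.1 (by simpa using hhg.symm), Or.inl h3⟩, ?_⟩
    rw [φ1 h3]
    apply subset_antisymm _ (ψF h3)
    intro x hx
    rw [ψm] at hx
    rw [Finset.mem_singleton]
    apply hC.inj hx.1 hh
    funext i
    have := hx.2 i
    simp only [prj, Finset.image_singleton, Finset.mem_singleton, or_self] at this
    exact this
  · intro F hF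
    right
    rcases mem hF.1 with hF' | hF'
    · have h3 := hF.2
      rw [φ1 hF'.2] at h3
      rw [← h3]; simpa using ψh F
    · have : h ∈ F := hF'.2.1 hh
      simpa using this

lemma push_mid {g : PSigmaAut n} (N : ℕ) : ∀ S : Set (Finset (PSigmaAut n)), (S \ PLt g).ncard = N →
    PLt g ⊆ S → S ⊆ PL g → {g} ∉ S → (∀ c ∈ S, g ∈ c → ∀ d ∈ PL g, c ⊆ d → d ∈ S) → Push S (PLt g) := by
  induction N with
  | zero =>
    intro S hN h1 h2 _ _
    rw [Set.ncard_eq_zero (((PL_fin g).subset h2).subset Set.sdiff_subset), Set.sdiff_eq_empty] at hN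
    rw [subset_antisymm hN h1]; exact Push.refl _
  | succ N ih =>
    intro S hN h1 h2 h3 h4
    have hfin : (S \ PLt g).Finite := ((PL_fin g).subset h2).subset Set.sdiff_subset
    have hne : (S \ PLt g).Nonempty := by
      rw [← Set.ncard_pos hfin]; omega
    obtain ⟨c, hc, hmin⟩ := Set.exists_min_image _ Finset.card hfin hne
    have hg : g ∈ c := by
      by_contra hg; exact hc.2 (PLt_of (h2 hc.1) hg)
    have hmin' : ∀ F ∈ S, F < c → g ∉ F := fun F hF hFc hgF =>
      absurd (Finset.card_lt_card hFc) (not_lt.2 (hmin F ⟨hF, not_PLt hgF⟩))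
    have p1 := push_remove (link_mid h1 h2 hc.1 hg (fun e => h3 (e ▸ hc.1)) hmin')
    refine Push.trans Set.sdiff_subset p1 (ih _ ?_ ?_ ?_ ?_ ?_)
    · have e : (S \ {c}) \ PLt g = (S \ PLt g) \ {c} := by
        ext x; simp only [Set.mem_sdiff]; tauto
      rw [e, Set.ncard_sdiff_singleton_of_mem hc, hN]; rfl
    · intro x hx
      refine ⟨h1 hx, ?_⟩
      rintro rfl
      exact hc.2 hx
    · exact Set.sdiff_subset.trans h2
    · exact fun h => h3 h.1
    · intro x hx hgx d hd hxd
      refine ⟨h4 x hx.1 hgx d hd hxd, ?_⟩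
      rintro rfl
      exact hmin' x hx.1 (lt_of_le_of_ne hxd hx.2) hgx

lemma push_level {g : PSigmaAut n} (hR : (RR g).Nonempty) : Push (PL g) (PLt g) := by
  refine Push.trans Set.sdiff_subset (push_remove (link_top hR)) (push_mid _ _ rfl ?_ ?_ ?_ ?_)
  · intro x hx
    refine ⟨PLt_sub g hx, ?_⟩
    rintro rfl
    exact not_PLt (by simp) hx
  · exact Set.sdiff_subset
  · simp
  · intro c hc hg d hd hcd
    refine ⟨hd, ?_⟩
    rintro rfl
    apply hc.2
    exact Finset.eq_singleton_iff_unique_mem.2 ⟨hg, fun x hx => by simpa using hcd hx⟩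

lemma no_push {g : PSigmaAut n} (hR : ¬ (RR g).Nonempty) {k : ℕ} (hk : 2 ≤ k) {z} (hz : z ∈ Ch (PL g) k) :
    z ∈ Ch (PLt g) k := by
  rw [Ch, Finsupp.mem_supported] at hz ⊢
  intro s hs
  obtain ⟨h1, h2, h3⟩ := hz hs
  refine ⟨fun c hc => PLt_of (h1 c hc) fun hg => ?_, h2, h3⟩
  have key : ∀ d ∈ PL g, g ∈ d → d = {g} := by
    intro d hd hgd
    apply eq_single hd.1 hgd
    rw [Finset.not_nonempty_iff_eq_empty] at hR
    rw [← Finset.subset_empty, ← hR]; exact sgm_RR hd hgd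
  have e := key c (h1 c hc) hg
  obtain ⟨d, hd, hdc⟩ := Finset.exists_mem_ne (by omega : 1 < s.card) c
  apply hdc
  rw [e]
  apply key d (h1 d hd)
  rcases h2 d hd c hc with h | h
  · obtain ⟨x, hx⟩ := (h1 d hd).1.nonempty
    have := h hx
    rw [e, Finset.mem_singleton] at this
    exact this ▸ hx
  · exact h hg

theorem acy_level (N : ℕ) : ∀ g : PSigmaAut n, {h : PSigmaAut n | NN h ≤ NN g}.ncard ≤ N → ∀ k, 2 ≤ k →
    ∀ z ∈ Ch (PL g) k, bd z = 0 → ∃ w ∈ Ch (PL g) (k + 1), bd w = z := by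
  induction N with
  | zero =>
    intro g hN
    have := (Set.ncard_eq_zero (NN_fin g)).1 (Nat.le_zero.1 hN)
    exact absurd (show g ∈ {h : PSigmaAut n | NN h ≤ NN g} from le_refl (NN g)) (by rw [this]; simp)
  | succ N ih =>
    intro g hN k hk z hz hbz
    have low : ∀ z ∈ Ch (PLt g) k, bd z = 0 → ∃ w ∈ Ch (PLt g) (k + 1), bd w = z := by
      intro z hz hbz
      have hsub : {h : PSigmaAut n | NN h < NN g} ⊆ {h : PSigmaAut n | NN h ≤ NN g} := fun h (hh : NN h < NN g) => (hh.le : NN h ≤ NN g)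
      have hfin := (NN_fin g).subset hsub
      rcases Set.eq_empty_or_nonempty {h : PSigmaAut n | NN h < NN g} with he | hne
      · have : z = 0 := by
          rw [Ch, Finsupp.mem_supported] at hz
          rw [← Finsupp.support_eq_empty, Finset.eq_empty_iff_forall_notMem]
          intro s hs
          obtain ⟨h1, h2, h3⟩ := hz hs
          obtain ⟨c, hc⟩ := Finset.card_pos.1 (by omega : 0 < s.card)
          obtain ⟨x, hx⟩ := (h1 c hc).1.nonempty
          have : x ∈ {h : PSigmaAut n | NN h < NN g} := (h1 c hc).2 x hx
          rw [he] at this; exact this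
        exact ⟨0, Submodule.zero_mem _, by simp [this]⟩
      · obtain ⟨g', hg', hmax⟩ := Set.exists_max_image _ NN hfin hne
        have e : PLt g = PL g' := by
          ext c
          constructor
          · exact fun hc => ⟨hc.1, fun h hh => hmax h (hc.2 h hh)⟩
          · exact fun hc => ⟨hc.1, fun h hh => lt_of_le_of_lt (hc.2 h hh) hg'⟩
        rw [e] at hz ⊢
        refine ih g' ?_ k hk z hz hbz
        have : {h : PSigmaAut n | NN h ≤ NN g'}.ncard < {h : PSigmaAut n | NN h ≤ NN g}.ncard := by
          apply Set.ncard_lt_ncard _ (NN_fin g)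
          refine ⟨fun h (hh : NN h ≤ NN g') => (le_trans hh (le_of_lt hg') : NN h ≤ NN g), fun hs => ?_⟩
          have : NN g ≤ NN g' := hs (show g ∈ {h : PSigmaAut n | NN h ≤ NN g} from le_refl (NN g))
          exact absurd hg' (not_lt.2 this)
        omega
    by_cases hR : (RR g).Nonempty
    · obtain ⟨w, hw, h1, h2⟩ := push_level hR k z hz hbz
      obtain ⟨v, hv, e⟩ := low _ h1 h2
      refine ⟨v - w, Submodule.sub_mem _ (Ch_mono (PLt_sub g) _ hv) hw, ?_⟩
      rw [_root_.map_sub, e]; simp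
    · obtain ⟨v, hv, e⟩ := low z (no_push hR hk hz) hbz
      exact ⟨v, Ch_mono (PLt_sub g) _ hv, e⟩

/-- All cells. -/
def PA (n : ℕ) : Set (Finset (PSigmaAut n)) := {c | IsCell c}

theorem acy_PA {k : ℕ} (hk : 2 ≤ k) {z} (hz : z ∈ Ch (PA n) k) (hbz : bd z = 0) :
    ∃ w ∈ Ch (PA n) (k + 1), bd w = z := by
  let U : Finset (PSigmaAut n) := insert 1 (z.support.biUnion fun s => s.biUnion id)
  obtain ⟨g, hg, hmax⟩ := Finset.exists_max_image U NN ⟨1, Finset.mem_insert_self _ _⟩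
  have hz' : z ∈ Ch (PL g) k := by
    rw [Ch, Finsupp.mem_supported] at hz ⊢
    intro s hs
    obtain ⟨h1, h2, h3⟩ := hz hs
    refine ⟨fun c hc => ⟨h1 c hc, fun h hh => hmax h ?_⟩, h2, h3⟩
    refine Finset.mem_insert_of_mem (Finset.mem_biUnion.2 ⟨s, hs, Finset.mem_biUnion.2 ⟨c, hc, hh⟩⟩)
  obtain ⟨w, hw, e⟩ := acy_level _ g le_rfl k hk z hz' hbz
  exact ⟨w, Ch_mono (fun c hc => hc.1) _ hw, e⟩
end P5c

section P6
set_option linter.unusedSectionVars false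
open Finset FreeGroup
open scoped Classical
variable {n : ℕ}

lemma SL_single (i : Fin n) (u : Fin n → ℤ) (l : List (Fin n)) (hl : l.Nodup) :
    SL (Pi.single i u) l = if i ∈ l then sP i u else 1 := by
  induction l with
  | nil => simp [SL]
  | cons k l ih =>
    have h1 : SL (Pi.single i u) (k :: l) = sP k ((Pi.single i u : Fin n → Fin n → ℤ) k) * SL (Pi.single i u) l := by
      simp [SL]
    rw [List.nodup_cons] at hl
    rw [h1, ih hl.2]
    by_cases hk : k = i
    · subst hk
      simp [hl.1]
    · rw [Pi.single_eq_of_ne hk, sP_zero, one_mul]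
      simp [Ne.symm hk]

lemma Sm_single (i : Fin n) (u : Fin n → ℤ) : Sm (Pi.single i u) = sP i u := by
  rw [Sm, SL_single i u _ (List.nodup_finRange n), if_pos (List.mem_finRange i)]

/-- Boundaries in degree one. -/
noncomputable def W1 (n : ℕ) : Submodule ℤ (Finset (Finset (PSigmaAut n)) →₀ ℤ) := (Ch (PA n) 2).map bd

/-- Being homologous. -/
def Cn (c d : Finset (PSigmaAut n)) : Prop := Finsupp.single {c} (1:ℤ) - Finsupp.single {d} 1 ∈ W1 n

lemma Cn.symm {c d : Finset (PSigmaAut n)} (h : Cn c d) : Cn d c := by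
  have := (W1 n).neg_mem h
  rwa [neg_sub] at this

lemma Cn.trans {c d e : Finset (PSigmaAut n)} (h : Cn c d) (h' : Cn d e) : Cn c e := by
  have := (W1 n).add_mem h h'
  rwa [sub_add_sub_cancel] at this

lemma Cn.refl (c : Finset (PSigmaAut n)) : Cn c c := by
  rw [Cn, sub_self]; exact (W1 n).zero_mem

lemma Cn_lt {c d : Finset (PSigmaAut n)} (hc : IsCell c) (hd : IsCell d) (h : c < d) : Cn d c := by
  refine ⟨Finsupp.single {c, d} 1, single_mem_Ch _ ?_ ?_ (Finset.card_pair h.ne), ?_⟩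
  · intro x hx
    rcases Finset.mem_insert.1 hx with rfl | hx
    · exact hc
    · rw [Finset.mem_singleton.1 hx]; exact hd
  · intro x hx y hy
    simp only [Finset.mem_insert, Finset.mem_singleton] at hx hy
    rcases hx with hx | hx <;> rcases hy with hy | hy <;> rw [hx, hy]
    · exact Or.inl le_rfl
    · exact Or.inl h.le
    · exact Or.inr h.le
    · exact Or.inl le_rfl
  · have e1 : ({c, d} : Finset (Finset (PSigmaAut n))).erase c = {d} := by
      rw [Finset.erase_insert]; simpa using h.ne
    have e2 : ({c, d} : Finset (Finset (PSigmaAut n))).erase d = {c} := by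
      rw [Finset.pair_comm, Finset.erase_insert]; simpa using h.ne'
    have s1 : sg ({c, d} : Finset (Finset (PSigmaAut n))) c = 1 := by
      rw [sg, Finset.filter_insert, if_neg (lt_irrefl _), Finset.filter_singleton, if_neg (not_lt_of_gt h)]
      simp
    have s2 : sg ({c, d} : Finset (Finset (PSigmaAut n))) d = -1 := by
      rw [sg, Finset.filter_insert, if_pos h, Finset.filter_singleton, if_neg (lt_irrefl _)]
      simp
    rw [bd_single, Finset.sum_pair h.ne, s1, s2, Finsupp.single_neg, sub_eq_add_neg]
    congr 2
    · congr 1; convert e1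
    · congr 1; convert e2

lemma Cn_le {c d : Finset (PSigmaAut n)} (hc : IsCell c) (hd : IsCell d) (h : c ≤ d) : Cn d c := by
  rcases h.eq_or_lt with rfl | h
  · exact Cn.refl _
  · exact Cn_lt hc hd h

lemma Cn_mem {c : Finset (PSigmaAut n)} (hc : IsCell c) {g : PSigmaAut n} (hg : g ∈ c) : Cn c {g} :=
  Cn_le (isCell_singleton g) hc (by simpa using hg)

lemma Cn_gen (i j : Fin n) (ε : Bool) (hij : i ≠ j) (g : PSigmaAut n) :
    Cn {g} {g * (sP i (uv (i, ε, {j})))⁻¹} := by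
  have hL : LamF {((i, ε, {j}) : CT n)} := by
    refine ⟨fun a ha => ?_, fun a ha b hb => ?_⟩
    · rw [Finset.mem_singleton.1 ha]; exact ⟨by simpa using hij, by simp⟩
    · rw [Finset.mem_singleton.1 ha, Finset.mem_singleton.1 hb]; exact cmpC_refl _
  have hC := box_cell g hL
  have hg := box_self g hL
  obtain ⟨y, hy, e⟩ := hC.full (v := chi g + Pi.single i (- uv (i, ε, {j}))) (by
    intro k
    rw [box_prj g hL, mem_Vs]
    by_cases hk : k = i
    · subst hk
      exact ⟨uv (k, ε, {j}), Or.inr ⟨_, Finset.mem_singleton_self _, rfl, rfl⟩, by simp [sub_eq_add_neg]⟩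
    · exact ⟨0, Or.inl rfl, by simp [hk]⟩)
  have h2 := ((hC.mem_iff hg).1 hy).2
  rw [e, add_sub_cancel_left, Sm_single, sP_neg] at h2
  rw [← h2]
  exact (Cn_mem hC hg).symm.trans (Cn_mem hC hy)

lemma Cn_all (γ : PSigmaAut n) : ∀ g : PSigmaAut n, Cn {g} {g * γ} := by
  have h : γ ∈ Subgroup.closure (GenS n) := by rw [gen_top]; trivial
  induction h using Subgroup.closure_induction with
  | mem s hs =>
    obtain ⟨i, j, ε, hij, rfl⟩ := hs
    intro g
    have := Cn_gen i j ε hij (g * sP i (uv (i, ε, {j})))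
    rw [mul_inv_cancel_right] at this
    exact this.symm
  | one => intro g; rw [mul_one]; exact Cn.refl _
  | mul a b _ _ ha hb =>
    intro g
    rw [← mul_assoc]
    exact (ha g).trans (hb _)
  | inv a _ ha =>
    intro g
    have := ha (g * a⁻¹)
    rw [inv_mul_cancel_right] at this
    exact this.symm

lemma Cn_one {c : Finset (PSigmaAut n)} (hc : IsCell c) : Cn c {1} := by
  obtain ⟨g, hg⟩ := hc.nonempty
  have := (Cn_all g 1).symm
  rw [one_mul] at this
  exact (Cn_mem hc hg).trans this

theorem acy_PA_one {z} (hz : z ∈ Ch (PA n) 1) (hbz : bd z = 0) : ∃ w ∈ Ch (PA n) 2, bd w = z := by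
  let f : (Finset (Finset (PSigmaAut n)) →₀ ℤ) →ₗ[ℤ] (Finset (Finset (PSigmaAut n)) →₀ ℤ) :=
    LinearMap.id - (LinearMap.toSpanSingleton ℤ _ (Finsupp.single {{1}} 1)) ∘ₗ (Finsupp.lapply ∅) ∘ₗ bd
  have h1 : f z ∈ W1 n := by
    refine Ch_map f _ ?_ hz
    intro s h1 _ h3
    obtain ⟨c, rfl⟩ := Finset.card_eq_one.1 h3
    have := Cn_one (h1 c (by simp))
    have e : f (Finsupp.single {c} 1) = Finsupp.single {c} 1 - Finsupp.single {{1}} 1 := by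
      simp [f, bd_single, sg, Finset.filter_singleton]
    rw [e]
    exact this
  have h2 : f z = z := by simp [f, hbz]
  rw [h2] at h1
  exact h1

theorem acy_PA' {k : ℕ} (hk : 1 ≤ k) {z} (hz : z ∈ Ch (PA n) k) (hbz : bd z = 0) :
    ∃ w ∈ Ch (PA n) (k + 1), bd w = z := by
  rcases hk.eq_or_lt with rfl | hk
  · exact acy_PA_one hz hbz
  · exact acy_PA hk hz hbz
end P6

section P7a
open CategoryTheory Limits

theorem cd_of_res {k G : Type} [CommRing k] [Group G] (X : ℕ → Rep.{0} k G) (d : ∀ p, X (p+1) ⟶ X p)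
    (ε : X 0 ⟶ Rep.trivial k G k) (hp : ∀ p, Projective (X p))
    (dd : ∀ p (x : X (p+2)), (d p).hom ((d (p+1)).hom x) = 0)
    (dε : ∀ x : X 1, ε.hom ((d 0).hom x) = 0)
    (ex : ∀ p (x : X (p+1)), (d p).hom x = 0 → ∃ y, (d (p+1)).hom y = x)
    (ex0 : ∀ x : X 0, ε.hom x = 0 → ∃ y, (d 0).hom y = x)
    (sur : Function.Surjective ε.hom)
    (M : Rep.{0} k G) (i : ℕ) (hi : ∀ x : X i, x = 0) : Subsingleton (groupCohomology M i) := by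
  have hdd : ∀ p, d (p+1) ≫ d p = 0 := fun p => by
    apply Rep.hom_ext
    apply Representation.IntertwiningMap.ext
    apply LinearMap.ext
    intro x
    exact dd p x
  let C : ChainComplex (Rep.{0} k G) ℕ := ChainComplex.of X d hdd
  have hC : ∀ p, C.d (p+1) p = d p := fun p => ChainComplex.of_d _ _ _
  have hdε : C.d 1 0 ≫ ε = 0 := by
    rw [hC]
    apply Rep.hom_ext
    apply Representation.IntertwiningMap.ext
    apply LinearMap.ext
    intro x
    exact dε x
  let π : C ⟶ (ChainComplex.single₀ (Rep.{0} k G)).obj (Rep.trivial k G k) :=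
    (C.toSingle₀Equiv _).symm ⟨ε, hdε⟩
  have hq : QuasiIso π := by
    refine ⟨fun m => ?_⟩
    cases m with
    | zero =>
      rw [ChainComplex.quasiIsoAt₀_iff, ShortComplex.quasiIso_iff_of_zeros' _ rfl rfl rfl]
      constructor
      · apply (forget₂ _ (ModuleCat k)).reflects_exact_of_faithful
        rw [ShortComplex.moduleCat_exact_iff]
        intro x hx
        obtain ⟨y, hy⟩ := ex0 x (by
          simpa [π, ChainComplex.toSingle₀Equiv] using! hx)
        refine ⟨y, ?_⟩
        have := hC 0
        simpa [this] using! hy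
      · rw [Rep.epi_iff_surjective]
        simpa [π, ChainComplex.toSingle₀Equiv] using! sur
    | succ m =>
      rw [quasiIsoAt_iff_exactAt' (hL := ChainComplex.exactAt_succ_single_obj ..),
          HomologicalComplex.exactAt_iff' _ (m + 2) (m + 1) m (by simp) (by simp)]
      apply (forget₂ _ (ModuleCat k)).reflects_exact_of_faithful
      rw [ShortComplex.moduleCat_exact_iff]
      intro x hx
      have h1 := hC m
      have h2 := hC (m+1)
      obtain ⟨y, hy⟩ := ex m x (by simpa [h1] using! hx)
      exact ⟨y, by simpa [h2] using! hy⟩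
  let R : ProjectiveResolution (Rep.trivial k G k) :=
    { complex := C, projective := hp, π := π, quasiIso := hq }
  have e := groupCohomologyIso M i R
  have hz : IsZero (R.complex.X i) := by
    rw [IsZero.iff_id_eq_zero]
    apply Rep.hom_ext
    apply Representation.IntertwiningMap.ext
    apply LinearMap.ext
    intro x
    exact hi x
  have hz2 : IsZero ((R.complex.linearYonedaObj k M).X i) := by
    have : Subsingleton ((R.complex.linearYonedaObj k M).X i) := by
      refine ⟨fun a b => ?_⟩
      exact hz.eq_of_src (a : R.complex.X i ⟶ M) b
    exact ModuleCat.isZero_of_subsingleton _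
  have hz3 : IsZero (groupCohomology M i) :=
    (ShortComplex.isZero_homology_of_isZero_X₂ _ hz2).of_iso e
  exact ModuleCat.subsingleton_of_isZero hz3
end P7a

section P7b
open CategoryTheory Limits

theorem proj_of_basis {k G T : Type} [CommRing k] [Group G] [MulAction G T] (X : Rep.{0} k G) (b : Module.Basis T k X)
    (hρ : ∀ g t, X.ρ g (b t) = b (g • t)) (fr : ∀ (g : G) (t : T), g • t = t → g = 1) : Projective X := by
  constructor
  intro E Z f e he
  have hs := (Rep.epi_iff_surjective e).1 he
  choose r hr using hs
  let q : T → T := fun t => (Quotient.out (Quotient.mk (MulAction.orbitRel G T) t))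
  have hq : ∀ t, ∃ g : G, g • q t = t := fun t => by
    have h1 : (MulAction.orbitRel G T).r t (q t) := Quotient.exact (Quotient.out_eq _).symm
    exact h1
  choose g hg using hq
  have hq2 : ∀ γ t, q (γ • t) = q t := fun γ t => by
    have : (Quotient.mk (MulAction.orbitRel G T) (γ • t)) = Quotient.mk _ t := Quotient.sound ⟨γ, rfl⟩
    simp only [q, this]
  have hg2 : ∀ γ t, g (γ • t) = γ * g t := fun γ t => by
    have h1 := hg (γ • t)
    rw [hq2] at h1
    have h2 : ((γ * g t)⁻¹ * g (γ • t)) • q t = q t := by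
      rw [mul_smul, h1, mul_inv_rev, mul_smul, inv_smul_smul, inv_smul_eq_iff, hg]
    have := fr _ _ h2
    rw [inv_mul_eq_one] at this
    exact this.symm
  let F : X →ₗ[k] E := b.constr k (fun t => E.ρ (g t) (r (f.hom (b (q t)))))
  have hF : ∀ t, F (b t) = E.ρ (g t) (r (f.hom (b (q t)))) := fun t => by simp [F]
  have hFi : ∀ γ : G, ∀ x : X, F (X.ρ γ x) = E.ρ γ (F x) := by
    intro γ x
    have : F ∘ₗ X.ρ γ = E.ρ γ ∘ₗ F := by
      apply b.ext
      intro t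
      rw [LinearMap.comp_apply, LinearMap.comp_apply, hρ, hF, hF, hg2, hq2, _root_.map_mul]
      rfl
    exact LinearMap.congr_fun this x
  refine ⟨Rep.ofHom (F.intertwiningMap_of_isIntertwiningMap X.ρ E.ρ hFi), ?_⟩
  apply Rep.hom_ext
  apply Representation.IntertwiningMap.ext
  apply b.ext
  intro t
  have h1 : e.hom (F (b t)) = f.hom (b t) := by
    rw [hF, Rep.hom_comm_apply, hr, ← Rep.hom_comm_apply, hρ, hg]
  exact h1
end P7b

section P7c
set_option linter.unusedSectionVars false
open Finset FreeGroup CategoryTheory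
open scoped Classical
variable {n : ℕ}

/-- The index set of chains. -/
def TT (n p : ℕ) : Set (Finset (Finset (PSigmaAut n))) :=
  {s | (∀ x ∈ s, x ∈ PA n) ∧ (∀ x ∈ s, ∀ y ∈ s, x ≤ y ∨ y ≤ x) ∧ s.card = p + 1}

lemma chain_act {s : Finset (Finset (PSigmaAut n))} {p : ℕ} (γ : PSigmaAut n) (hs : s ∈ TT n p) :
    s.image (act γ) ∈ TT n p := by
  refine ⟨fun x hx => ?_, fun x hx y hy => ?_, ?_⟩
  · obtain ⟨c, hc, rfl⟩ := Finset.mem_image.1 hx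
    exact (hs.1 c hc : IsCell c).smul γ
  · obtain ⟨c, hc, rfl⟩ := Finset.mem_image.1 hx
    obtain ⟨d, hd, rfl⟩ := Finset.mem_image.1 hy
    rw [act_le, act_le]
    exact hs.2.1 c hc d hd
  · rw [Finset.card_image_of_injective _ (act_inj γ)]; exact hs.2.2

lemma act_act (γ δ : PSigmaAut n) (s : Finset (Finset (PSigmaAut n))) :
    s.image (act (γ * δ)) = (s.image (act δ)).image (act γ) := by
  rw [Finset.image_image]
  congr 1
  funext c
  exact act_mul γ δ c

lemma act_id (s : Finset (Finset (PSigmaAut n))) : s.image (act 1) = s := by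
  have : act (1 : PSigmaAut n) = id := funext act_one
  rw [this, Finset.image_id]

noncomputable instance (p : ℕ) : MulAction (Kn n) (TT n p) where
  smul γ s := ⟨s.1.image (act γ.1), chain_act γ.1 s.2⟩
  one_smul s := Subtype.ext (act_id s.1)
  mul_smul γ δ s := Subtype.ext (act_act γ.1 δ.1 s.1)

lemma TT_smul {p : ℕ} (γ : Kn n) (s : TT n p) : (γ • s).1 = s.1.image (act γ.1) := rfl

lemma chMap_act_mem {γ : PSigmaAut n} {k : ℕ} {z} (hz : z ∈ Ch (PA n) k) : chMap (act γ) z ∈ Ch (PA n) k :=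
  chMap_mem (fun _ _ _ _ => act_le γ) (fun x hx => (show IsCell x from hx).smul γ) hz

lemma chMap_act_mul (γ δ : PSigmaAut n) (z : Finset (Finset (PSigmaAut n)) →₀ ℤ) :
    chMap (act (γ * δ)) z = chMap (act γ) (chMap (act δ) z) := by
  have : chMap (act (γ * δ)) = chMap (act γ) ∘ₗ chMap (act δ) := by
    apply Finsupp.lhom_ext
    intro s a
    rw [LinearMap.comp_apply, chMap_single, chMap_single, chMap_single]
    congr 1
    convert act_act γ δ s
  rw [this]; rfl

lemma chMap_act_one (z : Finset (Finset (PSigmaAut n)) →₀ ℤ) : chMap (act 1) z = z := by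
  have : chMap (act (1 : PSigmaAut n)) = LinearMap.id := by
    apply Finsupp.lhom_ext
    intro s a
    rw [chMap_single, LinearMap.id_apply]
    congr 1
    convert act_id s
  rw [this]; rfl

/-- The representation on chains. -/
noncomputable def rhoC (n k : ℕ) : Representation ℤ (Kn n) (Ch (PA n) k) where
  toFun γ := (chMap (act γ.1)).restrict (fun _ hz => chMap_act_mem hz)
  map_one' := LinearMap.ext fun z => Subtype.ext (chMap_act_one z.1)
  map_mul' γ δ := LinearMap.ext fun z => Subtype.ext (chMap_act_mul γ.1 δ.1 z.1)

/-- The boundary as an intertwining map. -/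
noncomputable def dC (n k : ℕ) : (rhoC n (k+1)).IntertwiningMap (rhoC n k) :=
  (bd.restrict (fun _ hz => bd_mem hz)).intertwiningMap_of_isIntertwiningMap _ _ (fun _ z =>
    Subtype.ext (chMap_bd (fun _ _ _ _ => act_le _) z.2))

/-- The augmentation. -/
noncomputable def eC (n : ℕ) : (rhoC n 1).IntertwiningMap (Representation.trivial ℤ (Kn n) ℤ) :=
  ((Finsupp.lapply ∅ ∘ₗ bd) ∘ₗ (Ch (PA n) 1).subtype).intertwiningMap_of_isIntertwiningMap _ _ (fun γ z => by
    change (bd (chMap (act γ.1) z.1)) ∅ = bd z.1 ∅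
    rw [chMap_bd (fun _ _ _ _ => act_le _) z.2]
    refine Ch_ind (Finsupp.lapply ∅ ∘ₗ chMap (act γ.1)) (Finsupp.lapply ∅) ?_ (bd_mem z.2)
    intro s _ _ h
    rw [Finset.card_eq_zero] at h
    subst h
    simp [chMap_single])

/-- The complex of chains. -/
noncomputable def XC (n p : ℕ) : Rep.{0} ℤ (Kn n) := Rep.of (rhoC n (p+1))

lemma XC_proj (n p : ℕ) : Projective (XC n p) := by
  let b : Module.Basis (TT n p) ℤ (Ch (PA n) (p+1)) := Module.Basis.ofRepr (Finsupp.supportedEquivFinsupp (TT n p))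
  have hb : ∀ t : TT n p, (b t).1 = Finsupp.single t.1 1 := by
    intro t
    change (((Finsupp.supportedEquivFinsupp (TT n p)).symm (Finsupp.single t 1) :
      Finsupp.supported ℤ ℤ (TT n p)) : Finset (Finset (PSigmaAut n)) →₀ ℤ) = _
    simp
  refine proj_of_basis (k := ℤ) (G := Kn n) (T := TT n p) (XC n p) b ?_ ?_
  · intro g t
    apply Subtype.ext
    have h1 : chMap (act g.1) (b t).1 = (b (g • t)).1 := by
      rw [hb, hb, TT_smul, chMap_single]
      congr 1
      convert rfl
    exact h1
  · intro g t h
    apply Subtype.ext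
    refine chain_free (s := t.1) (Finset.card_pos.1 ?_) t.2.1 t.2.2.1 (congrArg Subtype.val h)
    rw [t.2.2.2]; omega

lemma bd_empty_coef {z} (hz : z ∈ Ch (PA n) 1) (h : bd z ∅ = 0) : bd z = 0 := by
  ext s
  by_cases hs : s = ∅
  · rw [hs, h]; rfl
  · by_contra h2
    have := (bd_mem hz) (Finsupp.mem_support_iff.2 h2)
    exact hs (Finset.card_eq_zero.1 this.2.2)

theorem upper (hn : 0 < n) (M : Rep ℤ (Kn n)) (i : ℕ) (hi : n ≤ i) : Subsingleton (groupCohomology M i) := by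
  refine cd_of_res (XC n) (fun p => Rep.ofHom (dC n (p+1))) (Rep.ofHom (eC n)) (XC_proj n)
    ?_ ?_ ?_ ?_ ?_ M i ?_
  · intro p x
    exact Subtype.ext (bd_bd x.2)
  · intro x
    change bd (bd x.1) ∅ = 0
    rw [bd_bd x.2]; rfl
  · intro p x hx
    obtain ⟨w, hw, e⟩ := acy_PA' (by omega) x.2 (congrArg Subtype.val hx)
    exact ⟨⟨w, hw⟩, Subtype.ext e⟩
  · intro x hx
    obtain ⟨w, hw, e⟩ := acy_PA' le_rfl x.2 (bd_empty_coef x.2 hx)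
    exact ⟨⟨w, hw⟩, Subtype.ext e⟩
  · intro a
    refine ⟨⟨Finsupp.single {{1}} a, single_mem_Ch _ ?_ ?_ rfl⟩, ?_⟩
    · intro x hx
      rw [Finset.mem_singleton.1 hx]
      exact isCell_singleton 1
    · intro x hx y hy
      rw [Finset.mem_singleton.1 hx, Finset.mem_singleton.1 hy]
      exact Or.inl le_rfl
    · change bd (Finsupp.single {{1}} a) ∅ = a
      have : (Finsupp.single {{1}} a : Finset (Finset (PSigmaAut n)) →₀ ℤ) = a • Finsupp.single {{1}} 1 := by simp
      rw [this, _root_.map_smul, bd_single]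
      simp [sg, Finset.filter_singleton]
  · intro x
    apply Subtype.ext
    refine Ch_ind LinearMap.id 0 ?_ x.2
    intro s h1 h2 h3
    have := chain_card hn h1 h2
    omega
end P7c

section P8a
open CategoryTheory Limits Finset

lemma contract_sum {q : ℕ} (T : ℕ → ℤ) :
    T 0 + ∑ j ∈ range q, (-1 : ℤ) ^ (j+1) * (T j + T (j+1)) + (-1) ^ (q+1) * T q = 0 := by
  induction q with
  | zero => simp
  | succ q ih =>
    rw [sum_range_succ]
    linear_combination ih

lemma cocyc {G : Type} [Group G] {m : ℕ} (χ : Fin m → G → ℤ) (hχ : ∀ k g h, χ k (g * h) = χ k g + χ k h)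
    (g : Fin (m+1) → G) :
    ∏ k, χ k (g k.succ) + ∑ j : Fin (m+1), (-1 : ℤ) ^ ((j : ℕ) + 1) *
      ∏ k, χ k (Fin.contractNth j (· * ·) g k) = 0 := by
  let T : ℕ → ℤ := fun j => ∏ k, χ k (g (if (k : ℕ) < j then k.castSucc else k.succ))
  have h0 : ∏ k, χ k (g k.succ) = T 0 := by simp [T]
  have h1 : ∀ j : Fin m, ∏ k, χ k (Fin.contractNth j.castSucc (· * ·) g k) = T j + T (j+1) := by
    intro j
    symm
    rw [add_comm]
    refine prod_add_prod_eq (mem_univ j) ?_ ?_ ?_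
    · rw [Fin.contractNth_apply_of_eq _ _ _ _ (by simp), hχ]; simp
    · intro k _ hk
      have : (k : ℕ) ≠ j := fun h => hk (Fin.ext h)
      rcases lt_or_gt_of_ne this with h | h
      · rw [Fin.contractNth_apply_of_lt _ _ _ _ (by simpa using h), if_pos (by omega)]
      · rw [Fin.contractNth_apply_of_gt _ _ _ _ (by simpa using h), if_neg (by omega)]
    · intro k _ hk
      have : (k : ℕ) ≠ j := fun h => hk (Fin.ext h)
      rcases lt_or_gt_of_ne this with h | h
      · rw [Fin.contractNth_apply_of_lt _ _ _ _ (by simpa using h), if_pos (by omega)]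
      · rw [Fin.contractNth_apply_of_gt _ _ _ _ (by simpa using h), if_neg (by omega)]
  have h2 : ∏ k, χ k (Fin.contractNth (Fin.last m) (· * ·) g k) = T m := by
    refine prod_congr rfl fun k _ => ?_
    rw [Fin.contractNth_apply_of_lt _ _ _ _ (by simp), if_pos k.2]
  rw [Fin.sum_univ_castSucc, h0, h2]
  simp only [h1, Fin.val_castSucc, Fin.val_last]
  rw [Fin.sum_univ_eq_sum_range (fun j => (-1 : ℤ) ^ (j+1) * (T j + T (j+1))), ← add_assoc]
  exact contract_sum T

lemma ev_cob {G : Type} [Group G] {m : ℕ} (a : Fin (m+1) → G) (ha : ∀ i j, a i * a j = a j * a i)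
    (b : (Fin m → G) → ℤ) :
    ∑ σ : Equiv.Perm (Fin (m+1)), (Equiv.Perm.sign σ : ℤ) * (b (fun i => a (σ i.succ)) +
      ∑ j : Fin (m+1), (-1 : ℤ) ^ ((j : ℕ) + 1) * b (Fin.contractNth j (· * ·) (fun i => a (σ i)))) = 0 := by
  have h1 : ∀ j : Fin m, ∑ σ : Equiv.Perm (Fin (m+1)), (Equiv.Perm.sign σ : ℤ) *
      b (Fin.contractNth j.castSucc (· * ·) (fun i => a (σ i))) = 0 := by
    intro j
    have key : ∀ σ : Equiv.Perm (Fin (m+1)),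
        Fin.contractNth j.castSucc (· * ·) (fun i => a ((σ * Equiv.swap j.castSucc j.succ) i)) =
        Fin.contractNth j.castSucc (· * ·) (fun i => a (σ i)) := by
      intro σ
      funext k
      rcases lt_trichotomy (k : ℕ) j with h | h | h
      · rw [Fin.contractNth_apply_of_lt _ _ _ _ (by simpa using h),
          Fin.contractNth_apply_of_lt _ _ _ _ (by simpa using h), Equiv.Perm.mul_apply,
          Equiv.swap_apply_of_ne_of_ne]
        · intro e; have := congrArg Fin.val e; simp at this; omega
        · intro e; have := congrArg Fin.val e; simp at this; omega
      · have hk : k = j := Fin.ext h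
        subst hk
        rw [Fin.contractNth_apply_of_eq _ _ _ _ (by simp), Fin.contractNth_apply_of_eq _ _ _ _ (by simp),
          Equiv.Perm.mul_apply, Equiv.Perm.mul_apply, Equiv.swap_apply_left, Equiv.swap_apply_right, ha]
      · rw [Fin.contractNth_apply_of_gt _ _ _ _ (by simpa using h),
          Fin.contractNth_apply_of_gt _ _ _ _ (by simpa using h), Equiv.Perm.mul_apply,
          Equiv.swap_apply_of_ne_of_ne]
        · intro e; have := congrArg Fin.val e; simp at this; omega
        · intro e; have := congrArg Fin.val e; simp at this; omega
    have e := Equiv.sum_comp (Equiv.mulRight (Equiv.swap j.castSucc j.succ))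
      (fun σ : Equiv.Perm (Fin (m+1)) => (Equiv.Perm.sign σ : ℤ) *
        b (Fin.contractNth j.castSucc (· * ·) (fun i => a (σ i))))
    have hne : j.castSucc ≠ j.succ := by intro e; have := congrArg Fin.val e; simp at this
    simp only [Equiv.coe_mulRight, key, Equiv.Perm.sign_mul, Equiv.Perm.sign_swap hne, mul_neg, mul_one,
      Units.val_neg, neg_mul, sum_neg_distrib] at e
    linarith
  have h2 : ∑ σ : Equiv.Perm (Fin (m+1)), (Equiv.Perm.sign σ : ℤ) *
      b (Fin.contractNth (Fin.last m) (· * ·) (fun i => a (σ i))) =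
      (-1) ^ m * ∑ σ : Equiv.Perm (Fin (m+1)), (Equiv.Perm.sign σ : ℤ) * b (fun i => a (σ i.succ)) := by
    have key : ∀ σ : Equiv.Perm (Fin (m+1)),
        Fin.contractNth (Fin.last m) (· * ·) (fun i => a ((σ * finRotate (m+1)) i)) = (fun i => a (σ i.succ)) := by
      intro σ
      funext k
      rw [Fin.contractNth_apply_of_lt _ _ _ _ (by simp), Equiv.Perm.mul_apply, finRotate_apply]
      simp
    have e := Equiv.sum_comp (Equiv.mulRight (finRotate (m+1)))
      (fun σ : Equiv.Perm (Fin (m+1)) => (Equiv.Perm.sign σ : ℤ) *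
        b (Fin.contractNth (Fin.last m) (· * ·) (fun i => a (σ i))))
    rw [← e, mul_sum]
    refine sum_congr rfl fun σ _ => ?_
    simp only [Equiv.coe_mulRight, key, Equiv.Perm.sign_mul, sign_finRotate]
    push_cast
    ring
  simp only [mul_add, sum_add_distrib, mul_sum]
  rw [sum_comm]
  have h3 : ∀ j : Fin (m+1), ∑ σ : Equiv.Perm (Fin (m+1)), (Equiv.Perm.sign σ : ℤ) * ((-1) ^ ((j : ℕ) + 1) *
      b (Fin.contractNth j (· * ·) (fun i => a (σ i)))) = (-1) ^ ((j : ℕ) + 1) * ∑ σ : Equiv.Perm (Fin (m+1)),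
        (Equiv.Perm.sign σ : ℤ) * b (Fin.contractNth j (· * ·) (fun i => a (σ i))) := by
    intro j
    rw [mul_sum]
    refine sum_congr rfl fun σ _ => by ring
  simp only [h3]
  rw [Fin.sum_univ_castSucc]
  simp only [h1, h2, mul_zero, sum_const_zero, zero_add, Fin.val_last]
  have : ((-1 : ℤ)) ^ (m+1) * (-1) ^ m = -1 := by
    rw [← pow_add]; exact Odd.neg_one_pow ⟨m, by ring⟩
  rw [← mul_assoc, this]
  ring

lemma ev_one {G : Type} {m : ℕ} (a : Fin m → G) (χ : Fin m → G → ℤ)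
    (h : ∀ k l, χ k (a l) = if k = l then 1 else 0) :
    ∑ σ : Equiv.Perm (Fin m), (Equiv.Perm.sign σ : ℤ) * ∏ k, χ k (a (σ k)) = 1 := by
  have := Matrix.det_one (n := Fin m) (R := ℤ)
  rw [Matrix.det_apply] at this
  rw [← this]
  refine sum_congr rfl fun σ _ => ?_
  rw [Units.smul_def, smul_eq_mul]
  congr 1
  refine prod_congr rfl fun k _ => ?_
  rw [h, Matrix.one_apply]
  simp only [eq_comm]

theorem lower_gen {G : Type} [Group G] {m : ℕ} (a : Fin (m+1) → G) (χ : Fin (m+1) → G → ℤ)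
    (ha : ∀ i j, a i * a j = a j * a i) (hχ : ∀ k g h, χ k (g * h) = χ k g + χ k h)
    (h : ∀ k l, χ k (a l) = if k = l then 1 else 0) :
    Nontrivial (groupCohomology (Rep.trivial ℤ G ℤ) (m+1)) := by
  by_contra hc
  rw [not_nontrivial_iff_subsingleton] at hc
  have hz : IsZero (groupCohomology (Rep.trivial ℤ G ℤ) (m+1)) := ModuleCat.isZero_of_subsingleton _
  have hz' : IsZero ((groupCohomology.inhomogeneousCochains (Rep.trivial ℤ G ℤ)).homology (m+1)) := hz
  rw [← HomologicalComplex.exactAt_iff_isZero_homology,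
    HomologicalComplex.exactAt_iff' _ m (m+1) (m+2) (by simp) (by simp),
    ShortComplex.moduleCat_exact_iff] at hz'
  have hd : (inhomogeneousCochains.d (Rep.trivial ℤ G ℤ) (m+1)).hom (fun g => ∏ k, χ k (g k)) = 0 := by
    funext g
    rw [inhomogeneousCochains.d_hom_apply]
    exact cocyc χ hχ g
  obtain ⟨b, hb⟩ := hz' (fun g => ∏ k, χ k (g k)) (by
    have := groupCohomology.inhomogeneousCochains.d_def (Rep.trivial ℤ G ℤ) (m+1)
    exact (congrArg (fun f => (ModuleCat.Hom.hom f) (fun g => ∏ k, χ k (g k))) this).trans hd)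
  have hb' : (inhomogeneousCochains.d (Rep.trivial ℤ G ℤ) m).hom b = (fun g => ∏ k, χ k (g k)) := by
    have := groupCohomology.inhomogeneousCochains.d_def (Rep.trivial ℤ G ℤ) m
    simpa [this] using! hb
  have e1 := ev_cob a ha b
  have : ∑ σ : Equiv.Perm (Fin (m+1)), (Equiv.Perm.sign σ : ℤ) * ∏ k, χ k (a (σ k)) = 0 := by
    rw [← e1]
    refine sum_congr rfl fun σ _ => ?_
    congr 1
    have := congrFun hb' (fun i => a (σ i))
    exact this.symm.trans (inhomogeneousCochains.d_hom_apply (Rep.trivial ℤ G ℤ) m b _)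
  have e3 := ev_one a χ h
  rw [this] at e3
  exact zero_ne_one e3
end P8a

section P8b
set_option linter.unusedSectionVars false
open Finset FreeGroup

lemma sP_Kn (m : ℕ) (u : Fin (m+2) → ℤ) : sP (Fin.last (m+1)) u ∈ Kn (m+2) := by
  have hl : projHom (m+2) (of (Fin.last (m+1))) = 1 := by
    simp [projHom]
  have h : desc (m+2) (sP (Fin.last (m+1)) u).1 = MonoidHom.id _ := by
    apply FreeGroup.ext_hom
    intro b
    have h1 : castHom (m+2) (of b) = of (Fin.castLE (Nat.sub_le (m+2) 1) b) := by simp [castHom]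
    have h2 : projHom (m+2) (of (Fin.castLE (Nat.sub_le (m+2) 1) b)) = of b := by
      rw [projHom, FreeGroup.lift_apply_of, dif_pos (show ((Fin.castLE (Nat.sub_le (m+2) 1) b : Fin (m+2)) : ℕ) < m+2 - 1 from b.isLt)]
      rfl
    change projHom (m+2) ((sP (Fin.last (m+1)) u).1 (castHom (m+2) (of b))) = of b
    rw [h1, sP_apply, sH_of, _root_.map_mul, _root_.map_mul, _root_.map_inv, _root_.map_zpow, hl, h2]
    simp
  rw [Kn, MonoidHom.mem_ker]
  refine Subtype.ext (MulEquiv.ext fun x => ?_)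
  exact DFunLike.congr_fun h x

theorem lower (m : ℕ) : Nontrivial (groupCohomology (Rep.trivial ℤ (Kn (m+2)) ℤ) (m+1)) := by
  refine lower_gen (G := Kn (m+2))
    (fun k => ⟨sP (Fin.last (m+1)) (Pi.single k.castSucc 1), sP_Kn m _⟩)
    (fun k g => chi g.1 (Fin.last (m+1)) k.castSucc) ?_ ?_ ?_
  · intro i j
    apply Subtype.ext
    change sP _ _ * sP _ _ = sP _ _ * sP _ _
    rw [← sP_add, ← sP_add, add_comm (Pi.single i.castSucc (1 : ℤ) : Fin (m+2) → ℤ)]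
  · intro k g h
    change chi (g.1 * h.1) _ _ = _
    rw [chi_mul]; rfl
  · intro k l
    change chi (sP (Fin.last (m+1)) (Pi.single l.castSucc 1)) (Fin.last (m+1)) k.castSucc = _
    rw [chi_sP _ _ (Pi.single_eq_of_ne (Fin.castSucc_lt_last l).ne' _), if_pos rfl, Pi.single_apply]
    simp [Fin.castSucc_inj]
end P8b

/-- For every `n ≥ 2`, the group `K_n` has cohomological dimension `n - 1`:
`H^i(K_n; M)` vanishes for every `ℤ`-linear representation `M` and every `i ≥ n`, and
there is a `ℤ`-linear representation `M` with `H^{n-1}(K_n; M) ≠ 0`. -/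
theorem statement0 (n : ℕ) (hn : 2 ≤ n) :
    (∀ (M : Rep ℤ ↥(Kn n)) (i : ℕ), n ≤ i → Subsingleton (groupCohomology M i)) ∧
      ∃ M : Rep ℤ ↥(Kn n), Nontrivial (groupCohomology M (n - 1)) := by
  refine ⟨fun M i hi => upper (by omega) M i hi, ?_⟩
  obtain ⟨m, rfl⟩ : ∃ m, n = m + 2 := ⟨n - 2, by omega⟩
  exact ⟨_, lower m⟩
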